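/- arXiv:1205.6770 — 3 statements merged into one kernel-verified Lean document; each statement's English description precedes it below -/
import Mathlib

section
/- Let (R,m) be a complete Noetherian local ring of dimension ≥ 2 with canonical module K_R, let S = Hom_R(K_R,K_R), and let φ: R → S be the natural map φ(a)(x) = ax. If Ass R ⊆ Assh R ∪ {m}, then ker φ has finite length and H¹_m(R) ≅ H⁰_m(coker φ); in particular H¹_m(R) has finite length. -/
open IsLocalRing Filter Function CategoryTheory

universe u

section Defs

variable (R : Type u) [CommRing R]

/-- The length of a module, as the Krull dimension of its lattice of submodules. -/
noncomputable def mlen (M : Type u) [AddCommGroup M] [Module R M] : WithBot ℕ∞ :=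
  Order.krullDim (Submodule R M)

/-- The (Krull) dimension of a module. -/
noncomputable def mdim (M : Type u) [AddCommGroup M] [Module R M] : WithBot ℕ∞ :=
  ringKrullDim (R ⧸ Module.annihilator R M)

/-- The depth of `M` with respect to an ideal `I`: the supremum of the lengths of
`M`-regular sequences consisting of elements of `I`. -/
noncomputable def idepth (I : Ideal R) (M : Type u) [AddCommGroup M] [Module R M] : ℕ∞ :=
  sSup {n : ℕ∞ | ∃ rs : List R, (rs.length : ℕ∞) = n ∧ (∀ r ∈ rs, r ∈ I) ∧
    RingTheory.Sequence.IsRegular M rs}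

/-- The depth of a module over a local ring. -/
noncomputable def mdepth [IsLocalRing R] (M : Type u) [AddCommGroup M] [Module R M] : ℕ∞ :=
  idepth R (maximalIdeal R) M

/-- A Cohen–Macaulay module over a local ring: depth = dimension. -/
def IsCMMod [IsLocalRing R] (M : Type u) [AddCommGroup M] [Module R M] : Prop :=
  (mdepth R M : WithBot ℕ∞) = mdim R M

/-- A Cohen–Macaulay local ring. -/
def IsCMRing [IsLocalRing R] : Prop := (mdepth R R : WithBot ℕ∞) = ringKrullDim R

/-- A maximal Cohen–Macaulay module: finite with depth = dim R. -/
def IsMCMMod [IsLocalRing R] (M : Type u) [AddCommGroup M] [Module R M] : Prop :=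
  Module.Finite R M ∧ (mdepth R M : WithBot ℕ∞) = ringKrullDim R

/-- `H⁰_m(M)`: the submodule of elements killed by a power of the maximal ideal. -/
def H0 [IsLocalRing R] (M : Type u) [AddCommGroup M] [Module R M] : Submodule R M :=
  ⨆ n : ℕ, Submodule.torsionBySet R M ((maximalIdeal R ^ n : Ideal R) : Set R)

/-- The `i`-th local cohomology of `M` with support in the maximal ideal. -/
noncomputable def lcoh [IsLocalRing R] (i : ℕ) (M : Type u) [AddCommGroup M] [Module R M] :
    ModuleCat.{u} R :=
  (localCohomology (maximalIdeal R) i).obj (ModuleCat.of R M)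

/-- The value at `n` of the Hilbert–Samuel polynomial in dimension `d` with coefficients
`e 0, …, e d`:  `∑ (-1)^i eᵢ C(n+d-1-i, d-i)`. -/
def hsPoly (d : ℕ) (e : ℕ → ℤ) (n : ℕ) : ℤ :=
  ∑ i ∈ Finset.range (d + 1), (-1 : ℤ) ^ i * e i * ((n + d - 1 - i).choose (d - i) : ℤ)

/-- `I` is a parameter ideal for `M` of dimension `d`: generated by `d` elements with
`M/IM` of finite length. -/
def IsParameterIdeal [IsLocalRing R] (I : Ideal R) (d : ℕ) (M : Type u) [AddCommGroup M]
    [Module R M] : Prop :=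
  (∃ a : Fin d → R, I = Ideal.span (Set.range a)) ∧ mlen R (M ⧸ (I • (⊤ : Submodule R M))) < ⊤

/-- `ℓ` records the Hilbert–Samuel function of `I` on `M`:  `ℓ n = λ(M/IⁿM)`. -/
def IsHilbSeq (I : Ideal R) (M : Type u) [AddCommGroup M] [Module R M] (ℓ : ℕ → ℕ) : Prop :=
  ∀ n : ℕ, mlen R (M ⧸ (I ^ n • (⊤ : Submodule R M))) = ((ℓ n : ℕ∞) : WithBot ℕ∞)

/-- `e 0, …, e d` are the Hilbert coefficients of `I` on `M`: the Hilbert–Samuel function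
eventually agrees with the Hilbert–Samuel polynomial with these coefficients. -/
def HasHilbCoeffs (I : Ideal R) (M : Type u) [AddCommGroup M] [Module R M] (d : ℕ)
    (e : ℕ → ℤ) : Prop :=
  ∃ ℓ : ℕ → ℕ, IsHilbSeq R I M ℓ ∧ ∀ᶠ n in atTop, (ℓ n : ℤ) = hsPoly d e n

/-- A local ring is unmixed if every associated prime of its completion has
dimension equal to `dim R`. -/
def Unmixed [IsLocalRing R] : Prop :=
  ∀ p ∈ associatedPrimes (AdicCompletion (maximalIdeal R) R)
      (AdicCompletion (maximalIdeal R) R),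
    ringKrullDim ((AdicCompletion (maximalIdeal R) R) ⧸ p) = ringKrullDim R

/-- The height of an ideal: the infimum of the heights of the primes containing it. -/
noncomputable def idealHeight (I : Ideal R) : ℕ∞ :=
  ⨅ p ∈ {p : PrimeSpectrum R | I ≤ p.asIdeal}, Order.height p

/-- A regular local ring: the maximal ideal is generated by `dim R` elements. -/
def IsRegularLocal [IsLocalRing R] : Prop :=
  ∃ s : Finset R, Ideal.span (s : Set R) = maximalIdeal R ∧
    ((s.card : ℕ∞) : WithBot ℕ∞) = ringKrullDim R

end Defs
/-- `E` is an injective hull of the residue field of `R`: an injective module containing the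
residue field as an essential submodule. -/
def IsResidueFieldInjHull (R E : Type u) [CommRing R] [IsLocalRing R] [AddCommGroup E]
    [Module R E] : Prop :=
  Module.Injective R E ∧ ∃ f : IsLocalRing.ResidueField R →ₗ[R] E, Function.Injective f ∧
    ∀ N : Submodule R E, N ≠ ⊥ → N ⊓ LinearMap.range f ≠ ⊥

/-- `K` is a canonical module of the `d`-dimensional local ring `R`: the Matlis dual of the
top local cohomology `H^d_m(R)`. -/
def IsCanonicalModule (R : Type u) [CommRing R] [IsLocalRing R] (d : ℕ) (K : Type u)
    [AddCommGroup K] [Module R K] : Prop :=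
  Module.Finite R K ∧ ∃ (E : Type u) (_ : AddCommGroup E) (_ : Module R E),
    IsResidueFieldInjHull R E ∧ Nonempty (K ≃ₗ[R] ((lcoh R d R) →ₗ[R] E))

/-!
Write `K^i(M)` for the Matlis dual of `H^i_m(M)`. Over a complete local ring `K^i(M)` is finitely
generated of dimension at most `i` whenever `M` is finitely generated, and `K = K^d(R)`.

By prime avoidance `H^i_m(R/p) ≠ 0` for `i = dim R/p`, so `p` is associated to `K^i(R/p)`. The
kernel of `φ` is the annihilator of `H^d_m(R)`. If it contained a copy `Ra` of `R/p` with
`dim R/p = d`, then `Ra → R` would induce zero on `H^d_m`, so `K^d(R/p)` would embed into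
`K^{d-1}(R/Ra)`, which has too small a dimension. Hence `ker φ` has no associated prime other
than `m`, and it is `m`-power torsion.

As `K` admits a weakly regular sequence of length two, so does `S = Hom_R(K, K)`, and
`H^0_m(S) = H^1_m(S) = 0`. The long exact sequence of `0 → R/ker φ → S → coker φ → 0` then gives
`H^1_m(R) ≅ H^1_m(R/ker φ) ≅ H^0_m(coker φ)`.

To have the long exact sequences at hand, local cohomology is modelled as the direct limit of the
modules `Ext^i(R/J^n, M)`.
-/

section ExtComparison

open Opposite

universe v w

variable {R : Type*} [CommRing R] {C : Type u} [Category.{v} C] [Abelian C] [Linear R C]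

/-- The cochain map `Hom(P, Y) ⟶ Hom(P', Y)` given by precomposition with a chain map
`P' ⟶ P`. -/
noncomputable def linearYonedaMap {P P' : ChainComplex C ℕ} (φ : P' ⟶ P) (Y : C) :
    P.linearYonedaObj R Y ⟶ P'.linearYonedaObj R Y :=
  (HomologicalComplex.unopFunctor (ModuleCat.{v} R) _).map
    ((((linearYoneda R C).obj Y).rightOp.mapHomologicalComplex _).map φ).op

theorem ext_map_comp_isoExt_hom [EnoughProjectives C] {X X' Y : C} (g : X' ⟶ X)
    (P : ProjectiveResolution X) (P' : ProjectiveResolution X') (φ : P'.Hom P g) (n : ℕ) :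
    ((Ext R C n).map g.op).app Y ≫ (P'.isoExt n Y).hom =
      (P.isoExt n Y).hom ≫ HomologicalComplex.homologyMap (linearYonedaMap φ.hom Y) n := by
  have hderived := congrArg Quiver.Hom.unop
    (ProjectiveResolution.isoLeftDerivedObj_inv_naturality g P' P φ.hom
      (φ.hom_f_zero_comp_π_f_zero.trans (by simp)) ((linearYoneda R C).obj Y).rightOp n)
  have hop := congrArg Quiver.Hom.unop
    (HomologicalComplex.homologyOp_hom_naturality (linearYonedaMap (R := R) φ.hom Y) n)
  exact ((CommSq.mk hderived.symm).horiz_comp (CommSq.horiz_inv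
    (f := ((P.complex.linearYonedaObj R Y).homologyOp n).unop)
    (i := ((P'.complex.linearYonedaObj R Y).homologyOp n).unop) (CommSq.mk hop))).w.symm

variable {X Y : C} (P : ProjectiveResolution X)

/-- The morphism `P_n ⟶ Y` underlying a cocycle of `Hom(P, Y)`. -/
noncomputable def cocycleHom (n : ℕ) (w : (P.complex.linearYonedaObj R Y).cycles n) :
    P.complex.X n ⟶ Y :=
  ((P.complex.linearYonedaObj R Y).iCycles n).hom w

theorem d_comp_cocycleHom (n : ℕ) (w : (P.complex.linearYonedaObj R Y).cycles n) :
    P.complex.d (n + 1) n ≫ cocycleHom P n w = 0 :=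
  congrArg (fun f => f.hom w) ((P.complex.linearYonedaObj R Y).iCycles_d n (n + 1))

theorem exists_cocycleHom_eq (n : ℕ) (f : P.complex.X n ⟶ Y) (hf : P.complex.d (n + 1) n ≫ f = 0) :
    ∃ w : (P.complex.linearYonedaObj R Y).cycles n, cocycleHom P n w = f :=
  (ShortComplex.moduleCat_exact_iff _).1
    (ShortComplex.exact_of_f_is_kernel
      (ShortComplex.mk _ _ ((P.complex.linearYonedaObj R Y).iCycles_d n (n + 1)))
      ((P.complex.linearYonedaObj R Y).cyclesIsKernel n (n + 1) (by simp))) f hf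

theorem homologyπ_surjective (n : ℕ) :
    Surjective ((P.complex.linearYonedaObj R Y).homologyπ n).hom :=
  (ModuleCat.epi_iff_surjective _).1 inferInstance

variable [HasExt.{w} C]

/-- The map sending a cocycle of `Hom(P, Y)` to the `Ext`-class it represents. -/
noncomputable def cyclesToExt (n : ℕ) :
    (P.complex.linearYonedaObj R Y).cycles n →ₗ[R] Abelian.Ext X Y n where
  toFun w := P.extMk (cocycleHom P n w) (n + 1) rfl (d_comp_cocycleHom P n w)
  map_add' w w' := by
    rw [P.add_extMk]
    congr 1
    exact map_add ((P.complex.linearYonedaObj R Y).iCycles n).hom w w'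
  map_smul' r w := by
    rw [RingHom.id_apply, Abelian.Ext.smul_eq_comp_mk₀, P.extMk_comp_mk₀]
    congr 1
    rw [Linear.comp_smul, Category.comp_id]
    exact map_smul ((P.complex.linearYonedaObj R Y).iCycles n).hom r w

theorem cyclesToExt_surjective (n : ℕ) : Surjective (cyclesToExt (R := R) (Y := Y) P n) := by
  intro x
  obtain ⟨f, hf, rfl⟩ := P.extMk_surjective x (n + 1) rfl
  obtain ⟨w, rfl⟩ := exists_cocycleHom_eq (R := R) P n f hf
  exact ⟨w, rfl⟩

theorem cyclesToExt_eq_zero_iff (n : ℕ) (w : (P.complex.linearYonedaObj R Y).cycles (n + 1)) :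
    cyclesToExt P (n + 1) w = 0 ↔
      ((P.complex.linearYonedaObj R Y).homologyπ (n + 1)).hom w = 0 := by
  let D := P.complex.linearYonedaObj R Y
  have hexact : (ShortComplex.mk _ _ (D.toCycles_comp_homologyπ n (n + 1))).Exact :=
    ShortComplex.exact_of_g_is_cokernel _ (D.homologyIsCokernel n (n + 1) (by simp))
  have hinj : Injective (D.iCycles (n + 1)).hom := (ModuleCat.mono_iff_injective _).1 inferInstance
  have hd (g) : (D.iCycles (n + 1)).hom ((D.toCycles n (n + 1)).hom g) = (D.d n (n + 1)).hom g :=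
    congrArg (fun h => h.hom g) (D.toCycles_i n (n + 1))
  refine (P.extMk_eq_zero_iff (cocycleHom P (n + 1) w) (n + 1 + 1) rfl
    (d_comp_cocycleHom P (n + 1) w) n rfl).trans ⟨fun ⟨g, hg⟩ => ?_, fun hw => ?_⟩
  · obtain rfl : w = (D.toCycles n (n + 1)).hom g := hinj ((hd g).trans hg).symm
    exact congrArg (fun h => h.hom g) (D.toCycles_comp_homologyπ n (n + 1))
  · obtain ⟨g, rfl⟩ := (ShortComplex.moduleCat_exact_iff _).1 hexact w hw
    exact ⟨g, (hd g).symm⟩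

variable (R Y) in
/-- The cohomology of `Hom(P, Y)` is `Ext X Y`. -/
noncomputable def homologyEquivExt (n : ℕ) :
    (P.complex.linearYonedaObj R Y).homology (n + 1) ≃ₗ[R] Abelian.Ext X Y (n + 1) :=
  (LinearMap.quotKerEquivOfSurjective _ (homologyπ_surjective P (n + 1))).symm ≪≫ₗ
    Submodule.quotEquivOfEq _ (cyclesToExt P (n + 1)).ker
      (Submodule.ext fun w => (cyclesToExt_eq_zero_iff P n w).symm) ≪≫ₗ
    LinearMap.quotKerEquivOfSurjective _ (cyclesToExt_surjective P (n + 1))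

theorem homologyEquivExt_homologyπ (n : ℕ)
    (w : (P.complex.linearYonedaObj R Y).cycles (n + 1)) :
    homologyEquivExt R Y P n (((P.complex.linearYonedaObj R Y).homologyπ (n + 1)).hom w) =
      cyclesToExt P (n + 1) w := by
  have hmk : (LinearMap.quotKerEquivOfSurjective _ (homologyπ_surjective P (n + 1))).symm
      (((P.complex.linearYonedaObj R Y).homologyπ (n + 1)).hom w) = Submodule.Quotient.mk w :=
    (LinearEquiv.symm_apply_eq _).2 rfl
  exact congrArg (fun z => LinearMap.quotKerEquivOfSurjective _ (cyclesToExt_surjective P (n + 1))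
    (Submodule.quotEquivOfEq _ _
      (Submodule.ext fun w => (cyclesToExt_eq_zero_iff P n w).symm) z)) hmk

theorem homologyEquivExt_naturality {X' : C} (g : X' ⟶ X) (P' : ProjectiveResolution X')
    (φ : P'.Hom P g) (n : ℕ) (x : (P.complex.linearYonedaObj R Y).homology (n + 1)) :
    homologyEquivExt R Y P' n
        ((HomologicalComplex.homologyMap (linearYonedaMap φ.hom Y) (n + 1)).hom x) =
      (Abelian.Ext.mk₀ g).comp (homologyEquivExt R Y P n x) (zero_add _) := by
  obtain ⟨w, rfl⟩ := homologyπ_surjective P (n + 1) x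
  have hcocycle : cocycleHom P' (n + 1)
      ((HomologicalComplex.cyclesMap (linearYonedaMap φ.hom Y) (n + 1)).hom w) =
      φ.hom.f (n + 1) ≫ cocycleHom P (n + 1) w :=
    congrArg (fun h => h.hom w)
      (HomologicalComplex.cyclesMap_i (linearYonedaMap (R := R) φ.hom Y) (n + 1))
  have hπ : (HomologicalComplex.homologyMap (linearYonedaMap φ.hom Y) (n + 1)).hom
      (((P.complex.linearYonedaObj R Y).homologyπ (n + 1)).hom w) =
      ((P'.complex.linearYonedaObj R Y).homologyπ (n + 1)).hom
        ((HomologicalComplex.cyclesMap (linearYonedaMap φ.hom Y) (n + 1)).hom w) :=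
    congrArg (fun h => h.hom w)
      (HomologicalComplex.homologyπ_naturality (linearYonedaMap (R := R) φ.hom Y) (n + 1))
  rw [hπ, homologyEquivExt_homologyπ, homologyEquivExt_homologyπ]
  refine Eq.trans ?_ (ProjectiveResolution.mk₀_comp_extMk _ _ rfl
    (d_comp_cocycleHom P (n + 1) w) φ).symm
  simp only [cyclesToExt, LinearMap.coe_mk, AddHom.coe_mk, hcocycle]

variable [EnoughProjectives C]

variable (R) in
/-- The comparison between `Ext` defined by projective resolutions, from which
`localCohomology` is built, and `Ext` defined by the derived category, which carries the long exact
sequences. -/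
noncomputable def extEquivAbelianExt (X Y : C) (n : ℕ) :
    ((Ext R C (n + 1)).obj (op X)).obj Y ≃ₗ[R] Abelian.Ext X Y (n + 1) :=
  ((ProjectiveResolution.of X).isoExt (n + 1) Y).toLinearEquiv ≪≫ₗ homologyEquivExt R Y _ n

theorem extEquivAbelianExt_naturality {X X' Y : C} (g : X' ⟶ X) (n : ℕ)
    (x : ((Ext R C (n + 1)).obj (op X)).obj Y) :
    extEquivAbelianExt R X' Y n ((((Ext R C (n + 1)).map g.op).app Y).hom x) =
      (Abelian.Ext.mk₀ g).comp (extEquivAbelianExt R X Y n x) (zero_add _) := by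
  let P := ProjectiveResolution.of X
  let P' := ProjectiveResolution.of X'
  let φ : P'.Hom P g := ⟨ProjectiveResolution.lift g P' P,
    (ProjectiveResolution.lift_commutes_zero g P' P).trans (by simp)⟩
  have hiso := congrArg (fun h => h.hom x)
    (ext_map_comp_isoExt_hom (R := R) (Y := Y) g P P' φ (n + 1))
  exact (congrArg (homologyEquivExt R Y P' n) hiso).trans
    (homologyEquivExt_naturality P g P' φ n ((P.isoExt (n + 1) Y).hom.hom x))

end ExtComparison

section DirectLimit

theorem directLimit_map_exact {R ι : Type*} [Ring R] [Preorder ι] [DecidableEq ι]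
    [IsDirectedOrder ι] [Nonempty ι] {A B C : ι → Type*}
    [∀ i, AddCommGroup (A i)] [∀ i, Module R (A i)]
    [∀ i, AddCommGroup (B i)] [∀ i, Module R (B i)]
    [∀ i, AddCommGroup (C i)] [∀ i, Module R (C i)]
    {a : ∀ i j, i ≤ j → A i →ₗ[R] A j} {b : ∀ i j, i ≤ j → B i →ₗ[R] B j}
    {c : ∀ i j, i ≤ j → C i →ₗ[R] C j} [DirectedSystem C fun i j h => c i j h]
    (f : ∀ i, A i →ₗ[R] B i) (hf : ∀ i j h, f j ∘ₗ a i j h = b i j h ∘ₗ f i)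
    (g : ∀ i, B i →ₗ[R] C i) (hg : ∀ i j h, g j ∘ₗ b i j h = c i j h ∘ₗ g i)
    (hexact : ∀ i, Exact (f i) (g i)) :
    Exact (Module.DirectLimit.map f hf) (Module.DirectLimit.map g hg) := by
  intro z
  constructor
  · obtain ⟨i, y, rfl⟩ := Module.DirectLimit.exists_of z
    intro hz
    rw [Module.DirectLimit.map_apply_of] at hz
    obtain ⟨j, hij, hj⟩ := Module.DirectLimit.of.zero_exact hz
    rw [← LinearMap.comp_apply, ← hg, LinearMap.comp_apply] at hj
    obtain ⟨x, hx⟩ := (hexact j _).1 hj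
    refine ⟨Module.DirectLimit.of R ι A a j x, ?_⟩
    rw [Module.DirectLimit.map_apply_of, hx, Module.DirectLimit.of_f]
  · rintro ⟨w, rfl⟩
    obtain ⟨i, x, rfl⟩ := Module.DirectLimit.exists_of w
    rw [Module.DirectLimit.map_apply_of, Module.DirectLimit.map_apply_of,
      (hexact i).apply_apply_eq_zero, map_zero]

end DirectLimit

section Model

variable {R : Type u} [CommRing R]

/-- The object `R / Jⁿ` of the diagram of which local cohomology is the colimit. -/
abbrev powQuotient (J : Ideal R) (n : ℕ) : ModuleCat.{u} R := ModuleCat.of R (R ⧸ J ^ n)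

/-- The projection `R / Jᵐ ⟶ R / Jⁿ`, taken from the diagram defining `localCohomology` so that
the comparison with it holds definitionally. -/
noncomputable def powQuotientMap (J : Ideal R) {n m : ℕ} (h : n ≤ m) :
    powQuotient J m ⟶ powQuotient J n :=
  (localCohomology.ringModIdeals (localCohomology.idealPowersDiagram J)).map (homOfLE h).op

theorem powQuotientMap_refl (J : Ideal R) (n : ℕ) : powQuotientMap J (le_refl n) = 𝟙 _ :=
  (localCohomology.ringModIdeals (localCohomology.idealPowersDiagram J)).map_id _

theorem powQuotientMap_comp (J : Ideal R) {n m k : ℕ} (h : n ≤ m) (h' : m ≤ k) :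
    powQuotientMap J h' ≫ powQuotientMap J h = powQuotientMap J (h.trans h') :=
  ((localCohomology.ringModIdeals (localCohomology.idealPowersDiagram J)).map_comp
    (homOfLE h').op (homOfLE h).op).symm

/-- The transition maps `Ext^i(R/Jⁿ, M) → Ext^i(R/Jᵐ, M)`. -/
noncomputable def extTransition (J : Ideal R) (i : ℕ) (M : ModuleCat.{u} R) (n m : ℕ) (h : n ≤ m) :
    Abelian.Ext (powQuotient J n) M i →ₗ[R] Abelian.Ext (powQuotient J m) M i :=
  Abelian.Ext.precompOfLinear (Abelian.Ext.mk₀ (powQuotientMap J h)) R M (zero_add i)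

theorem extTransition_apply (J : Ideal R) (i : ℕ) (M : ModuleCat.{u} R) (n m : ℕ) (h : n ≤ m)
    (x : Abelian.Ext (powQuotient J n) M i) :
    extTransition J i M n m h x =
      (Abelian.Ext.mk₀ (powQuotientMap J h)).comp x (zero_add i) := rfl

instance extTransition_directedSystem (J : Ideal R) (i : ℕ) (M : ModuleCat.{u} R) :
    DirectedSystem (fun n => Abelian.Ext (powQuotient J n) M i)
      (fun n m h => extTransition J i M n m h) where
  map_self n x := by rw [extTransition_apply, powQuotientMap_refl, Abelian.Ext.mk₀_id_comp]
  map_map n m k h h' x := by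
    rw [extTransition_apply, extTransition_apply, extTransition_apply,
      ← powQuotientMap_comp J h h', ← Abelian.Ext.mk₀_comp_mk₀]
    exact (Abelian.Ext.comp_assoc _ _ _ _ _ (by omega)).symm

/-- The local cohomology `H^i_J(M)`, modelled as the direct limit of `Ext^i(R/Jⁿ, M)`. Unlike
`localCohomology`, this model inherits long exact sequences from `Abelian.Ext`. -/
def LocalCohom (J : Ideal R) (i : ℕ) (M : Type u) [AddCommGroup M] [Module R M] : Type u :=
  Module.DirectLimit (fun n => Abelian.Ext (powQuotient J n) (ModuleCat.of R M) i)
    (extTransition J i (ModuleCat.of R M))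

end Model

namespace LocalCohom

variable {R : Type u} [CommRing R] (J : Ideal R)
variable {M N P : Type u} [AddCommGroup M] [Module R M] [AddCommGroup N] [Module R N]
  [AddCommGroup P] [Module R P]

noncomputable instance (i : ℕ) : AddCommGroup (LocalCohom J i M) :=
  inferInstanceAs (AddCommGroup (Module.DirectLimit _ _))

noncomputable instance (i : ℕ) : Module R (LocalCohom J i M) :=
  inferInstanceAs (Module R (Module.DirectLimit _ _))

variable (M) in
/-- The canonical map `Ext^i(R/Jⁿ, M) → H^i_J(M)`. -/
noncomputable def of (i n : ℕ) :
    Abelian.Ext (powQuotient J n) (ModuleCat.of R M) i →ₗ[R] LocalCohom J i M :=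
  Module.DirectLimit.of R ℕ _ (extTransition J i (ModuleCat.of R M)) n

theorem of_extTransition {i n m : ℕ} (h : n ≤ m) (x) :
    of J M i m (extTransition J i _ n m h x) = of J M i n x :=
  Module.DirectLimit.of_f

theorem exists_of {i : ℕ} (z : LocalCohom J i M) : ∃ n x, of J M i n x = z :=
  Module.DirectLimit.exists_of z

/-- The map on local cohomology given by composition with an `Ext`-class. -/
noncomputable def postcomp {i j k : ℕ}
    (e : Abelian.Ext (ModuleCat.of R M) (ModuleCat.of R N) k) (h : i + k = j) :
    LocalCohom J i M →ₗ[R] LocalCohom J j N :=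
  Module.DirectLimit.map
    (fun n => Abelian.Ext.postcompOfLinear e R (powQuotient J n) h) fun n m hnm => by
      ext x
      exact Abelian.Ext.comp_assoc (Abelian.Ext.mk₀ (powQuotientMap J hnm)) x e (zero_add i) h
        (by omega)

theorem postcomp_of {i j k : ℕ} (e : Abelian.Ext (ModuleCat.of R M) (ModuleCat.of R N) k)
    (h : i + k = j) (n : ℕ) (x) :
    postcomp J e h (of J M i n x) = of J N j n (x.comp e h) :=
  Module.DirectLimit.map_apply_of _ _ _

theorem postcomp_exact {i j k a b : ℕ} (e : Abelian.Ext (ModuleCat.of R M) (ModuleCat.of R N) a)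
    (e' : Abelian.Ext (ModuleCat.of R N) (ModuleCat.of R P) b) (h : i + a = j) (h' : j + b = k)
    (hexact : ∀ X, Exact (e.postcomp X h) (e'.postcomp X h')) :
    Exact (postcomp J e h) (postcomp J e' h') :=
  directLimit_map_exact _ _ _ _ fun _ => hexact _

/-- The map `H^i_J(M) → H^i_J(N)` induced by a linear map `M → N`. -/
noncomputable def map (i : ℕ) (f : M →ₗ[R] N) : LocalCohom J i M →ₗ[R] LocalCohom J i N :=
  postcomp J (Abelian.Ext.mk₀ (ModuleCat.ofHom f)) (add_zero i)

theorem map_of (i : ℕ) (f : M →ₗ[R] N) (n : ℕ) (x) :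
    map J i f (of J M i n x) =
      of J N i n (x.comp (Abelian.Ext.mk₀ (ModuleCat.ofHom f)) (add_zero i)) :=
  postcomp_of _ _ _ _ _

theorem map_comp (i : ℕ) (g : N →ₗ[R] P) (f : M →ₗ[R] N) :
    map J i (g ∘ₗ f) = map J i g ∘ₗ map J i f := by
  ext z
  obtain ⟨n, x, rfl⟩ := exists_of J z
  rw [LinearMap.comp_apply, map_of, map_of, map_of, ModuleCat.ofHom_comp,
    ← Abelian.Ext.mk₀_comp_mk₀, Abelian.Ext.comp_assoc_of_third_deg_zero]

theorem map_smul_id (i : ℕ) (r : R) :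
    map J i (r • LinearMap.id : M →ₗ[R] M) = r • LinearMap.id := by
  ext z
  obtain ⟨n, x, rfl⟩ := exists_of J z
  rw [map_of, LinearMap.smul_apply, LinearMap.id_apply, ← map_smul,
    Abelian.Ext.smul_eq_comp_mk₀ x r]
  rfl

theorem map_id (i : ℕ) : map J i (LinearMap.id : M →ₗ[R] M) = LinearMap.id := by
  simpa only [one_smul] using map_smul_id (M := M) J i 1

theorem map_lsmul (i : ℕ) (r : R) :
    map J i (LinearMap.lsmul R M r) = LinearMap.lsmul R (LocalCohom J i M) r :=
  map_smul_id J i r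

/-- The isomorphism `H^i_J(M) ≃ H^i_J(N)` induced by an isomorphism `M ≃ N`. -/
noncomputable def mapEquiv (i : ℕ) (e : M ≃ₗ[R] N) : LocalCohom J i M ≃ₗ[R] LocalCohom J i N :=
  LinearEquiv.ofLinearMap (map J i e) (map J i e.symm)
    (by rw [← map_comp, LinearEquiv.comp_symm, map_id])
    (by rw [← map_comp, LinearEquiv.symm_comp, map_id])

section LongExactSequence

variable {f : M →ₗ[R] N} {g : N →ₗ[R] P}

theorem shortExact_ofHom (hf : Injective f) (hfg : Exact f g) (hg : Surjective g) :
    (ModuleCat.shortComplexOfCompEqZero f g hfg.linearMap_comp_eq_zero).ShortExact where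
  exact := ModuleCat.shortComplex_exact _ hfg
  mono_f := (ModuleCat.mono_iff_injective _).2 hf
  epi_g := (ModuleCat.epi_iff_surjective _).2 hg

/-- The connecting map `H^i_J(P) → H^{i+1}_J(M)` of a short exact sequence `M → N → P`. -/
noncomputable def connecting (hf : Injective f) (hfg : Exact f g) (hg : Surjective g) (i : ℕ) :
    LocalCohom J i P →ₗ[R] LocalCohom J (i + 1) M :=
  postcomp J (shortExact_ofHom hf hfg hg).extClass rfl

theorem map_exact (hf : Injective f) (hfg : Exact f g) (hg : Surjective g) (i : ℕ) :
    Exact (map J i f) (map J i g) :=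
  postcomp_exact J _ _ _ _ fun X => (ShortComplex.ab_exact_iff_function_exact _).1
    (Abelian.Ext.covariant_sequence_exact₂' X (shortExact_ofHom hf hfg hg) i)

variable (hf : Injective f) (hfg : Exact f g) (hg : Surjective g)

theorem map_connecting_exact (i : ℕ) : Exact (map J i g) (connecting J hf hfg hg i) :=
  postcomp_exact J _ _ _ _ fun X => (ShortComplex.ab_exact_iff_function_exact _).1
    (Abelian.Ext.covariant_sequence_exact₃' X (shortExact_ofHom hf hfg hg) i (i + 1) rfl)

theorem connecting_map_exact (i : ℕ) : Exact (connecting J hf hfg hg i) (map J (i + 1) f) :=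
  postcomp_exact J _ _ _ _ fun X => (ShortComplex.ab_exact_iff_function_exact _).1
    (Abelian.Ext.covariant_sequence_exact₁' X (shortExact_ofHom hf hfg hg) i (i + 1) rfl)

theorem connecting_injective (i : ℕ) [Subsingleton (LocalCohom J i N)] :
    Injective (connecting J hf hfg hg i) :=
  (LinearMap.injective_iff_eq_zero_of_exact (map_connecting_exact J hf hfg hg i)).2
    (Subsingleton.elim _ _)

theorem connecting_surjective (i : ℕ) [Subsingleton (LocalCohom J (i + 1) N)] :
    Surjective (connecting J hf hfg hg i) :=
  (LinearMap.surjective_iff_eq_zero_of_exact (connecting_map_exact J hf hfg hg i)).2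
    (Subsingleton.elim _ _)

include hf hfg hg

theorem map_left_surjective (i : ℕ) [Subsingleton (LocalCohom J i P)] :
    Surjective (map J i f) :=
  (LinearMap.surjective_iff_eq_zero_of_exact (map_exact J hf hfg hg i)).2 (Subsingleton.elim _ _)

theorem map_left_injective (i : ℕ) [Subsingleton (LocalCohom J i P)] :
    Injective (map J (i + 1) f) :=
  (LinearMap.injective_iff_eq_zero_of_exact (connecting_map_exact J hf hfg hg i)).2
    (Subsingleton.elim _ _)

theorem map_right_surjective (i : ℕ) [Subsingleton (LocalCohom J (i + 1) M)] :
    Surjective (map J i g) :=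
  (LinearMap.surjective_iff_eq_zero_of_exact (map_connecting_exact J hf hfg hg i)).2
    (Subsingleton.elim _ _)

theorem map_right_injective (i : ℕ) [Subsingleton (LocalCohom J i M)] :
    Injective (map J i g) :=
  (LinearMap.injective_iff_eq_zero_of_exact (map_exact J hf hfg hg i)).2 (Subsingleton.elim _ _)

end LongExactSequence

end LocalCohom

section PowerTorsion

variable {R : Type*} [CommRing R] (J : Ideal R)

/-- A module is `J`-power torsion if each of its elements is killed by a power of `J`, that is, if
it coincides with its `J`-primary component. -/
def IsPowTorsion (M : Type*) [AddCommGroup M] [Module R M] : Prop :=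
  ∀ x : M, ∃ n, ∀ r ∈ J ^ n, r • x = 0

variable {J} {M N : Type*} [AddCommGroup M] [Module R M] [AddCommGroup N] [Module R N]

theorem mem_primaryComponent_iff {x : M} :
    x ∈ Ideal.primaryComponent M J ↔ ∃ n, ∀ r ∈ J ^ n, r • x = 0 := by
  simp only [Ideal.primaryComponent_mem, Submodule.mem_torsionBySet_iff, Subtype.forall,
    SetLike.mem_coe]

theorem isPowTorsion_primaryComponent : IsPowTorsion J (Ideal.primaryComponent M J) := by
  rintro ⟨x, hx⟩
  obtain ⟨n, hn⟩ := mem_primaryComponent_iff.1 hx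
  exact ⟨n, fun r hr => Subtype.ext (hn r hr)⟩

theorem isPowTorsion_quotient_pow (J : Ideal R) (n : ℕ) : IsPowTorsion J (R ⧸ J ^ n) := by
  intro x
  obtain ⟨x, rfl⟩ := Submodule.mkQ_surjective _ x
  refine ⟨n, fun r hr => ?_⟩
  rw [← map_smul, Submodule.mkQ_apply, Submodule.Quotient.mk_eq_zero]
  exact Ideal.mul_mem_right _ _ hr

namespace IsPowTorsion

theorem of_surjective (h : IsPowTorsion J M) {f : M →ₗ[R] N} (hf : Surjective f) :
    IsPowTorsion J N := by
  intro y
  obtain ⟨x, rfl⟩ := hf y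
  obtain ⟨n, hn⟩ := h x
  exact ⟨n, fun r hr => by rw [← map_smul, hn r hr, map_zero]⟩

theorem of_injective (h : IsPowTorsion J N) {f : M →ₗ[R] N} (hf : Injective f) :
    IsPowTorsion J M := by
  intro x
  obtain ⟨n, hn⟩ := h (f x)
  exact ⟨n, fun r hr => hf (by rw [map_smul, hn r hr, map_zero])⟩

theorem map_mem_primaryComponent (h : IsPowTorsion J M) (f : M →ₗ[R] N) (x : M) :
    f x ∈ Ideal.primaryComponent N J :=
  Ideal.primaryComponent_map_mem J f ⟨x, mem_primaryComponent_iff.2 (h x)⟩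

theorem exists_pow_le_annihilator [Module.Finite R M] (h : IsPowTorsion J M) :
    ∃ n, J ^ n ≤ Module.annihilator R M := by
  obtain ⟨s, hs⟩ := (Module.Finite.fg_top : (⊤ : Submodule R M).FG)
  choose k hk using h
  refine ⟨s.sup k, fun r hr => Module.mem_annihilator.2 fun x => ?_⟩
  have hker : (⊤ : Submodule R M) ≤ LinearMap.ker (LinearMap.lsmul R M r) := by
    rw [← hs, Submodule.span_le]
    exact fun y hy => hk y r (Ideal.pow_le_pow_right (Finset.le_sup hy) hr)
  exact hker (Submodule.mem_top (x := x))

theorem exists_eq_zero_of_mem_pow_smul_top [IsNoetherianRing R] [Module.Finite R M]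
    {L : Submodule R M} (h : IsPowTorsion J N) (f : L →ₗ[R] N) :
    ∃ n, ∀ x : L, (x : M) ∈ J ^ n • (⊤ : Submodule R M) → f x = 0 := by
  obtain ⟨n, hn⟩ := (h.of_injective f.range.injective_subtype).exists_pow_le_annihilator
  obtain ⟨k, hk⟩ := J.exists_pow_inf_eq_pow_smul L
  have hartinRees : J ^ (n + k) • (⊤ : Submodule R M) ⊓ L ≤ J ^ n • L := by
    rw [hk (n + k) (Nat.le_add_left k n), Nat.add_sub_cancel]
    exact Submodule.smul_mono le_rfl inf_le_right
  have hker : J ^ n • L ≤ f.ker.map L.subtype := Submodule.smul_le.2 fun r hr y hy =>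
    ⟨r • ⟨y, hy⟩, by
      rw [SetLike.mem_coe, LinearMap.mem_ker, map_smul]
      exact congrArg Subtype.val (Module.mem_annihilator.1 (hn hr) ⟨f ⟨y, hy⟩, _, rfl⟩), rfl⟩
  refine ⟨n + k, fun x hx => ?_⟩
  obtain ⟨y, hy, hyx⟩ := hker (hartinRees ⟨hx, x.2⟩)
  rwa [← Subtype.ext hyx]

end IsPowTorsion

end PowerTorsion

section PowerTorsionInjective

variable {R : Type u} [CommRing R] {J : Ideal R}

theorem injective_primaryComponent [IsNoetherianRing R] {M : Type u} [AddCommGroup M]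
    [Module R M] [Module.Injective R M] :
    Module.Injective R (Ideal.primaryComponent M J) := by
  refine Module.Baer.injective fun I f => ?_
  obtain ⟨n, hn⟩ := isPowTorsion_primaryComponent.exists_eq_zero_of_mem_pow_smul_top (J := J) f
  let π : I →ₗ[R] R ⧸ J ^ n := (J ^ n).mkQ ∘ₗ I.subtype
  have hπ : π.ker ≤ f.ker := fun x hx => hn x (by
    rw [smul_eq_mul, Ideal.mul_top]
    exact (Submodule.Quotient.mk_eq_zero _).1 hx)
  obtain ⟨h, hh⟩ := Module.Injective.out (π.ker.liftQ π le_rfl)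
    (LinearMap.ker_eq_bot.1 (Submodule.ker_liftQ_eq_bot _ _ _ le_rfl))
    ((Ideal.primaryComponent M J).subtype ∘ₗ π.ker.liftQ f hπ)
  refine ⟨(h ∘ₗ (J ^ n).mkQ).codRestrict _ fun x =>
    (isPowTorsion_quotient_pow J n).map_mem_primaryComponent h _, fun x hx => Subtype.ext ?_⟩
  exact hh (Submodule.Quotient.mk ⟨x, hx⟩)

theorem exists_injective_embedding (M : Type u) [AddCommGroup M] [Module R M] :
    ∃ (I : Type u) (_ : AddCommGroup I) (_ : Module R I) (f : M →ₗ[R] I),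
      Module.Injective R I ∧ Injective f := by
  let I : ModuleCat.{u} R := CategoryTheory.Injective.under (ModuleCat.of R M)
  exact ⟨I, inferInstance, inferInstance, (CategoryTheory.Injective.ι (ModuleCat.of R M)).hom,
    (Module.injective_iff_injective_object R I).2
      (inferInstanceAs (CategoryTheory.Injective (CategoryTheory.Injective.under _))),
    (ModuleCat.mono_iff_injective _).1 inferInstance⟩

theorem IsPowTorsion.exists_injective_embedding [IsNoetherianRing R] {M : Type u} [AddCommGroup M]
    [Module R M] (hM : IsPowTorsion J M) :
    ∃ (I : Type u) (_ : AddCommGroup I) (_ : Module R I) (f : M →ₗ[R] I),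
      Module.Injective R I ∧ IsPowTorsion J I ∧ Injective f := by
  obtain ⟨I, _, _, f, _, hf⟩ := _root_.exists_injective_embedding (R := R) M
  exact ⟨Ideal.primaryComponent I J, inferInstance, inferInstance,
    f.codRestrict _ (hM.map_mem_primaryComponent f), injective_primaryComponent,
    isPowTorsion_primaryComponent, fun a b hab => hf (congrArg Subtype.val hab)⟩

end PowerTorsionInjective

namespace LocalCohom

variable {R : Type u} [CommRing R] (J : Ideal R)
variable {M N : Type u} [AddCommGroup M] [Module R M] [AddCommGroup N] [Module R N]

theorem isPowTorsion (i : ℕ) : IsPowTorsion J (LocalCohom J i M) := by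
  intro z
  obtain ⟨n, x, rfl⟩ := exists_of J z
  refine ⟨n, fun r hr => ?_⟩
  have hr0 : r • 𝟙 (powQuotient J n) = 0 := by
    refine ModuleCat.hom_ext (LinearMap.ext fun y => ?_)
    obtain ⟨y, rfl⟩ := Submodule.mkQ_surjective _ y
    exact (Submodule.Quotient.mk_eq_zero _).2 (Ideal.mul_mem_right y _ hr)
  have hrx : r • x = (Abelian.Ext.mk₀ (r • 𝟙 (powQuotient J n))).comp x (zero_add i) := by
    rw [Abelian.Ext.mk₀_smul, Abelian.Ext.smul_comp, Abelian.Ext.mk₀_id_comp]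
  rw [← map_smul, hrx, hr0, Abelian.Ext.mk₀_zero, Abelian.Ext.zero_comp, map_zero]

instance subsingleton_of_injective (i : ℕ) [Module.Injective R M] :
    Subsingleton (LocalCohom J (i + 1) M) := by
  refine subsingleton_of_forall_eq 0 fun z => ?_
  obtain ⟨n, x, rfl⟩ := exists_of J z
  have : CategoryTheory.Injective (ModuleCat.of R M) :=
    Module.injective_object_of_injective_module R M
  rw [Abelian.Ext.eq_zero_of_injective x, map_zero]

section DegreeZero

variable (M) in
/-- Evaluation at `1` of the homomorphism `R/Jⁿ → M` underlying a class in `Ext^0(R/Jⁿ, M)`. -/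
noncomputable def extEvalOne (n : ℕ) :
    Abelian.Ext (powQuotient J n) (ModuleCat.of R M) 0 →ₗ[R] M :=
  LinearMap.applyₗ (1 : R ⧸ J ^ n) ∘ₗ
    (ModuleCat.homLinearEquiv (S := R) (M := powQuotient J n)
      (N := ModuleCat.of R M)).toLinearMap ∘ₗ
    (Abelian.Ext.linearEquiv₀ (R := R)).toLinearMap

theorem extEvalOne_mk₀ (n : ℕ) (f : powQuotient J n ⟶ ModuleCat.of R M) :
    extEvalOne J M n (Abelian.Ext.mk₀ f) = f.hom (1 : R ⧸ J ^ n) := by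
  rw [← Abelian.Ext.linearEquiv₀_symm_apply (R := R)]
  simp only [extEvalOne, LinearMap.comp_apply, LinearEquiv.coe_coe, LinearEquiv.apply_symm_apply]
  rfl

theorem extEvalOne_injective (n : ℕ) : Injective (extEvalOne J M n) := by
  have happly : Injective fun f : (R ⧸ J ^ n) →ₗ[R] M => f 1 := fun f g hfg =>
    Submodule.linearMap_qext _ (LinearMap.ext_ring hfg)
  exact happly.comp ((ModuleCat.homLinearEquiv (S := R)).injective.comp
    (Abelian.Ext.linearEquiv₀ (R := R)).injective)

variable (M) in
/-- The embedding of `H^0_J(M)` into `M` by evaluation at `1`. -/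
noncomputable def evalOne : LocalCohom J 0 M →ₗ[R] M :=
  Module.DirectLimit.lift R ℕ _ _ (extEvalOne J M) fun n m h x => by
    obtain ⟨f, rfl⟩ := (Abelian.Ext.mk₀_bijective _ _).2 x
    rw [extTransition_apply, Abelian.Ext.mk₀_comp_mk₀, extEvalOne_mk₀, extEvalOne_mk₀]
    rfl

theorem evalOne_of (n : ℕ) (x : Abelian.Ext (powQuotient J n) (ModuleCat.of R M) 0) :
    evalOne J M (of J M 0 n x) = extEvalOne J M n x :=
  Module.DirectLimit.lift_of ..

theorem evalOne_injective : Injective (evalOne J M) :=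
  Module.DirectLimit.lift_injective _ _ (extEvalOne_injective J)

theorem evalOne_map (f : M →ₗ[R] N) (z : LocalCohom J 0 M) :
    evalOne J N (map J 0 f z) = f (evalOne J M z) := by
  obtain ⟨n, x, rfl⟩ := exists_of J z
  obtain ⟨g, rfl⟩ := (Abelian.Ext.mk₀_bijective _ _).2 x
  rw [map_of, Abelian.Ext.mk₀_comp_mk₀, evalOne_of, evalOne_of, extEvalOne_mk₀, extEvalOne_mk₀]
  rfl

theorem range_evalOne : LinearMap.range (evalOne J M) = Ideal.primaryComponent M J := by
  ext a
  refine ⟨?_, fun ha => ?_⟩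
  · rintro ⟨z, rfl⟩
    exact (isPowTorsion J 0).map_mem_primaryComponent _ z
  · obtain ⟨n, hn⟩ := mem_primaryComponent_iff.1 ha
    refine ⟨of J M 0 n (Abelian.Ext.mk₀ (ModuleCat.ofHom ((J ^ n).liftQ
      (LinearMap.toSpanSingleton R M a) fun r hr => hn r hr))), ?_⟩
    rw [evalOne_of, extEvalOne_mk₀]
    exact (Submodule.liftQ_apply _ _ _).trans (one_smul R a)

variable (M) in
/-- `H^0_J(M)` is the submodule of `J`-power torsion elements of `M`. -/
noncomputable def zeroEquiv : LocalCohom J 0 M ≃ₗ[R] Ideal.primaryComponent M J :=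
  LinearEquiv.ofInjective _ (evalOne_injective J) ≪≫ₗ LinearEquiv.ofEq _ _ (range_evalOne J)

end DegreeZero

variable {J}

theorem map_zero_surjective_of_isPowTorsion {f : M →ₗ[R] N} (hM : IsPowTorsion J M)
    (hf : Surjective f) : Surjective (map J 0 f) := by
  intro z
  obtain ⟨x, hx⟩ := hf (evalOne J N z)
  obtain ⟨w, rfl⟩ : x ∈ LinearMap.range (evalOne J M) := by
    rw [range_evalOne]
    exact mem_primaryComponent_iff.2 (hM x)
  exact ⟨w, evalOne_injective J ((evalOne_map J f w).trans hx)⟩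

theorem subsingleton_of_isPowTorsion [IsNoetherianRing R] (hM : IsPowTorsion J M) (i : ℕ) :
    Subsingleton (LocalCohom J (i + 1) M) := by
  induction i generalizing M with
  | zero =>
    obtain ⟨I, _, _, f, _, hI, hf⟩ := hM.exists_injective_embedding
    have hg := f.range.mkQ_surjective
    have hfg := f.exact_map_mkQ_range
    have hconn := (LinearMap.surjective_iff_eq_zero_of_exact
      (map_connecting_exact J hf hfg hg 0)).1 (map_zero_surjective_of_isPowTorsion hI hg)
    refine subsingleton_of_forall_eq 0 fun z => ?_
    obtain ⟨y, rfl⟩ := connecting_surjective J hf hfg hg 0 z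
    rw [hconn, LinearMap.zero_apply]
  | succ i ih =>
    obtain ⟨I, _, _, f, _, hI, hf⟩ := hM.exists_injective_embedding
    have hg := f.range.mkQ_surjective
    have := ih (hI.of_surjective hg)
    exact (connecting_surjective J hf f.exact_map_mkQ_range hg (i + 1)).subsingleton

theorem map_mkQ_bijective [IsNoetherianRing R] {L : Submodule R M} (hL : IsPowTorsion J L)
    (i : ℕ) : Bijective (map J (i + 1) L.mkQ) :=
  have := subsingleton_of_isPowTorsion hL
  ⟨map_right_injective J L.injective_subtype (LinearMap.exact_subtype_mkQ L) L.mkQ_surjective _,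
    map_right_surjective J L.injective_subtype (LinearMap.exact_subtype_mkQ L) L.mkQ_surjective _⟩

end LocalCohom

namespace LocalCohom

section Comparison

open Opposite Limits

variable {R : Type u} [CommRing R] (J : Ideal R) (p : ℕ) (M : Type u) [AddCommGroup M] [Module R M]

/-- The diagram of the modules `Ext^{p+1}(R/Jⁿ, M)` whose colimit is `localCohomology`. -/
noncomputable abbrev extDiagram : (ℕᵒᵖ)ᵒᵖ ⥤ ModuleCat.{u} R :=
  localCohomology.diagram (localCohomology.idealPowersDiagram J) (p + 1) ⋙
    (evaluation _ _).obj (ModuleCat.of R M)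

/-- The cocone exhibiting `localCohomology J (p + 1)` at `M` as a colimit of `extDiagram`. -/
noncomputable def localCohomologyCocone : Cocone (extDiagram J p M) :=
  ((evaluation _ _).obj (ModuleCat.of R M)).mapCocone
    (colimit.cocone (localCohomology.diagram (localCohomology.idealPowersDiagram J) (p + 1)))

/-- `localCohomologyCocone` is a colimit cocone, because evaluation preserves colimits. -/
noncomputable def isColimitLocalCohomologyCocone : IsColimit (localCohomologyCocone J p M) :=
  isColimitOfPreserves _ (colimit.isColimit _)

instance preservesColimit_extDiagram :
    PreservesColimit (extDiagram J p M) (forget (ModuleCat.{u} R)) :=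
  have : PreservesFilteredColimitsOfSize.{0, 0} (forget (ModuleCat.{u} R)) :=
    preservesSmallestFilteredColimits_of_preservesFilteredColimits _
  (this.preserves_filtered_colimits _).preservesColimit

/-- The canonical map from `Ext^{p+1}(R/Jⁿ, M)` to `localCohomology`. -/
noncomputable def localCohomologyι (n : ℕ) :
    ((Ext R (ModuleCat.{u} R) (p + 1)).obj (op (powQuotient J n))).obj (ModuleCat.of R M) →ₗ[R]
      (localCohomology J (p + 1)).obj (ModuleCat.of R M) :=
  ((localCohomologyCocone J p M).ι.app (op (op n))).hom

theorem localCohomologyι_transition {n m : ℕ} (h : n ≤ m) (y) :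
    localCohomologyι J p M m
      ((((Ext R (ModuleCat.{u} R) (p + 1)).map (powQuotientMap J h).op).app
        (ModuleCat.of R M)).hom y) =
    localCohomologyι J p M n y :=
  congrArg (fun k => k.hom y) ((localCohomologyCocone J p M).w (homOfLE h).op.op)

theorem exists_localCohomologyι_eq (z : (localCohomology J (p + 1)).obj (ModuleCat.of R M)) :
    ∃ n y, localCohomologyι J p M n y = z := by
  obtain ⟨j, y, hy⟩ :=
    Concrete.isColimit_exists_rep _ (isColimitLocalCohomologyCocone J p M) z
  exact ⟨j.unop.unop, y, hy⟩

theorem exists_transition_eq_zero {n : ℕ} {y} (hy : localCohomologyι J p M n y = 0) :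
    ∃ m, ∃ h : n ≤ m, (((Ext R (ModuleCat.{u} R) (p + 1)).map (powQuotientMap J h).op).app
      (ModuleCat.of R M)).hom y = 0 := by
  obtain ⟨k, f, _, h⟩ := Concrete.isColimit_exists_of_rep_eq (extDiagram J p M)
    (i := op (op n)) (j := op (op n)) (isColimitLocalCohomologyCocone J p M) y 0
    (hy.trans (map_zero (localCohomologyι J p M n)).symm)
  exact ⟨k.unop.unop, leOfHom f.unop.unop, h.trans (map_zero _)⟩

/-- The comparison map from the direct limit model to `localCohomology`. -/
noncomputable def toLocalCohomology :
    LocalCohom J (p + 1) M →ₗ[R] (localCohomology J (p + 1)).obj (ModuleCat.of R M) :=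
  Module.DirectLimit.lift R ℕ _ _ (fun n => localCohomologyι J p M n ∘ₗ
    (extEquivAbelianExt R (powQuotient J n) (ModuleCat.of R M) p).symm.toLinearMap)
    fun n m h x => by
      obtain ⟨y, rfl⟩ := (extEquivAbelianExt R (powQuotient J n) (ModuleCat.of R M) p).surjective x
      rw [extTransition_apply, ← extEquivAbelianExt_naturality (powQuotientMap J h)]
      simp only [LinearMap.comp_apply, LinearEquiv.coe_coe, LinearEquiv.symm_apply_apply]
      exact localCohomologyι_transition J p M h y

theorem toLocalCohomology_of (n : ℕ) (y) :
    toLocalCohomology J p M (of J M (p + 1) n (extEquivAbelianExt R _ _ p y)) =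
      localCohomologyι J p M n y :=
  (Module.DirectLimit.lift_of ..).trans
    (congrArg (localCohomologyι J p M n) (LinearEquiv.symm_apply_apply _ y))

theorem toLocalCohomology_bijective : Bijective (toLocalCohomology J p M) := by
  refine ⟨(injective_iff_map_eq_zero _).2 fun z hz => ?_, fun z => ?_⟩
  · obtain ⟨n, x, rfl⟩ := exists_of J z
    obtain ⟨y, rfl⟩ := (extEquivAbelianExt R (powQuotient J n) (ModuleCat.of R M) p).surjective x
    rw [toLocalCohomology_of] at hz
    obtain ⟨m, h, hm⟩ := exists_transition_eq_zero J p M hz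
    rw [← of_extTransition J h, extTransition_apply, ← extEquivAbelianExt_naturality, hm,
      map_zero, map_zero]
  · obtain ⟨n, y, rfl⟩ := exists_localCohomologyι_eq J p M z
    exact ⟨_, toLocalCohomology_of J p M n y⟩

/-- The direct limit model agrees with `localCohomology` in positive degrees. -/
noncomputable def equivLocalCohomology :
    LocalCohom J (p + 1) M ≃ₗ[R] (localCohomology J (p + 1)).obj (ModuleCat.of R M) :=
  LinearEquiv.ofBijective (toLocalCohomology J p M) (toLocalCohomology_bijective J p M)

end Comparison

end LocalCohom

section RegularElements

variable {R : Type*} [CommRing R] [IsNoetherianRing R] {J : Ideal R}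
variable {M : Type*} [AddCommGroup M] [Module R M]

theorem primaryComponent_quotient_primaryComponent [Module.Finite R M] (J : Ideal R) :
    Ideal.primaryComponent (M ⧸ Ideal.primaryComponent M J) J = ⊥ := by
  obtain ⟨k, hk⟩ := (isPowTorsion_primaryComponent (J := J) (M := M)).exists_pow_le_annihilator
  refine eq_bot_iff.2 fun a ha => ?_
  obtain ⟨n, hn⟩ := mem_primaryComponent_iff.1 ha
  obtain ⟨a, rfl⟩ := Submodule.mkQ_surjective _ a
  refine (Submodule.Quotient.mk_eq_zero _).2 (mem_primaryComponent_iff.2 ⟨k + n, ?_⟩)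
  have hmul : J ^ k * J ^ n ≤ LinearMap.ker (LinearMap.toSpanSingleton R M a) := by
    refine Ideal.mul_le.2 fun s hs t ht => ?_
    have hta : t • a ∈ Ideal.primaryComponent M J := by
      rw [← Submodule.Quotient.mk_eq_zero, Submodule.Quotient.mk_smul]
      exact hn t ht
    rw [LinearMap.mem_ker, LinearMap.toSpanSingleton_apply, mul_smul]
    exact congrArg Subtype.val (Module.mem_annihilator.1 (hk hs) ⟨_, hta⟩)
  exact fun r hr => hmul (pow_add J k n ▸ hr)

theorem exists_mem_isSMulRegular_of_primaryComponent_eq_bot [Module.Finite R M]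
    (h : Ideal.primaryComponent M J = ⊥) : ∃ x ∈ J, IsSMulRegular M x := by
  by_contra! hJ
  have hsub : (J : Set R) ⊆ ⋃ p ∈ associatedPrimes R M, (p : Set R) := by
    rw [biUnion_associatedPrimes_eq_compl_regular]
    exact hJ
  obtain ⟨p, hp, hJp⟩ := (Ideal.subset_union_prime_finite (associatedPrimes.finite R M)
    (f := id) ⊥ ⊥ fun p hp _ _ => hp.isPrime).1 hsub
  obtain ⟨hprime, x, rfl⟩ := isAssociatedPrime_iff.1 hp
  have hx : x ∈ Ideal.primaryComponent M J := mem_primaryComponent_iff.2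
    ⟨1, fun r hr => Submodule.mem_colon_singleton.1 (hJp (pow_one J ▸ hr))⟩
  rw [h, Submodule.mem_bot] at hx
  refine hprime.ne_top ((Ideal.eq_top_iff_one _).2 (Submodule.mem_colon_singleton.2 ?_))
  rw [hx, smul_zero, Submodule.mem_bot]

theorem exists_mem_isSMulRegular_quotient_primaryComponent (M : Type*) [AddCommGroup M]
    [Module R M] [Module.Finite R M] (J : Ideal R) :
    ∃ x ∈ J, IsSMulRegular (M ⧸ Ideal.primaryComponent M J) x :=
  exists_mem_isSMulRegular_of_primaryComponent_eq_bot
    (primaryComponent_quotient_primaryComponent J)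

theorem supportDim_quotSMulTop_lt [IsLocalRing R] [Module.Finite R M] {x : R} {i : ℕ}
    (hx : x ∈ maximalIdeal R) (hreg : IsSMulRegular M x) (h : Module.supportDim R M ≤ i) :
    Module.supportDim R (QuotSMulTop x M) < i := by
  rwa [← Module.supportDim_quotSMulTop_succ_eq_supportDim hreg hx,
    ENat.WithBot.add_one_le_natCast_iff] at h

end RegularElements

namespace LocalCohom

open RingTheory.Sequence

variable {R : Type u} [CommRing R] {J : Ideal R}
variable {M N : Type u} [AddCommGroup M] [Module R M] [AddCommGroup N] [Module R N] {x : R} {i : ℕ}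

section Regular

theorem subsingleton_of_isSMulRegular (hx : x ∈ J) (h : IsSMulRegular (LocalCohom J i M) x) :
    Subsingleton (LocalCohom J i M) := by
  refine subsingleton_of_forall_eq 0 fun z => ?_
  obtain ⟨n, hn⟩ := isPowTorsion J i z
  exact (h.pow n).right_eq_zero_of_smul (hn _ (Ideal.pow_mem_pow hx n))

theorem isSMulRegular_zero (hx : IsSMulRegular M x) : IsSMulRegular (LocalCohom J 0 M) x := by
  refine .of_right_eq_zero_of_smul fun z hz => evalOne_injective J ?_
  refine (hx.right_eq_zero_of_smul ?_).trans (map_zero _).symm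
  rw [← map_smul, hz, map_zero]

theorem isSMulRegular_succ (hx : IsSMulRegular M x)
    [Subsingleton (LocalCohom J i (QuotSMulTop x M))] :
    IsSMulRegular (LocalCohom J (i + 1) M) x := by
  have hinj := map_left_injective J (f := LinearMap.lsmul R M x) hx
    (LinearMap.exact_lsmul_mkQ_smul_top M x) (Submodule.mkQ_surjective _) i
  rwa [map_lsmul] at hinj

theorem subsingleton_of_isWeaklyRegular {rs : List R} (hmem : ∀ r ∈ rs, r ∈ J)
    (hrs : IsWeaklyRegular M rs) (hi : i < rs.length) : Subsingleton (LocalCohom J i M) := by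
  induction rs generalizing M i with
  | nil => exact absurd hi i.not_lt_zero
  | cons r rs ih =>
    obtain ⟨hr, hrs⟩ := (isWeaklyRegular_cons_iff M r rs).1 hrs
    refine subsingleton_of_isSMulRegular (hmem r List.mem_cons_self) ?_
    cases i with
    | zero => exact isSMulRegular_zero hr
    | succ i =>
      have := ih (fun s hs => hmem s (List.mem_cons_of_mem r hs)) hrs (Nat.lt_of_succ_lt_succ hi)
      exact isSMulRegular_succ hr

end Regular

section Dimension

theorem annihilator_le : Module.annihilator R M ≤ Module.annihilator R (LocalCohom J i M) := by
  refine fun r hr => Module.mem_annihilator.2 fun z => ?_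
  have hzero : LinearMap.lsmul R M r = LinearMap.lsmul R M 0 := LinearMap.ext fun a => by
    rw [LinearMap.lsmul_apply, Module.mem_annihilator.1 hr, map_zero, LinearMap.zero_apply]
  rw [← LinearMap.lsmul_apply, ← map_lsmul, hzero, map_lsmul, LinearMap.lsmul_apply, zero_smul]

theorem subsingleton_of_subsingleton [Subsingleton M] : Subsingleton (LocalCohom J i M) := by
  rw [← Module.annihilator_eq_top_iff (R := R), eq_top_iff]
  exact (Module.annihilator_eq_top_iff.2 ‹_›).ge.trans annihilator_le

variable [IsLocalRing R] [IsNoetherianRing R] [Module.Finite R M]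

theorem subsingleton_of_supportDim_lt (h : Module.supportDim R M < i) :
    Subsingleton (LocalCohom (maximalIdeal R) i M) := by
  induction i generalizing M with
  | zero =>
    have hbot := (ENat.WithBot.add_one_le_zero_iff _).1 (ENat.WithBot.add_one_le_natCast_iff.2 h)
    have := (Module.supportDim_eq_bot_iff_subsingleton R M).1 hbot
    exact subsingleton_of_subsingleton
  | succ i ih =>
    obtain ⟨x, hx, hreg⟩ := exists_mem_isSMulRegular_quotient_primaryComponent M (maximalIdeal R)
    have hdim : Module.supportDim R
        (QuotSMulTop x (M ⧸ Ideal.primaryComponent M (maximalIdeal R))) < i := by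
      refine lt_of_add_lt_add_right (a := 1) ?_
      rw [Module.supportDim_quotSMulTop_succ_eq_supportDim hreg hx]
      exact (Module.supportDim_le_of_surjective _ (Submodule.mkQ_surjective _)).trans_lt h
    have := ih hdim
    have := subsingleton_of_isSMulRegular hx (isSMulRegular_succ (i := i) hreg)
    exact (map_mkQ_bijective isPowTorsion_primaryComponent i).1.subsingleton

theorem map_surjective_of_supportDim_le {g : M →ₗ[R] N} (hg : Surjective g)
    (h : Module.supportDim R M ≤ i) : Surjective (map (maximalIdeal R) i g) := by
  have : Subsingleton (LocalCohom (maximalIdeal R) (i + 1) g.ker) :=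
    subsingleton_of_supportDim_lt <|
      ((Module.supportDim_le_of_injective _ g.ker.injective_subtype).trans h).trans_lt
        (by exact_mod_cast i.lt_succ_self)
  exact map_right_surjective _ g.ker.injective_subtype (LinearMap.exact_subtype_ker_map g) hg i

theorem smul_surjective_of_supportDim_le (hx : x ∈ maximalIdeal R) (hreg : IsSMulRegular M x)
    (h : Module.supportDim R M ≤ i) :
    Surjective (x • · : LocalCohom (maximalIdeal R) i M → LocalCohom (maximalIdeal R) i M) := by
  have := subsingleton_of_supportDim_lt (supportDim_quotSMulTop_lt hx hreg h)
  have hsurj := map_left_surjective (maximalIdeal R) (f := LinearMap.lsmul R M x) hreg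
    (LinearMap.exact_lsmul_mkQ_smul_top M x) (Submodule.mkQ_surjective _) i
  rwa [map_lsmul] at hsurj

end Dimension

end LocalCohom

section FiniteLength

variable {R : Type*} [CommRing R] {M : Type*} [AddCommGroup M] [Module R M]

theorem IsPowTorsion.supportDim_le_zero [IsLocalRing R] (h : IsPowTorsion (maximalIdeal R) M) :
    Module.supportDim R M ≤ 0 := by
  have heq : ∀ p ∈ Module.support R M, p.asIdeal = maximalIdeal R := fun p hp => by
    obtain ⟨x, hx⟩ := Module.mem_support_iff_exists_annihilator.1 hp
    obtain ⟨n, hn⟩ := h x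
    refine ((maximalIdeal.isMaximal R).eq_of_le p.2.ne_top (p.2.le_of_pow_le (n := n) ?_)).symm
    exact fun r hr => hx ((Submodule.mem_annihilator_span_singleton _ _).2 (hn r hr))
  have : Subsingleton (Module.support R M) :=
    ⟨fun p q => Subtype.ext (PrimeSpectrum.ext ((heq p p.2).trans (heq q q.2).symm))⟩
  exact Order.krullDim_nonpos_of_subsingleton

theorem isFiniteLength_of_supportDim_le_zero [IsNoetherianRing R] [Module.Finite R M]
    (h : Module.supportDim R M ≤ 0) : IsFiniteLength R M := by
  have : IsArtinianRing (R ⧸ Module.annihilator R M) := by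
    rw [isArtinianRing_iff_krullDimLE_zero, Ring.KrullDimLE, Order.krullDimLE_iff]
    exact (Module.supportDim_eq_ringKrullDim_quotient_annihilator R M).symm.le.trans h
  let := Module.quotientAnnihilator (R := R) (M := M)
  have : Module.Finite (R ⧸ Module.annihilator R M) M := .of_restrictScalars_finite R _ M
  have : IsArtinian R M := isArtinian_of_surjective_algebraMap
    (Ideal.Quotient.mk_surjective (I := Module.annihilator R M))
  exact isFiniteLength_iff_isNoetherian_isArtinian.2 ⟨inferInstance, this⟩

theorem IsPowTorsion.isFiniteLength [IsLocalRing R] [IsNoetherianRing R] [Module.Finite R M]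
    (h : IsPowTorsion (maximalIdeal R) M) : IsFiniteLength R M :=
  isFiniteLength_of_supportDim_le_zero h.supportDim_le_zero

end FiniteLength

section Completeness

open Pointwise

variable {R : Type*} [CommRing R] {I : Ideal R} {M : Type*} [AddCommGroup M] [Module R M]

theorem isPrecomplete_fin_fun [IsPrecomplete I R] (n : ℕ) : IsPrecomplete I (Fin n → R) := by
  rw [← AdicCompletion.of_surjective_iff]
  intro y
  choose r hr using fun j => AdicCompletion.of_surjective I R
    (AdicCompletion.pi I (fun _ : Fin n => R) y j)
  refine ⟨r, (AdicCompletion.piEquivFin I n).injective ?_⟩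
  ext1 j
  rw [AdicCompletion.piEquivFin_apply, AdicCompletion.piEquivFin_apply, ← hr j]
  rfl

theorem finite_of_finite_quotient_smul_top [IsPrecomplete I R] [IsHausdorff I M]
    [Module.Finite R (M ⧸ (I • ⊤ : Submodule R M))] : Module.Finite R M := by
  obtain ⟨n, f, hf⟩ := Module.Finite.exists_fin' R (M ⧸ (I • ⊤ : Submodule R M))
  obtain ⟨g, hg⟩ := Module.projective_lifting_property (I • ⊤ : Submodule R M).mkQ f
    (Submodule.mkQ_surjective _)
  have := isPrecomplete_fin_fun (I := I) n
  exact Module.Finite.of_surjective g (surjective_of_mkQ_comp_surjective (I := I) (hg ▸ hf))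

theorem finite_of_finite_quotSMulTop [IsPrecomplete I R] [IsHausdorff I M] {x : R} (hx : x ∈ I)
    [Module.Finite R (QuotSMulTop x M)] : Module.Finite R M := by
  have hle : x • (⊤ : Submodule R M) ≤ I • ⊤ := by
    rw [← Submodule.ideal_span_singleton_smul]
    exact Submodule.smul_mono ((Ideal.span_singleton_le_iff_mem I).2 hx) le_rfl
  have : Module.Finite R (M ⧸ (I • ⊤ : Submodule R M)) :=
    Module.Finite.of_surjective (Submodule.factor hle) (Submodule.factor_surjective hle)
  exact finite_of_finite_quotient_smul_top (I := I)

end Completeness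

section InjectiveDual

variable {R : Type u} [CommRing R] {M N P E : Type u} [AddCommGroup M] [Module R M]
  [AddCommGroup N] [Module R N] [AddCommGroup P] [Module R P] [AddCommGroup E] [Module R E]

theorem exists_comp_eq_of_ker_le [Module.Injective R E] {g : M →ₗ[R] N} {ψ : M →ₗ[R] E}
    (h : g.ker ≤ ψ.ker) : ∃ χ : N →ₗ[R] E, χ ∘ₗ g = ψ := by
  obtain ⟨χ, hχ⟩ := Module.Injective.out (g.ker.liftQ g le_rfl)
    (LinearMap.ker_eq_bot.1 (Submodule.ker_liftQ_eq_bot _ _ _ le_rfl)) (g.ker.liftQ ψ h)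
  exact ⟨χ, LinearMap.ext fun a => hχ (Submodule.Quotient.mk a)⟩

theorem lcomp_exact [Module.Injective R E] {f : M →ₗ[R] N} {g : N →ₗ[R] P}
    (h : Function.Exact f g) :
    Function.Exact (LinearMap.lcomp R E g) (LinearMap.lcomp R E f) := by
  refine fun ψ => ⟨fun hψ => exists_comp_eq_of_ker_le fun a ha => ?_, ?_⟩
  · obtain ⟨b, rfl⟩ := (h a).1 ha
    exact LinearMap.congr_fun hψ b
  · rintro ⟨χ, rfl⟩
    exact LinearMap.ext fun a => (congrArg χ (h.apply_apply_eq_zero a)).trans (map_zero χ)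

theorem isSMulRegular_linearMap_of_smul_surjective {x : R} (h : Surjective (x • · : M → M)) :
    IsSMulRegular (M →ₗ[R] E) x := by
  refine .of_right_eq_zero_of_smul fun φ hφ => LinearMap.ext fun z => ?_
  obtain ⟨w, rfl⟩ := h z
  exact (map_smul φ x w).trans (LinearMap.congr_fun hφ w)

theorem IsPowTorsion.linearMap {J : Ideal R} [Module.Finite R M] (h : IsPowTorsion J M) :
    IsPowTorsion J (M →ₗ[R] E) := by
  obtain ⟨n, hn⟩ := h.exists_pow_le_annihilator
  exact fun φ => ⟨n, fun r hr => LinearMap.ext fun z => by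
    rw [LinearMap.smul_apply, ← map_smul, Module.mem_annihilator.1 (hn hr), map_zero,
      LinearMap.zero_apply]⟩

theorem IsPowTorsion.isHausdorff_linearMap {J : Ideal R} (h : IsPowTorsion J M) :
    IsHausdorff J (M →ₗ[R] E) := by
  refine ⟨fun φ hφ => LinearMap.ext fun z => ?_⟩
  obtain ⟨n, hn⟩ := h z
  have hker : (J ^ n • ⊤ : Submodule R (M →ₗ[R] E)) ≤
      LinearMap.ker (LinearMap.applyₗ z : (M →ₗ[R] E) →ₗ[R] E) :=
    Submodule.smul_le.2 fun r hr ψ _ => by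
      rw [LinearMap.mem_ker, map_smul, LinearMap.applyₗ_apply_apply, ← map_smul, hn r hr, map_zero]
  exact hker (SModEq.zero.1 (hφ n))

end InjectiveDual

namespace IsResidueFieldInjHull

variable {R : Type u} [CommRing R] [IsLocalRing R] {M E : Type u} [AddCommGroup M] [Module R M]
  [AddCommGroup E] [Module R E]

theorem exists_apply_ne_zero (hE : IsResidueFieldInjHull R E) {x : M} (hx : x ≠ 0) :
    ∃ φ : M →ₗ[R] E, φ x ≠ 0 := by
  obtain ⟨_, f, hf, -⟩ := hE
  have hker : (LinearMap.toSpanSingleton R M x).ker ≤ (f ∘ₗ Algebra.linearMap R _).ker := by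
    intro r hr
    have hrm : r ∈ maximalIdeal R := fun hunit => hx ((hunit.smul_eq_zero).1 hr)
    rw [LinearMap.mem_ker, LinearMap.comp_apply, Algebra.linearMap_apply,
      ResidueField.algebraMap_eq, (residue_eq_zero_iff r).2 hrm, map_zero]
  obtain ⟨χ, hχ⟩ := exists_comp_eq_of_ker_le hker
  have hone := LinearMap.congr_fun hχ 1
  rw [LinearMap.comp_apply, LinearMap.toSpanSingleton_apply_one, LinearMap.comp_apply,
    Algebra.linearMap_apply, map_one] at hone
  exact ⟨χ, hone ▸ (map_ne_zero_iff f hf).2 one_ne_zero⟩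

theorem nontrivial_linearMap (hE : IsResidueFieldInjHull R E) [Nontrivial M] :
    Nontrivial (M →ₗ[R] E) := by
  obtain ⟨x, hx⟩ := exists_ne (0 : M)
  obtain ⟨φ, hφ⟩ := hE.exists_apply_ne_zero hx
  exact ⟨φ, 0, fun h => hφ (LinearMap.congr_fun h x)⟩

theorem annihilator_linearMap (hE : IsResidueFieldInjHull R E) :
    Module.annihilator R (M →ₗ[R] E) = Module.annihilator R M := by
  refine le_antisymm (fun r hr => Module.mem_annihilator.2 fun x => ?_)
    fun r hr => Module.mem_annihilator.2 fun φ => LinearMap.ext fun x => ?_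
  · by_contra hne
    obtain ⟨φ, hφ⟩ := hE.exists_apply_ne_zero hne
    rw [map_smul] at hφ
    exact hφ (LinearMap.congr_fun (Module.mem_annihilator.1 hr φ) x)
  · rw [LinearMap.smul_apply, ← map_smul, Module.mem_annihilator.1 hr, map_zero,
      LinearMap.zero_apply]

variable [IsNoetherianRing R]

theorem finite_torsionBySet_maximalIdeal (hE : IsResidueFieldInjHull R E) :
    Module.Finite R (Submodule.torsionBySet R E (maximalIdeal R)) := by
  obtain ⟨_, f, -, hess⟩ := hE
  have hle : Submodule.torsionBySet R E (maximalIdeal R) ≤ f.range := by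
    intro e he
    rcases eq_or_ne e 0 with rfl | hne
    · exact zero_mem _
    obtain ⟨y, ⟨hye, hyf⟩, hy⟩ := Submodule.exists_mem_ne_zero_of_ne_bot
      (hess (R ∙ e) (by rwa [ne_eq, Submodule.span_singleton_eq_bot]))
    obtain ⟨r, rfl⟩ := Submodule.mem_span_singleton.1 hye
    have hunit : IsUnit r := by
      by_contra hr
      exact hy ((Submodule.mem_torsionBySet_iff _ _).1 he ⟨r, hr⟩)
    exact (Submodule.smul_mem_iff_of_isUnit _ hunit).1 hyf
  exact Module.Finite.of_injective _ (Submodule.inclusion_injective hle)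

theorem finite_linearMap_of_isSimpleModule (hE : IsResidueFieldInjHull R E) [IsSimpleModule R M] :
    Module.Finite R (M →ₗ[R] E) := by
  have hann : Module.annihilator R M = maximalIdeal R :=
    eq_maximalIdeal IsSimpleModule.annihilator_isMaximal
  have := hE.finite_torsionBySet_maximalIdeal
  refine Module.Finite.of_surjective
    ((Submodule.torsionBySet R E (maximalIdeal R)).subtype.compRight R (M := M)) fun φ => ?_
  refine ⟨φ.codRestrict _ fun x => (Submodule.mem_torsionBySet_iff _ _).2 fun r => ?_,
    LinearMap.ext fun x => rfl⟩
  have hr : (r : R) ∈ Module.annihilator R M := hann.ge r.2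
  rw [← map_smul, Module.mem_annihilator.1 hr, map_zero]

theorem finite_linearMap_of_isFiniteLength (hE : IsResidueFieldInjHull R E)
    (hM : IsFiniteLength R M) : Module.Finite R (M →ₗ[R] E) := by
  have := hE.1
  induction hM with
  | of_subsingleton => infer_instance
  | @of_simple_quotient M _ _ N _ _ ih =>
    have := hE.finite_linearMap_of_isSimpleModule (M := M ⧸ N)
    have := isNoetherian_of_range_eq_ker (LinearMap.lcomp R E N.mkQ) (LinearMap.lcomp R E N.subtype)
      (lcomp_exact (LinearMap.exact_subtype_mkQ N)).linearMap_ker_eq.symm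
    infer_instance

end IsResidueFieldInjHull

/-- The `i`-th module of deficiency `K^i(M) = Hom_R(H^i_m(M), E)` of `M`, where `E` is meant to be
an injective hull of the residue field; `K^{dim R}(R)` is the canonical module of `R`. -/
abbrev DeficiencyModule (R : Type u) [CommRing R] [IsLocalRing R] (E : Type u) [AddCommGroup E]
    [Module R E] (i : ℕ) (M : Type u) [AddCommGroup M] [Module R M] : Type u :=
  LocalCohom (maximalIdeal R) i M →ₗ[R] E

namespace DeficiencyModule

open LocalCohom Pointwise RingTheory.Sequence

variable {R : Type u} [CommRing R] [IsLocalRing R]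
variable {M E : Type u} [AddCommGroup M] [Module R M] [AddCommGroup E] [Module R E] {x : R} {i : ℕ}

theorem exists_injective_quotSMulTop [Module.Injective R E] (hx : IsSMulRegular M x) (i : ℕ) :
    ∃ F : QuotSMulTop x (DeficiencyModule R E (i + 1) M) →ₗ[R]
      DeficiencyModule R E i (QuotSMulTop x M), Injective F := by
  let δ := connecting (maximalIdeal R) (f := LinearMap.lsmul R M x) hx
    (LinearMap.exact_lsmul_mkQ_smul_top M x) (Submodule.mkQ_surjective _) i
  have hexact := lcomp_exact (E := E) (connecting_map_exact (maximalIdeal R)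
    (f := LinearMap.lsmul R M x) hx (LinearMap.exact_lsmul_mkQ_smul_top M x)
    (Submodule.mkQ_surjective _) i)
  have hlcomp : LinearMap.lcomp R E (LocalCohom.map (maximalIdeal R) (i + 1) (.lsmul R M x)) =
      LinearMap.lsmul R (DeficiencyModule R E (i + 1) M) x := by
    rw [map_lsmul]
    exact LinearMap.ext fun φ => LinearMap.ext fun z => map_smul φ x z
  have hker : (LinearMap.lcomp R E δ).ker = x • ⊤ := by
    rw [hexact.linearMap_ker_eq, hlcomp, LinearMap.range_eq_map]
    rfl
  exact ⟨Submodule.liftQ _ (LinearMap.lcomp R E δ) hker.ge,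
    LinearMap.ker_eq_bot.1 (Submodule.ker_liftQ_eq_bot _ _ _ hker.le)⟩

variable [IsNoetherianRing R]

variable (R E M) in
/-- For `i > 0` the deficiency module `K^i(M)` does not see the `m`-power torsion of `M`. -/
noncomputable def equivQuotientPrimaryComponent (i : ℕ) :
    DeficiencyModule R E (i + 1) M ≃ₗ[R]
      DeficiencyModule R E (i + 1) (M ⧸ Ideal.primaryComponent M (maximalIdeal R)) :=
  (LinearEquiv.ofBijective _ (map_mkQ_bijective isPowTorsion_primaryComponent i)).congrLeft E R

variable [Module.Finite R M]

theorem finite_and_supportDim_le_zero (hE : IsResidueFieldInjHull R E) :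
    Module.Finite R (DeficiencyModule R E 0 M) ∧
      Module.supportDim R (DeficiencyModule R E 0 M) ≤ 0 := by
  have htorsion := LocalCohom.isPowTorsion (M := M) (maximalIdeal R) 0
  have : Module.Finite R (LocalCohom (maximalIdeal R) 0 M) :=
    .of_injective _ (evalOne_injective _)
  exact ⟨hE.finite_linearMap_of_isFiniteLength htorsion.isFiniteLength,
    htorsion.linearMap.supportDim_le_zero⟩

theorem finite_and_supportDim_le [IsPrecomplete (maximalIdeal R) R]
    (hE : IsResidueFieldInjHull R E) (i : ℕ) :
    Module.Finite R (DeficiencyModule R E i M) ∧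
      Module.supportDim R (DeficiencyModule R E i M) ≤ i := by
  have := hE.1
  induction i generalizing M with
  | zero => exact finite_and_supportDim_le_zero hE
  | succ i ih =>
    let M' := M ⧸ Ideal.primaryComponent M (maximalIdeal R)
    obtain ⟨x, hx, hreg⟩ := exists_mem_isSMulRegular_quotient_primaryComponent M (maximalIdeal R)
    obtain ⟨F, hF⟩ := exists_injective_quotSMulTop (E := E) hreg i
    obtain ⟨hfin, hdim⟩ := ih (M := QuotSMulTop x M')
    have : Module.Finite R (QuotSMulTop x (DeficiencyModule R E (i + 1) M')) := .of_injective F hF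
    have : IsHausdorff (maximalIdeal R) (DeficiencyModule R E (i + 1) M') :=
      (LocalCohom.isPowTorsion (maximalIdeal R) (i + 1)).isHausdorff_linearMap
    have hfin' : Module.Finite R (DeficiencyModule R E (i + 1) M') :=
      finite_of_finite_quotSMulTop hx
    have hdim' : Module.supportDim R (DeficiencyModule R E (i + 1) M') ≤ (i + 1 : ℕ) := calc
      _ ≤ Module.supportDim R (QuotSMulTop x (DeficiencyModule R E (i + 1) M')) + 1 :=
        Module.supportDim_le_supportDim_quotSMulTop_succ hx
      _ ≤ (i + 1 : ℕ) := by
        rw [Nat.cast_add, Nat.cast_one]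
        exact add_le_add_left ((Module.supportDim_le_of_injective F hF).trans hdim) 1
    let e := equivQuotientPrimaryComponent R M E i
    exact ⟨.equiv e.symm, (Module.supportDim_eq_of_equiv e).le.trans hdim'⟩

theorem isSMulRegular (hx : x ∈ maximalIdeal R) (hreg : IsSMulRegular M x)
    (h : Module.supportDim R M ≤ i) : IsSMulRegular (DeficiencyModule R E i M) x :=
  isSMulRegular_linearMap_of_smul_surjective (smul_surjective_of_supportDim_le hx hreg h)

theorem exists_isSMulRegular (h : Module.supportDim R M ≤ (i + 1 : ℕ)) :
    ∃ x ∈ maximalIdeal R, IsSMulRegular (DeficiencyModule R E (i + 1) M) x := by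
  obtain ⟨x, hx, hreg⟩ := exists_mem_isSMulRegular_quotient_primaryComponent M (maximalIdeal R)
  exact ⟨x, hx, ((equivQuotientPrimaryComponent R M E i).isSMulRegular_congr x).2 <|
    isSMulRegular hx hreg ((Module.supportDim_le_of_surjective _
      (Submodule.mkQ_surjective _)).trans h)⟩

theorem exists_isWeaklyRegular_pair [Module.Injective R E]
    (h : Module.supportDim R M ≤ (i + 2 : ℕ)) :
    ∃ x ∈ maximalIdeal R, ∃ y ∈ maximalIdeal R,
      IsWeaklyRegular (DeficiencyModule R E (i + 2) M) [x, y] := by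
  let M' := M ⧸ Ideal.primaryComponent M (maximalIdeal R)
  obtain ⟨x, hx, hreg⟩ := exists_mem_isSMulRegular_quotient_primaryComponent M (maximalIdeal R)
  have hdim : Module.supportDim R M' ≤ (i + 2 : ℕ) :=
    (Module.supportDim_le_of_surjective _ (Submodule.mkQ_surjective _)).trans h
  have hdim' : Module.supportDim R (QuotSMulTop x M') ≤ (i + 1 : ℕ) :=
    ENat.WithBot.lt_add_one_iff.1 (supportDim_quotSMulTop_lt hx hreg hdim)
  obtain ⟨y, hy, hyreg⟩ := exists_isSMulRegular (E := E) hdim'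
  obtain ⟨F, hF⟩ := exists_injective_quotSMulTop (E := E) hreg (i + 1)
  refine ⟨x, hx, y, hy,
    ((equivQuotientPrimaryComponent R M E (i + 1)).isWeaklyRegular_congr _).2 ?_⟩
  rw [isWeaklyRegular_cons_iff, isWeaklyRegular_singleton_iff]
  exact ⟨isSMulRegular hx hreg hdim, hyreg.of_injective F hF⟩

end DeficiencyModule

section PrimesAndDimension

variable {R : Type*} [CommRing R] {M : Type*} [AddCommGroup M] [Module R M]

theorem isSMulRegular_quotient_of_notMem {p : Ideal R} [p.IsPrime] {x : R} (hx : x ∉ p) :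
    IsSMulRegular (R ⧸ p) x :=
  (isSMulRegular_quotient_iff_mem_of_smul_mem _ _).2 fun _ h =>
    (Ideal.IsPrime.mem_or_mem ‹_› h).resolve_left hx

theorem mem_associatedPrimes_of_forall_isSMulRegular [IsNoetherianRing R] [Nontrivial M]
    {p : Ideal R} [hp : p.IsPrime] (hann : p ≤ Module.annihilator R M)
    (hreg : ∀ r ∉ p, IsSMulRegular M r) : p ∈ associatedPrimes R M := by
  obtain ⟨z, hz⟩ := exists_ne (0 : M)
  refine isAssociatedPrime_iff.2 ⟨hp, z, le_antisymm (fun r hr => ?_) fun r hr => ?_⟩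
  · exact Submodule.mem_colon_singleton.2 (Module.mem_annihilator.1 (hann hr) z)
  · by_contra hrp
    exact hz ((hreg r hrp).right_eq_zero_of_smul (Submodule.mem_colon_singleton.1 hr))

theorem exists_injective_of_mem_associatedPrimes [IsNoetherianRing R] {p : Ideal R}
    (hp : p ∈ associatedPrimes R M) : ∃ f : (R ⧸ p) →ₗ[R] M, Injective f := by
  obtain ⟨-, x, hx⟩ := isAssociatedPrime_iff.1 hp
  have hker : LinearMap.ker (LinearMap.toSpanSingleton R M x) = p := by
    ext r
    rw [hx, Submodule.mem_colon_singleton, LinearMap.mem_ker, LinearMap.toSpanSingleton_apply,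
      Submodule.mem_bot]
  exact ⟨Submodule.liftQ p _ hker.ge,
    LinearMap.ker_eq_bot.1 (Submodule.ker_liftQ_eq_bot _ _ _ hker.le)⟩

theorem ringKrullDim_quotient_le_supportDim [IsNoetherianRing R] {p : Ideal R}
    (hp : p ∈ associatedPrimes R M) :
    ringKrullDim (R ⧸ p) ≤ Module.supportDim R M := by
  obtain ⟨f, hf⟩ := exists_injective_of_mem_associatedPrimes hp
  rw [← Module.supportDim_quotient_eq_ringKrullDim]
  exact Module.supportDim_le_of_injective f hf

theorem eq_maximalIdeal_of_ringKrullDim_quotient_eq_zero [IsLocalRing R] {p : Ideal R} [p.IsPrime]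
    (h : ringKrullDim (R ⧸ p) = 0) : p = maximalIdeal R := by
  have : Ring.KrullDimLE 0 (R ⧸ p) := ringKrullDimZero_iff_ringKrullDim_eq_zero.2 h
  exact eq_maximalIdeal (Ideal.Quotient.maximal_of_isField _ Ring.KrullDimLE.isField_of_isDomain)

theorem ringKrullDim_quotient_maximalIdeal [IsLocalRing R] :
    ringKrullDim (R ⧸ maximalIdeal R) = 0 :=
  ringKrullDim_eq_zero_of_field (ResidueField R)

theorem exists_mem_support_le_ringKrullDim_quotient {i : ℕ} (h : i ≤ Module.supportDim R M) :
    ∃ q ∈ Module.support R M, i ≤ ringKrullDim (R ⧸ q.asIdeal) := by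
  obtain ⟨l, hl⟩ := Order.le_krullDim_iff.1 h
  refine ⟨l.head.1, l.head.2, ?_⟩
  rw [ringKrullDim_quotient]
  exact Order.le_krullDim_iff.2 ⟨⟨l.length, fun j => ⟨(l j).1,
    l.strictMono.monotone (Fin.zero_le j)⟩, l.step⟩, hl⟩

theorem ringKrullDim_quotient_le_supportDim_of_mem_support [Module.Finite R M]
    {q : PrimeSpectrum R} (hq : q ∈ Module.support R M) :
    ringKrullDim (R ⧸ q.asIdeal) ≤ Module.supportDim R M := by
  rw [Module.supportDim_eq_ringKrullDim_quotient_annihilator]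
  exact ringKrullDim_le_of_surjective
    (Ideal.Quotient.factor (Module.annihilator_le_of_mem_support hq))
    (Ideal.Quotient.factor_surjective _)

theorem exists_isPrime_ringKrullDim_quotient_eq [IsLocalRing R] [IsNoetherianRing R]
    {p : Ideal R} [p.IsPrime] {x : R} (hx : x ∈ maximalIdeal R) (hxp : x ∉ p) {i : ℕ}
    (h : ringKrullDim (R ⧸ p) = (i + 1 : ℕ)) :
    ∃ q : Ideal R, q.IsPrime ∧ p ≤ q ∧ x ∈ q ∧ ringKrullDim (R ⧸ q) = i := by
  have hdim : Module.supportDim R (QuotSMulTop x (R ⧸ p)) = i := by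
    rw [← Module.supportDim_quotient_eq_ringKrullDim,
      ← Module.supportDim_quotSMulTop_succ_eq_supportDim (isSMulRegular_quotient_of_notMem hxp) hx]
      at h
    exact ENat.WithBot.add_one_cancel.1 h
  obtain ⟨q, hq, hqdim⟩ := exists_mem_support_le_ringKrullDim_quotient hdim.ge
  have hann := Module.annihilator_le_of_mem_support hq
  have hp : p ≤ Module.annihilator R (QuotSMulTop x (R ⧸ p)) :=
    (Ideal.annihilator_quotient (I := p)).ge.trans
      (LinearMap.annihilator_le_of_surjective _ (Submodule.mkQ_surjective _))
  exact ⟨q.asIdeal, q.2, hp.trans hann, hann (QuotSMulTop.mem_annihilator _ _),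
    le_antisymm ((ringKrullDim_quotient_le_supportDim_of_mem_support hq).trans hdim.le) hqdim⟩

theorem exists_mem_maximalIdeal_forall_notMem [IsLocalRing R] {s : Set (Ideal R)} (hs : s.Finite)
    (hprime : ∀ p ∈ s, p.IsPrime) (hne : maximalIdeal R ∉ s) :
    ∃ x ∈ maximalIdeal R, ∀ p ∈ s, x ∉ p := by
  by_contra! h
  have hsub : (maximalIdeal R : Set R) ⊆ ⋃ p ∈ s, (p : Set R) := fun x hx => by
    simpa only [Set.mem_iUnion₂, SetLike.mem_coe, exists_prop] using h x hx
  obtain ⟨p, hp, hle⟩ := (Ideal.subset_union_prime_finite hs (f := id) ⊥ ⊥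
    fun p hp _ _ => hprime p hp).1 hsub
  exact hne ((maximalIdeal.isMaximal R).eq_of_le (hprime p hp).ne_top hle ▸ hp)

end PrimesAndDimension

namespace LocalCohom

open Pointwise

variable {R : Type u} [CommRing R] [IsLocalRing R]

theorem nontrivial_zero_quotient_maximalIdeal :
    Nontrivial (LocalCohom (maximalIdeal R) 0 (R ⧸ maximalIdeal R)) := by
  have hone : 1 ∈ Ideal.primaryComponent (R ⧸ maximalIdeal R) (maximalIdeal R) :=
    mem_primaryComponent_iff.2 ⟨1, fun r hr => by
      rw [pow_one, ← Ideal.annihilator_quotient (I := maximalIdeal R)] at hr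
      exact Module.mem_annihilator.1 hr 1⟩
  have : Nontrivial (Ideal.primaryComponent (R ⧸ maximalIdeal R) (maximalIdeal R)) :=
    ⟨⟨1, hone⟩, 0, fun h => one_ne_zero (congrArg Subtype.val h)⟩
  exact (zeroEquiv _ _).toEquiv.nontrivial

variable [IsNoetherianRing R] {M N E : Type u} [AddCommGroup M] [Module R M] [AddCommGroup N]
  [Module R N] [AddCommGroup E] [Module R E] {x : R} {i : ℕ} [Module.Finite R M]

theorem map_surjective_of_subsingleton_succ {g : M →ₗ[R] N} (hg : Surjective g)
    (hx : x ∈ maximalIdeal R) (hreg : IsSMulRegular M x) (hN : x ∈ Module.annihilator R N)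
    (h : Module.supportDim R M ≤ (i + 1 : ℕ))
    [Subsingleton (LocalCohom (maximalIdeal R) (i + 1) M)] :
    Surjective (map (maximalIdeal R) i g) := by
  have hle : x • (⊤ : Submodule R M) ≤ g.ker := by
    rintro _ ⟨a, -, rfl⟩
    exact (map_smul g x a).trans (Module.mem_annihilator.1 hN _)
  have hsurj : Surjective (Submodule.liftQ _ g hle) := Surjective.of_comp (g := Submodule.mkQ _) hg
  have hdim : Module.supportDim R (QuotSMulTop x M) ≤ i :=
    ENat.WithBot.lt_add_one_iff.1 (supportDim_quotSMulTop_lt hx hreg h)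
  rw [← Submodule.liftQ_mkQ _ g hle, map_comp]
  exact (map_surjective_of_supportDim_le hsurj hdim).comp (map_right_surjective _
    (f := LinearMap.lsmul R M x) hreg (LinearMap.exact_lsmul_mkQ_smul_top M x)
    (Submodule.mkQ_surjective _) i)

theorem mem_associatedPrimes_deficiencyModule (hE : IsResidueFieldInjHull R E) {p : Ideal R}
    [p.IsPrime] (h : ringKrullDim (R ⧸ p) ≤ i)
    [Nontrivial (LocalCohom (maximalIdeal R) i (R ⧸ p))] :
    p ∈ associatedPrimes R (DeficiencyModule R E i (R ⧸ p)) := by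
  have := hE.nontrivial_linearMap (M := LocalCohom (maximalIdeal R) i (R ⧸ p))
  refine mem_associatedPrimes_of_forall_isSMulRegular ?_ fun r hr => ?_
  · rw [hE.annihilator_linearMap]
    exact (Ideal.annihilator_quotient (I := p)).ge.trans annihilator_le
  · by_cases hrm : r ∈ maximalIdeal R
    · refine DeficiencyModule.isSMulRegular hrm (isSMulRegular_quotient_of_notMem hr) ?_
      rwa [Module.supportDim_quotient_eq_ringKrullDim]
    · exact (notMem_maximalIdeal.1 hrm).isSMulRegular _

/-- If `H^{i+1}(R/p) = 0`, then `H^i(R/p) → H^i(R/q)` is surjective, and dually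
`K^i(R/q)` embeds into `K^i(R/p)`. -/
theorem exists_mem_associatedPrimes_of_subsingleton (hE : IsResidueFieldInjHull R E)
    (hnontrivial : ∀ q : Ideal R, q.IsPrime → ringKrullDim (R ⧸ q) = i →
      Nontrivial (LocalCohom (maximalIdeal R) i (R ⧸ q)))
    {p : Ideal R} [p.IsPrime] (h : ringKrullDim (R ⧸ p) = (i + 1 : ℕ))
    [Subsingleton (LocalCohom (maximalIdeal R) (i + 1) (R ⧸ p))]
    (hx : x ∈ maximalIdeal R) (hxp : x ∉ p) :
    ∃ q ∈ associatedPrimes R (DeficiencyModule R E i (R ⧸ p)),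
      x ∈ q ∧ ringKrullDim (R ⧸ q) = i := by
  obtain ⟨q, hq, hpq, hxq, hqdim⟩ := exists_isPrime_ringKrullDim_quotient_eq hx hxp h
  have := hnontrivial q hq hqdim
  have hsurj : Surjective (map (maximalIdeal R) i (Submodule.factor hpq)) :=
    map_surjective_of_subsingleton_succ (Submodule.factor_surjective hpq) hx
      (isSMulRegular_quotient_of_notMem hxp) (Ideal.annihilator_quotient.ge hxq)
      (Module.supportDim_quotient_eq_ringKrullDim (R := R) p ▸ h.le)
  exact ⟨q, associatedPrimes.subset_of_injective
    (LinearMap.lcomp_injective_of_surjective (S := R) (N := E) _ hsurj)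
    (mem_associatedPrimes_deficiencyModule hE hqdim.le), hxq, hqdim⟩

theorem nontrivial_quotient_of_isPrime [IsPrecomplete (maximalIdeal R) R]
    (hE : IsResidueFieldInjHull R E) (p : Ideal R) (hp : p.IsPrime)
    (h : ringKrullDim (R ⧸ p) = i) :
    Nontrivial (LocalCohom (maximalIdeal R) i (R ⧸ p)) := by
  induction i generalizing p with
  | zero =>
    rw [eq_maximalIdeal_of_ringKrullDim_quotient_eq_zero h]
    exact nontrivial_zero_quotient_maximalIdeal
  | succ i ih =>
    by_contra! hsub
    have hpm : maximalIdeal R ≠ p := fun hpm => by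
      rw [← hpm, ringKrullDim_quotient_maximalIdeal] at h
      exact i.succ_ne_zero (by exact_mod_cast h.symm)
    have := (DeficiencyModule.finite_and_supportDim_le hE i (M := R ⧸ p)).1
    let A := associatedPrimes R (DeficiencyModule R E i (R ⧸ p))
    obtain ⟨x, hx, hxA⟩ := exists_mem_maximalIdeal_forall_notMem
      (s := insert p (A \ {maximalIdeal R})) ((associatedPrimes.finite R _).sdiff.insert p)
      (Set.forall_mem_insert.2 ⟨hp, fun q hq => hq.1.isPrime⟩)
      (by simp [hpm])
    have hxp := hxA p (Set.mem_insert _ _)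
    obtain ⟨q, hq, hxq, hqdim⟩ := exists_mem_associatedPrimes_of_subsingleton hE ih h hx hxp
    have hqm : q = maximalIdeal R := by
      by_contra hqm
      exact hxA q (Set.mem_insert_of_mem _ ⟨hq, hqm⟩) hxq
    obtain rfl : i = 0 := by
      rw [hqm, ringKrullDim_quotient_maximalIdeal] at hqdim
      exact_mod_cast hqdim.symm
    have := subsingleton_of_isSMulRegular hx
      (isSMulRegular_zero (isSMulRegular_quotient_of_notMem hxp))
    rw [associatedPrimes.eq_empty_of_subsingleton] at hq
    exact hq

end LocalCohom

namespace DeficiencyModule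

variable {R : Type u} [CommRing R] [IsLocalRing R] [IsNoetherianRing R]
  [IsPrecomplete (maximalIdeal R) R]
variable {M N E : Type u} [AddCommGroup M] [Module R M] [AddCommGroup N] [Module R N]
  [AddCommGroup E] [Module R E] {i : ℕ}

theorem supportDim_le_of_map_eq_zero [Module.Finite R M] (hE : IsResidueFieldInjHull R E)
    {f : N →ₗ[R] M} (hf : Injective f) (hmap : LocalCohom.map (maximalIdeal R) (i + 1) f = 0) :
    Module.supportDim R (DeficiencyModule R E (i + 1) N) ≤ i := by
  have hsurj : Surjective (LocalCohom.connecting (maximalIdeal R) hf f.exact_map_mkQ_range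
      (Submodule.mkQ_surjective _) i) :=
    (LinearMap.surjective_iff_eq_zero_of_exact (LocalCohom.connecting_map_exact _ _ _ _ i)).2 hmap
  exact (Module.supportDim_le_of_injective _
    (LinearMap.lcomp_injective_of_surjective (S := R) (N := E) _ hsurj)).trans
      (finite_and_supportDim_le hE i).2

end DeficiencyModule

/-- A generator `a` of a copy of `R/p` in the annihilator acts as zero on `H^{d+1}(R)`, hence
`R/p → R` induces zero on `H^{d+1}`. -/
theorem ringKrullDim_quotient_ne_of_mem_associatedPrimes_annihilator
    {R E : Type u} [CommRing R] [IsLocalRing R] [IsNoetherianRing R]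
    [IsPrecomplete (maximalIdeal R) R] [AddCommGroup E] [Module R E]
    (hE : IsResidueFieldInjHull R E) {d : ℕ} (hd : ringKrullDim R = (d + 1 : ℕ)) {p : Ideal R}
    (hp : p ∈ associatedPrimes R
      (Module.annihilator R (LocalCohom (maximalIdeal R) (d + 1) R))) :
    ringKrullDim (R ⧸ p) ≠ (d + 1 : ℕ) := by
  intro hpd
  obtain ⟨f, hf⟩ := exists_injective_of_mem_associatedPrimes hp
  let a := f (Submodule.mkQ p 1)
  have hcomp : (Submodule.subtype _ ∘ₗ f) ∘ₗ p.mkQ = LinearMap.lsmul R R (a : R) :=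
    LinearMap.ext_ring (by simp [a])
  have hmap : LocalCohom.map (maximalIdeal R) (d + 1) (Submodule.subtype _ ∘ₗ f) = 0 := by
    have hsurj := LocalCohom.map_surjective_of_supportDim_le (Submodule.mkQ_surjective p)
      ((Module.supportDim_self_eq_ringKrullDim R).trans hd).le
    refine LinearMap.cancel_right hsurj |>.1 ?_
    rw [← LocalCohom.map_comp, hcomp, LocalCohom.map_lsmul, LinearMap.zero_comp]
    exact LinearMap.ext fun z => Module.mem_annihilator.1 a.2 z
  have := LocalCohom.nontrivial_quotient_of_isPrime hE p hp.isPrime hpd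
  have := hp.isPrime
  have hle := (ringKrullDim_quotient_le_supportDim
    (LocalCohom.mem_associatedPrimes_deficiencyModule hE hpd.le)).trans
      (DeficiencyModule.supportDim_le_of_map_eq_zero hE
        ((Submodule.injective_subtype _).comp hf) hmap)
  rw [hpd] at hle
  exact d.not_succ_le_self (by exact_mod_cast hle)

section RegularHom

open Pointwise RingTheory.Sequence

variable {R : Type*} [CommRing R] {M N : Type*} [AddCommGroup M] [Module R M] [AddCommGroup N]
  [Module R N] {x y : R}

theorem isSMulRegular_linearMap (hx : IsSMulRegular N x) : IsSMulRegular (M →ₗ[R] N) x :=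
  fun _ _ h => LinearMap.ext fun a => hx (LinearMap.congr_fun h a)

theorem exists_injective_quotSMulTop_linearMap (hx : IsSMulRegular N x) :
    ∃ F : QuotSMulTop x (M →ₗ[R] N) →ₗ[R] M →ₗ[R] QuotSMulTop x N, Injective F := by
  have hker : LinearMap.ker (LinearMap.compRight R (M := M) (x • (⊤ : Submodule R N)).mkQ) =
      x • (⊤ : Submodule R (M →ₗ[R] N)) := by
    refine le_antisymm (fun f hf => ?_) ?_
    · have hrange : f.range ≤ (LinearMap.lsmul R N x).range := by
        rintro _ ⟨a, rfl⟩
        exact (LinearMap.exact_lsmul_mkQ_smul_top N x _).1 (LinearMap.congr_fun hf a)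
      let e := LinearEquiv.ofInjective (LinearMap.lsmul R N x) hx
      refine ⟨e.symm ∘ₗ f.codRestrict _ fun a => hrange ⟨a, rfl⟩, Submodule.mem_top, ?_⟩
      ext a
      exact congrArg Subtype.val (e.apply_symm_apply ⟨f a, _⟩)
    · rintro _ ⟨f, -, rfl⟩
      refine LinearMap.ext fun a => (Submodule.Quotient.mk_eq_zero _).2 ?_
      exact Submodule.smul_mem_pointwise_smul _ x _ Submodule.mem_top
  exact ⟨Submodule.liftQ _ _ hker.ge,
    LinearMap.ker_eq_bot.1 (Submodule.ker_liftQ_eq_bot _ _ _ hker.le)⟩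

theorem isWeaklyRegular_pair_linearMap (h : IsWeaklyRegular N [x, y]) :
    IsWeaklyRegular (M →ₗ[R] N) [x, y] := by
  rw [isWeaklyRegular_cons_iff, isWeaklyRegular_singleton_iff] at h ⊢
  obtain ⟨F, hF⟩ := exists_injective_quotSMulTop_linearMap (M := M) h.1
  exact ⟨isSMulRegular_linearMap h.1, (isSMulRegular_linearMap h.2).of_injective F hF⟩

end RegularHom

theorem DeficiencyModule.subsingleton_localCohom_linearMap {R M N E : Type u} [CommRing R]
    [IsLocalRing R] [IsNoetherianRing R] [AddCommGroup M] [Module R M] [Module.Finite R M]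
    [AddCommGroup N] [Module R N] [AddCommGroup E] [Module R E] [Module.Injective R E] {d i : ℕ}
    (h : Module.supportDim R M ≤ (d + 2 : ℕ)) (hi : i < 2) :
    Subsingleton (LocalCohom (maximalIdeal R) i (N →ₗ[R] DeficiencyModule R E (d + 2) M)) := by
  obtain ⟨x, hx, y, hy, hxy⟩ := exists_isWeaklyRegular_pair (E := E) h
  exact LocalCohom.subsingleton_of_isWeaklyRegular
    (List.forall_mem_cons.2 ⟨hx, List.forall_mem_singleton.2 hy⟩)
    (isWeaklyRegular_pair_linearMap hxy) hi

/-- If `φ : M → N` has `J`-torsion kernel and `H^i_J(N) = H^{i+1}_J(N) = 0`, then `H^{i+1}_J(M)`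
is the `i`-th local cohomology of the cokernel of `φ`. -/
noncomputable def LocalCohom.succEquivCokernel {R M N : Type u} [CommRing R] [IsNoetherianRing R]
    {J : Ideal R} [AddCommGroup M] [Module R M] [AddCommGroup N] [Module R N] {φ : M →ₗ[R] N}
    {i : ℕ} (hφ : IsPowTorsion J φ.ker) [Subsingleton (LocalCohom J i N)]
    [Subsingleton (LocalCohom J (i + 1) N)] :
    LocalCohom J (i + 1) M ≃ₗ[R] LocalCohom J i (N ⧸ φ.range) :=
  have hf : Injective (Submodule.liftQ φ.ker φ le_rfl) :=
    LinearMap.ker_eq_bot.1 (Submodule.ker_liftQ_eq_bot _ _ _ le_rfl)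
  have hexact : Exact (Submodule.liftQ φ.ker φ le_rfl) φ.range.mkQ :=
    LinearMap.exact_iff.2 (by rw [Submodule.ker_mkQ, Submodule.range_liftQ])
  have hsurj := Submodule.mkQ_surjective φ.range
  (LinearEquiv.ofBijective _ (map_mkQ_bijective hφ i)).trans
    (LinearEquiv.ofBijective (connecting J hf hexact hsurj i)
      ⟨connecting_injective J hf hexact hsurj i, connecting_surjective J hf hexact hsurj i⟩).symm

theorem isPowTorsion_of_forall_associatedPrimes_eq {R M : Type*} [CommRing R] [IsLocalRing R]
    [IsNoetherianRing R] [AddCommGroup M] [Module R M] [Module.Finite R M]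
    (h : ∀ p ∈ associatedPrimes R M, p = maximalIdeal R) :
    IsPowTorsion (maximalIdeal R) M := by
  have hrad : maximalIdeal R ≤ (Module.annihilator R M).radical := by
    rw [← Ideal.sInf_minimalPrimes]
    exact le_sInf fun p hp => (h p <|
      Module.associatedPrimes.minimalPrimes_annihilator_subset_associatedPrimes R M hp).ge
  obtain ⟨n, hn⟩ := Ideal.exists_pow_le_of_le_radical_of_fg hrad (IsNoetherian.noetherian _)
  exact fun x => ⟨n, fun r hr => Module.mem_annihilator.1 (hn hr) x⟩

theorem ker_lsmul {R M : Type*} [CommRing R] [AddCommGroup M] [Module R M] :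
    (LinearMap.lsmul R M).ker = Module.annihilator R M := by
  ext r
  simp [Module.mem_annihilator, LinearMap.ext_iff]

theorem mlen_lt_top_iff {R M : Type u} [CommRing R] [AddCommGroup M] [Module R M] :
    mlen R M < ⊤ ↔ IsFiniteLength R M := by
  rw [mlen, ← Module.coe_length, ← Module.length_ne_top_iff, lt_top_iff_ne_top]
  exact WithBot.coe_inj.not

theorem isPowTorsion_annihilator_localCohom {R E : Type u} [CommRing R] [IsLocalRing R]
    [IsNoetherianRing R] [IsPrecomplete (maximalIdeal R) R] [AddCommGroup E] [Module R E]
    (hE : IsResidueFieldInjHull R E) {d : ℕ} (hd : ringKrullDim R = (d + 1 : ℕ))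
    (hass : ∀ p ∈ associatedPrimes R R,
      ringKrullDim (R ⧸ p) = ringKrullDim R ∨ p = maximalIdeal R) :
    IsPowTorsion (maximalIdeal R)
      (Module.annihilator R (LocalCohom (maximalIdeal R) (d + 1) R)) := by
  refine isPowTorsion_of_forall_associatedPrimes_eq fun p hp => ?_
  have hpR := associatedPrimes.subset_of_injective (Submodule.injective_subtype _) hp
  exact (hass p hpR).resolve_left fun hpd =>
    ringKrullDim_quotient_ne_of_mem_associatedPrimes_annihilator hE hd hp (hpd.trans hd)

theorem isFiniteLength_H0 {R M : Type u} [CommRing R] [IsLocalRing R] [IsNoetherianRing R]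
    [AddCommGroup M] [Module R M] [Module.Finite R M] : IsFiniteLength R (H0 R M) :=
  (isPowTorsion_primaryComponent (J := maximalIdeal R) (M := M)).isFiniteLength

/-- **Goto–Nakamura.** Let `R` be a complete local ring of dimension `d ≥ 2` with canonical
module `K`, `S = Hom_R(K,K)` and `φ : R → S` the natural map. If
`Ass R ⊆ Assh R ∪ {m}`, then `ker φ` has finite length and `H¹_m(R) ≅ H⁰_m(coker φ)`;
in particular `H¹_m(R)` has finite length. -/
theorem stmt_15 (R : Type u) [CommRing R] [IsLocalRing R] [IsNoetherianRing R]
    [IsAdicComplete (maximalIdeal R) R]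
    (d : ℕ) (hd2 : 2 ≤ d) (hd : ringKrullDim R = ((d : ℕ∞) : WithBot ℕ∞))
    (K : Type u) [AddCommGroup K] [Module R K] (hK : IsCanonicalModule R d K)
    (hass : ∀ p ∈ associatedPrimes R R,
      ringKrullDim (R ⧸ p) = ringKrullDim R ∨ p = maximalIdeal R) :
    mlen R (LinearMap.ker (LinearMap.lsmul R K)) < ⊤ ∧
    Nonempty ((lcoh R 1 R) ≃ₗ[R]
      H0 R ((K →ₗ[R] K) ⧸ LinearMap.range (LinearMap.lsmul R K))) ∧
    mlen R (lcoh R 1 R) < ⊤ := by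
  obtain ⟨d, rfl⟩ := Nat.exists_eq_add_of_le' hd2
  obtain ⟨_, E, _, _, hE, ⟨e₀⟩⟩ := hK
  have := hE.1
  let e : K ≃ₗ[R] DeficiencyModule R E (d + 2) R :=
    e₀.trans ((LocalCohom.equivLocalCohomology (maximalIdeal R) (d + 1) R).congrLeft E R).symm
  let φ := LinearMap.lsmul R K
  have hker : φ.ker = Module.annihilator R (LocalCohom (maximalIdeal R) (d + 2) R) := by
    rw [ker_lsmul, e.annihilator_eq, hE.annihilator_linearMap]
  have hφ : IsPowTorsion (maximalIdeal R) φ.ker :=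
    hker ▸ isPowTorsion_annihilator_localCohom hE hd hass
  have hdepth (i : ℕ) (hi : i < 2) : Subsingleton (LocalCohom (maximalIdeal R) i (K →ₗ[R] K)) :=
    have := DeficiencyModule.subsingleton_localCohom_linearMap (N := K) (E := E)
      ((Module.supportDim_self_eq_ringKrullDim R).trans hd).le hi
    (LocalCohom.mapEquiv _ i (LinearEquiv.congrRight e)).toEquiv.subsingleton
  have := hdepth 0 two_pos
  have := hdepth 1 one_lt_two
  let ψ : lcoh R 1 R ≃ₗ[R] H0 R ((K →ₗ[R] K) ⧸ φ.range) :=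
    (LocalCohom.equivLocalCohomology (maximalIdeal R) 0 R).symm.trans
      ((LocalCohom.succEquivCokernel hφ).trans (LocalCohom.zeroEquiv _ _))
  exact ⟨mlen_lt_top_iff.2 hφ.isFiniteLength, ⟨ψ⟩,
    mlen_lt_top_iff.2 (ψ.symm.isFiniteLength isFiniteLength_H0)⟩
end

section
/- Let R be a Noetherian local ring that is a homomorphic image of a Cohen-Macaulay local ring, with Ass R ⊆ Assh R ∪ {m}. Then the set F = {p ∈ Spec R : ht p > 1 = depth R_p, p ≠ m} is finite. -/
open IsLocalRing Filter Function CategoryTheory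

universe u

/-!
Killing regular elements in the kernel of `f` one at a time keeps `S` Cohen–Macaulay, so one may
assume `dim S = dim R`. Then `S` satisfies (S₂), and the associated primes of the `S`-module `R` are
minimal primes of `S`, except possibly the maximal ideal. Filtering `R` by cyclic modules `S/P` with
`P` prime yields a nonzerodivisor `x` of `S` such that at every prime `Q` of height at least two
with `x ∉ Q` the module `R_Q` inherits depth at least two from `S_Q`. If instead `x ∈ Q` and `Q` is
not maximal, then `x` is regular on `R_Q`, and depth one forces `Q` into the finite set
`Ass(R/xR)`.
-/

section ToIdealHom

variable {S : Type*} [CommRing S] (Q : Ideal S)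
variable (N : Type*) [AddCommGroup N] [Module S N]

/-- The linear map `N → Hom(Q, N)` sending `m` to `a ↦ a • m`. Its kernel is `Hom(S/Q, N)` and its
cokernel is `Ext¹(S/Q, N)`, so its injectivity encodes `grade(Q, N) ≥ 1` and its bijectivity encodes
`grade(Q, N) ≥ 2`, without reference to regular sequences. -/
def toIdealHom : N →ₗ[S] Q →ₗ[S] N :=
  (LinearMap.lsmul S N ∘ₗ Q.subtype).flip

variable {Q N}
variable {N₁ N₂ N₃ : Type*} [AddCommGroup N₁] [Module S N₁] [AddCommGroup N₂] [Module S N₂]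
  [AddCommGroup N₃] [Module S N₃]

@[simp]
lemma toIdealHom_apply (m : N) (a : Q) : toIdealHom Q N m a = (a : S) • m := rfl

lemma comp_toIdealHom (f : N₁ →ₗ[S] N₂) (m : N₁) :
    f ∘ₗ toIdealHom Q N₁ m = toIdealHom Q N₂ (f m) := by
  ext a
  simp

lemma injective_toIdealHom_iff :
    Injective (toIdealHom Q N) ↔ ∀ m : N, (∀ a ∈ Q, a • m = 0) → m = 0 := by
  simp [injective_iff_map_eq_zero, LinearMap.ext_iff]

lemma smul_map_eq_smul_map (φ : Q →ₗ[S] N) (a b : Q) : (a : S) • φ b = (b : S) • φ a := by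
  rw [← map_smul, ← map_smul]
  congr 1
  ext
  simp [mul_comm]

lemma bijective_toIdealHom_of_subsingleton [Subsingleton N] : Bijective (toIdealHom Q N) :=
  ⟨injective_of_subsingleton _, surjective_to_subsingleton _⟩

lemma injective_toIdealHom_of_injective {f : N₁ →ₗ[S] N₂} (hf : Injective f)
    (h : Injective (toIdealHom Q N₂)) : Injective (toIdealHom Q N₁) := by
  refine Injective.of_comp (f := (f ∘ₗ · : (Q →ₗ[S] N₁) → Q →ₗ[S] N₂)) ?_
  simpa only [comp_def, comp_toIdealHom] using h.comp hf

lemma bijective_toIdealHom_of_exact {f : N₁ →ₗ[S] N₂} {g : N₂ →ₗ[S] N₃} (hf : Injective f)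
    (hfg : Exact f g) (h₂ : Bijective (toIdealHom Q N₂)) (h₃ : Injective (toIdealHom Q N₃)) :
    Bijective (toIdealHom Q N₁) := by
  refine ⟨injective_toIdealHom_of_injective hf h₂.injective, fun φ => ?_⟩
  obtain ⟨m, hm⟩ := h₂.surjective (f ∘ₗ φ)
  have hgm : g m = 0 := h₃ <| by
    rw [← comp_toIdealHom, hm, ← LinearMap.comp_assoc, hfg.linearMap_comp_eq_zero,
      LinearMap.zero_comp, map_zero]
  obtain ⟨m', rfl⟩ := (hfg m).1 hgm
  exact ⟨m', (LinearMap.cancel_left hf).1 ((comp_toIdealHom f m').trans hm)⟩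

lemma bijective_toIdealHom_of_linearEquiv (e : N₁ ≃ₗ[S] N₂) (h : Bijective (toIdealHom Q N₁)) :
    Bijective (toIdealHom Q N₂) :=
  bijective_toIdealHom_of_exact (g := (0 : N₁ →ₗ[S] PUnit)) e.symm.injective
    ((LinearMap.exact_zero_iff_surjective PUnit e.symm.toLinearMap).2 e.symm.surjective) h
    bijective_toIdealHom_of_subsingleton.injective

lemma exists_toIdealHom_apply_eq_of_comp_eq_zero {f : N₁ →ₗ[S] N₂} {g : N₂ →ₗ[S] N₃}
    (hf : Injective f) (hfg : Exact f g) (h₁ : Surjective (toIdealHom Q N₁)) {φ : Q →ₗ[S] N₂}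
    (hφ : g ∘ₗ φ = 0) : ∃ m, toIdealHom Q N₂ (f m) = φ := by
  have hφf (a : Q) : φ a ∈ LinearMap.range f := (hfg _).1 (LinearMap.congr_fun hφ a)
  obtain ⟨m, hm⟩ := h₁ (φ.codRestrictOfInjective f hf hφf)
  exact ⟨m, by rw [← comp_toIdealHom, hm, LinearMap.codRestrictOfInjective_comp]⟩

lemma bijective_toIdealHom_of_extension {f : N₁ →ₗ[S] N₂} {g : N₂ →ₗ[S] N₃} (hf : Injective f)
    (hg : Surjective g) (hfg : Exact f g) (h₁ : Bijective (toIdealHom Q N₁))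
    (h₃ : Bijective (toIdealHom Q N₃)) : Bijective (toIdealHom Q N₂) := by
  refine ⟨(injective_iff_map_eq_zero _).2 fun m hm => ?_, fun φ => ?_⟩
  · have hgm : g m = 0 := h₃.injective <| by
      rw [← comp_toIdealHom, hm, LinearMap.comp_zero, map_zero]
    obtain ⟨m', rfl⟩ := (hfg m).1 hgm
    have hm' : toIdealHom Q N₁ m' = 0 :=
      (LinearMap.cancel_left hf).1 (by rw [comp_toIdealHom, hm, LinearMap.comp_zero])
    rw [h₁.injective (hm'.trans (map_zero _).symm), map_zero]
  · obtain ⟨m₃, hm₃⟩ := h₃.surjective (g ∘ₗ φ)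
    obtain ⟨m, rfl⟩ := hg m₃
    obtain ⟨m₁, hm₁⟩ := exists_toIdealHom_apply_eq_of_comp_eq_zero hf hfg h₁.surjective
      (φ := φ - toIdealHom Q N₂ m) (by rw [LinearMap.comp_sub, comp_toIdealHom, hm₃, sub_self])
    exact ⟨m + f m₁, by rw [map_add, hm₁, add_sub_cancel]⟩

lemma injective_toIdealHom_of_isSMulRegular {y : S} (hy : y ∈ Q) (hreg : IsSMulRegular N y) :
    Injective (toIdealHom Q N) :=
  injective_toIdealHom_iff.2 fun m hm => hreg (by simp only [hm y hy, smul_zero])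

lemma bijective_toIdealHom_iff_of_isSMulRegular {y : S} (hy : y ∈ Q) (hreg : IsSMulRegular N₁ y)
    {g : N₁ →ₗ[S] N₂} (hg : Surjective g) (hex : Exact (LinearMap.lsmul S N₁ y) g) :
    Bijective (toIdealHom Q N₁) ↔ Injective (toIdealHom Q N₂) := by
  have hinj : Injective (toIdealHom Q N₁) := injective_toIdealHom_of_isSMulRegular hy hreg
  refine ⟨fun h₁ => (injective_iff_map_eq_zero _).2 fun m₂ hm₂ => ?_, fun h₂ => ⟨hinj, fun φ => ?_⟩⟩
  · obtain ⟨m, rfl⟩ := hg m₂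
    obtain ⟨m', hm'⟩ := exists_toIdealHom_apply_eq_of_comp_eq_zero
      (f := LinearMap.lsmul S N₁ y) hreg hex h₁.surjective
      ((comp_toIdealHom g m).trans hm₂)
    exact (hex m).2 ⟨m', hinj hm'⟩
  · have hgφ : g (φ ⟨y, hy⟩) = 0 := injective_toIdealHom_iff.1 h₂ _ fun a ha => by
      rw [← map_smul, smul_map_eq_smul_map φ ⟨a, ha⟩ ⟨y, hy⟩]
      exact hex.apply_apply_eq_zero _
    obtain ⟨m, hm⟩ := (hex _).1 hgφ
    rw [LinearMap.lsmul_apply] at hm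
    refine ⟨m, LinearMap.ext fun a => hreg ?_⟩
    calc y • (a : S) • m = (a : S) • y • m := smul_comm ..
      _ = (a : S) • φ ⟨y, hy⟩ := by rw [hm]
      _ = y • φ a := smul_map_eq_smul_map φ a ⟨y, hy⟩

section BaseChange

variable (A : Type*) [CommRing A] [Algebra S A] [Module A N] [IsScalarTower S A N]

lemma injective_toIdealHom_map_iff :
    Injective (toIdealHom (Q.map (algebraMap S A)) N) ↔ Injective (toIdealHom Q N) := by
  simp only [injective_toIdealHom_iff]
  refine forall_congr' fun m => imp_congr_left ?_
  simpa [SetLike.le_def, Submodule.mem_colon_singleton] using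
    Ideal.map_le_iff_le_comap (f := algebraMap S A) (I := Q) (K := (⊥ : Submodule A N).colon {m})

lemma bijective_toIdealHom_map (h : Bijective (toIdealHom Q N)) :
    Bijective (toIdealHom (Q.map (algebraMap S A)) N) := by
  refine ⟨(injective_toIdealHom_map_iff A).2 h.injective, fun φ => ?_⟩
  obtain ⟨m, hm⟩ := h.surjective (φ.restrictScalars S ∘ₗ Algebra.idealMap A Q)
  refine ⟨m, LinearMap.ext_on Submodule.span_span_coe_preimage ?_⟩
  rintro ⟨_, _⟩ ⟨a, ha, rfl⟩
  exact (algebraMap_smul A a m).trans (LinearMap.congr_fun hm ⟨a, ha⟩)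

end BaseChange

end ToIdealHom

section AssociatedPrimes

open Pointwise

variable {S : Type*} [CommRing S] [IsNoetherianRing S] {M : Type*} [AddCommGroup M] [Module S M]

lemma injective_toIdealHom_iff_notMem_associatedPrimes {Q : Ideal S} [hQ : Q.IsMaximal] :
    Injective (toIdealHom Q M) ↔ Q ∉ associatedPrimes S M := by
  rw [injective_toIdealHom_iff, AssociatedPrimes.mem_iff, isAssociatedPrime_iff]
  refine ⟨fun h ⟨hprime, m, hm⟩ => hprime.ne_top ?_, fun h m hm => by_contra fun hm0 => h ?_⟩
  · have hm0 : m = 0 := h m fun a ha => by simpa [hm, Submodule.mem_colon_singleton] using ha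
    simp [hm, hm0, Ideal.eq_top_iff_one, Submodule.mem_colon_singleton]
  · refine ⟨hQ.isPrime, m, hQ.eq_of_le ?_ fun a ha => ?_⟩
    · simpa [Ideal.eq_top_iff_one, Submodule.mem_colon_singleton] using hm0
    · simpa [Submodule.mem_colon_singleton] using hm a ha

lemma isSMulRegular_iff_forall_associatedPrimes {y : S} :
    IsSMulRegular M y ↔ ∀ P ∈ associatedPrimes S M, y ∉ P := by
  have h := Set.ext_iff.1 (biUnion_associatedPrimes_eq_compl_regular S M) y
  simp only [Set.mem_iUnion, Set.mem_compl_iff, Set.mem_ofPred_eq, SetLike.mem_coe] at h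
  rw [← not_iff_not, ← h]
  push Not
  simp

lemma exists_mem_isSMulRegular [Module.Finite S M] {I : Ideal S}
    (h : ∀ P ∈ associatedPrimes S M, ¬I ≤ P) : ∃ x ∈ I, IsSMulRegular M x := by
  by_contra! hI
  have hunion : (I : Set S) ⊆ ⋃ P ∈ associatedPrimes S M, (P : Set S) := by
    rw [biUnion_associatedPrimes_eq_compl_regular]
    exact hI
  obtain ⟨P, hP, hIP⟩ := (I.subset_union_prime_finite (associatedPrimes.finite S M) (f := id) ⊤ ⊤
    fun P hP _ _ => hP.isPrime).1 hunion
  exact h P hP hIP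

section Localization

open Module.associatedPrimes

variable {Q : Ideal S} [Q.IsPrime]

lemma injective_toIdealHom_localizedModule_iff :
    Injective (toIdealHom Q (LocalizedModule Q.primeCompl M)) ↔ Q ∉ associatedPrimes S M := by
  rw [← injective_toIdealHom_map_iff (Localization.AtPrime Q),
    IsLocalization.AtPrime.map_eq_maximalIdeal, injective_toIdealHom_iff_notMem_associatedPrimes,
    ← preimage_comap_associatedPrimes_eq_associatedPrimes_of_isLocalizedModule
      Q.primeCompl (Localization.AtPrime Q) (LocalizedModule.mkLinearMap Q.primeCompl M),
    Set.mem_preimage, ← Ideal.under_def, IsLocalization.AtPrime.under_maximalIdeal _ Q]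

lemma bijective_toIdealHom_localizedModule_iff {y : S} (hy : y ∈ Q)
    (hreg : IsSMulRegular (LocalizedModule Q.primeCompl M) y) :
    Bijective (toIdealHom Q (LocalizedModule Q.primeCompl M)) ↔
      Q ∉ associatedPrimes S (QuotSMulTop y M) := by
  have hmap : (LocalizedModule.map Q.primeCompl (LinearMap.lsmul S M y)).restrictScalars S =
      LinearMap.lsmul S _ y := by
    ext m
    induction m using LocalizedModule.induction_on with
    | h m s => simp [LocalizedModule.map_mk, LocalizedModule.smul'_mk]
  rw [← injective_toIdealHom_localizedModule_iff]
  refine bijective_toIdealHom_iff_of_isSMulRegular hy hreg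
    (g := (LocalizedModule.map Q.primeCompl (Submodule.mkQ (y • ⊤))).restrictScalars S)
    (LocalizedModule.map_surjective _ _ (Submodule.mkQ_surjective _)) ?_
  rw [← hmap]
  exact LocalizedModule.map_exact _ _ _ (LinearMap.exact_lsmul_mkQ_smul_top M y)

lemma isSMulRegular_localizedModule {y : S} (h : ∀ P ∈ associatedPrimes S M, P ≤ Q → y ∉ P) :
    IsSMulRegular (LocalizedModule Q.primeCompl M) y := by
  rw [← isSMulRegular_algebraMap_iff (Localization.AtPrime Q),
    isSMulRegular_iff_forall_associatedPrimes]
  intro P hP hyP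
  have hPQ : P.under S ≤ Q :=
    (Ideal.comap_mono (le_maximalIdeal hP.isPrime.ne_top)).trans_eq
      (IsLocalization.AtPrime.under_maximalIdeal _ Q)
  rw [← preimage_comap_associatedPrimes_eq_associatedPrimes_of_isLocalizedModule
    Q.primeCompl (Localization.AtPrime Q) (LocalizedModule.mkLinearMap Q.primeCompl M)] at hP
  exact h _ hP hPQ hyP

end Localization

end AssociatedPrimes

section GenericDepth

variable {S : Type*} [CommRing S]

variable (S) in
/-- Outside the hypersurface of some nonzerodivisor `x`, the module `N` has depth at least two
wherever the ring `S` itself does; the depth condition is phrased through `toIdealHom`. -/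
def GenericallyInheritsDepthTwo (N : Type*) [AddCommGroup N] [Module S N] : Prop :=
  ∃ x : S, IsSMulRegular S x ∧ ∀ (Q : Ideal S) [Q.IsPrime], x ∉ Q →
    Bijective (toIdealHom Q (LocalizedModule Q.primeCompl S)) →
      Bijective (toIdealHom Q (LocalizedModule Q.primeCompl N))

namespace GenericallyInheritsDepthTwo

variable {N₁ N₂ N₃ : Type*} [AddCommGroup N₁] [Module S N₁] [AddCommGroup N₂] [Module S N₂]
  [AddCommGroup N₃] [Module S N₃]

lemma of_isSMulRegular_mem_annihilator {x : S} (hx : IsSMulRegular S x)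
    (hann : x ∈ Module.annihilator S N₁) : GenericallyInheritsDepthTwo S N₁ := by
  refine ⟨x, hx, fun Q _ hxQ _ => ?_⟩
  have : Subsingleton (LocalizedModule Q.primeCompl N₁) :=
    LocalizedModule.subsingleton_iff.2 fun m => ⟨x, hxQ, Module.mem_annihilator.1 hann m⟩
  exact bijective_toIdealHom_of_subsingleton

lemma of_extension {f : N₁ →ₗ[S] N₂} {g : N₂ →ₗ[S] N₃} (hf : Injective f) (hg : Surjective g)
    (hfg : Exact f g) (h₁ : GenericallyInheritsDepthTwo S N₁)
    (h₃ : GenericallyInheritsDepthTwo S N₃) : GenericallyInheritsDepthTwo S N₂ := by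
  obtain ⟨x, hx, hx₁⟩ := h₁
  obtain ⟨z, hz, hz₃⟩ := h₃
  refine ⟨x * z, hx.mul hz, fun Q _ hQ hS => ?_⟩
  exact bijective_toIdealHom_of_extension
    (f := (LocalizedModule.map Q.primeCompl f).restrictScalars S)
    (g := (LocalizedModule.map Q.primeCompl g).restrictScalars S)
    (LocalizedModule.map_injective _ _ hf) (LocalizedModule.map_surjective _ _ hg)
    (LocalizedModule.map_exact _ _ _ hfg) (hx₁ Q (fun h => hQ (Q.mul_mem_right _ h)) hS)
    (hz₃ Q (fun h => hQ (Q.mul_mem_left _ h)) hS)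

variable [IsNoetherianRing S]

-- `x` is chosen in all the associated primes of the cokernel that are not associated to `S`.
lemma of_injective (hS : associatedPrimes S S ⊆ minimalPrimes S) {f : N₁ →ₗ[S] S}
    (hf : Injective f) : GenericallyInheritsDepthTwo S N₁ := by
  let bad : Set (Ideal S) := associatedPrimes S (S ⧸ LinearMap.range f) \ associatedPrimes S S
  have hbad : bad.Finite := (associatedPrimes.finite S _).subset Set.sdiff_subset
  obtain ⟨x, hx, hxreg⟩ := exists_mem_isSMulRegular (M := S) (I := ∏ P ∈ hbad.toFinset, P)
    fun P hP hle => by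
      obtain ⟨P', hP', hP'P⟩ := hP.isPrime.prod_le.1 hle
      obtain ⟨hP'C, hP'S⟩ := hbad.mem_toFinset.1 hP'
      exact hP'S (Minimal.eq_of_le (hS hP).out ⟨hP'C.isPrime, bot_le⟩ hP'P ▸ hP)
  refine ⟨x, hxreg, fun Q _ hxQ hSQ => ?_⟩
  refine bijective_toIdealHom_of_exact
    (f := (LocalizedModule.map Q.primeCompl f).restrictScalars S)
    (g := (LocalizedModule.map Q.primeCompl (LinearMap.range f).mkQ).restrictScalars S)
    (LocalizedModule.map_injective _ _ hf)
    (LocalizedModule.map_exact _ _ _ (LinearMap.exact_map_mkQ_range f)) hSQ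
    (injective_toIdealHom_localizedModule_iff.2 fun hQC => hxQ ?_)
  have hQS : Q ∉ associatedPrimes S S := injective_toIdealHom_localizedModule_iff.1 hSQ.injective
  exact Ideal.le_of_dvd (Finset.dvd_prod_of_mem id (hbad.mem_toFinset.2 ⟨hQC, hQS⟩)) hx

lemma of_finite (hS : associatedPrimes S S ⊆ minimalPrimes S) (N : Type*) [AddCommGroup N]
    [Module S N] [hN : Module.Finite S N] : GenericallyInheritsDepthTwo S N := by
  induction hN using IsNoetherianRing.induction_on_isQuotientEquivQuotientPrime S with
  | subsingleton N =>
    exact of_isSMulRegular_mem_annihilator (.one S)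
      (Module.mem_annihilator.2 fun _ => Subsingleton.elim _ _)
  | exact N₁ N₂ N₃ f g hf hg hfg h₁ h₃ => exact of_extension hf hg hfg h₁ h₃
  | quotient N P e =>
    by_cases hP : P.asIdeal ∈ associatedPrimes S S
    · obtain ⟨-, ι, hι⟩ := (isAssociatedPrime_iff_exists_injective_linearMap _ _).1 hP
      exact of_injective hS (f := ι ∘ₗ e.toLinearMap) (hι.comp e.injective)
    · obtain ⟨x, hxP, hx⟩ := exists_mem_isSMulRegular (M := S) (I := P.asIdeal)
        fun P' hP' hle => hP (Minimal.eq_of_le (hS hP').out ⟨P.2, bot_le⟩ hle ▸ hP')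
      refine of_isSMulRegular_mem_annihilator hx ?_
      rwa [e.annihilator_eq, Ideal.annihilator_quotient]

end GenericallyInheritsDepthTwo

end GenericDepth

section SerreS2

/-- Serre's condition (S₂) for a Noetherian ring `S`: there are no embedded associated primes, and
`S_Q` has depth at least two, in the sense of `toIdealHom`, at every prime `Q` of height at least
two. -/
structure IsSerreS2 (S : Type*) [CommRing S] : Prop where
  associatedPrimes_subset : associatedPrimes S S ⊆ minimalPrimes S
  bijective_toIdealHom (Q : Ideal S) [Q.IsPrime] (hQ : 1 < Q.height) :
    Bijective (toIdealHom Q (LocalizedModule Q.primeCompl S))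

variable {S : Type*} [CommRing S] [IsNoetherianRing S]

lemma minimalPrimes_subset_associatedPrimes : minimalPrimes S ⊆ associatedPrimes S S := by
  simpa [Module.annihilator_eq_bot.2, minimalPrimes] using
    Module.associatedPrimes.minimalPrimes_annihilator_subset_associatedPrimes S S

theorem IsSerreS2.finite_setOf_not_bijective_toIdealHom (hS : IsSerreS2 S) (M : Type*)
    [AddCommGroup M] [Module S M] [Module.Finite S M]
    (hM : ∀ P ∈ associatedPrimes S M, P ∈ minimalPrimes S ∨ P.IsMaximal) :
    {Q : PrimeSpectrum S | 1 < Q.asIdeal.height ∧ ¬Q.asIdeal.IsMaximal ∧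
      ¬Bijective (toIdealHom Q.asIdeal (LocalizedModule Q.asIdeal.primeCompl M))}.Finite := by
  obtain ⟨x, hxreg, hx⟩ := GenericallyInheritsDepthTwo.of_finite hS.associatedPrimes_subset M
  refine ((associatedPrimes.finite S (QuotSMulTop x M)).preimage
    fun _ _ _ _ => PrimeSpectrum.ext).subset ?_
  rintro Q ⟨hQht, hQmax, hQM⟩
  have hxQ : x ∈ Q.asIdeal :=
    by_contra fun hxQ => hQM (hx _ hxQ (hS.bijective_toIdealHom _ hQht))
  refine by_contra fun hQx => hQM ((bijective_toIdealHom_localizedModule_iff hxQ ?_).2 hQx)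
  refine isSMulRegular_localizedModule fun P hP hPQ => ?_
  have hPmin : P ∈ minimalPrimes S :=
    (hM P hP).resolve_right fun hPmax => hQmax (hPmax.eq_of_le Q.2.ne_top hPQ ▸ hPmax)
  exact isSMulRegular_iff_forall_associatedPrimes.1 hxreg P
    (minimalPrimes_subset_associatedPrimes hPmin)

end SerreS2

section KrullDim

variable {S : Type*} [CommRing S]

lemma ringKrullDim_quotient_add_one_le_of_lt {P Q : Ideal S} [P.IsPrime] (h : P < Q) :
    ringKrullDim (S ⧸ Q) + 1 ≤ ringKrullDim (S ⧸ P) := by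
  obtain ⟨r, hrQ, hrP⟩ := SetLike.exists_of_lt h
  refine ringKrullDim_succ_le_of_surjective (Ideal.Quotient.factor h.le)
    (Ideal.Quotient.factor_surjective h.le) (r := Ideal.Quotient.mk P r) ?_ ?_
  · exact mem_nonZeroDivisors_of_ne_zero (mt Ideal.Quotient.eq_zero_iff_mem.1 hrP)
  · exact Ideal.Quotient.eq_zero_iff_mem.2 hrQ

lemma height_add_ringKrullDim_quotient_le (P : Ideal S) [P.IsPrime] :
    P.height + ringKrullDim (S ⧸ P) ≤ ringKrullDim S := by
  let P' : PrimeSpectrum S := ⟨P, ‹_›⟩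
  have : Nonempty (PrimeSpectrum S) := ⟨P'⟩
  have hcoheight : ringKrullDim (S ⧸ P) = Order.coheight P' := by
    rw [ringKrullDim_quotient, Order.coheight_eq_krullDim_Ici]
    rfl
  rw [hcoheight, P'.height_eq_orderHeight, ringKrullDim,
    Order.krullDim_eq_iSup_height_add_coheight_of_nonempty]
  exact_mod_cast le_iSup (fun q : PrimeSpectrum S => Order.height q + Order.coheight q) P'

lemma exists_ringKrullDim_eq_natCast (S : Type*) [CommRing S] [FiniteRingKrullDim S] :
    ∃ n : ℕ, ringKrullDim S = n :=
  ⟨_, Order.krullDim_eq_length_of_finiteDimensionalOrder⟩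

lemma mem_minimalPrimes_of_ringKrullDim_quotient_eq [FiniteRingKrullDim S] {P : Ideal S}
    [P.IsPrime] (h : ringKrullDim (S ⧸ P) = ringKrullDim S) :
    P ∈ minimalPrimes S := by
  rw [← Ideal.height_eq_zero_iff]
  have hle := height_add_ringKrullDim_quotient_le P
  obtain ⟨n, hn⟩ := exists_ringKrullDim_eq_natCast S
  rw [h, hn] at hle
  lift P.height to ℕ using Ideal.height_ne_top Ideal.IsPrime.ne_top' with k
  norm_cast at hle ⊢
  lia

lemma ringKrullDim_quotient_comap_of_surjective {R : Type*} [CommRing R] {f : S →+* R}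
    (hf : Surjective f) (p : Ideal R) :
    ringKrullDim (S ⧸ p.comap f) = ringKrullDim (R ⧸ p) :=
  ringKrullDim_eq_of_ringEquiv (RingEquiv.ofBijective (Ideal.quotientMap p f le_rfl)
    ⟨Ideal.quotientMap_injective, Ideal.quotientMap_surjective hf⟩)

lemma height_le_height_comap_of_surjective {R : Type*} [CommRing R] {f : S →+* R}
    (hf : Surjective f) (p : PrimeSpectrum R) :
    Order.height p ≤ Order.height (PrimeSpectrum.comap f p) :=
  Order.height_le_height_apply_of_strictMono _
    (Monotone.strictMono_of_injective (f := PrimeSpectrum.comap f) (fun _ _ => Ideal.comap_mono)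
      (PrimeSpectrum.comap_injective_of_surjective f hf)) p

end KrullDim

section Depth

open RingTheory.Sequence Pointwise

variable {S : Type u} [CommRing S] [IsLocalRing S]

lemma length_le_mdepth {M : Type u} [AddCommGroup M] [Module S M] {rs : List S}
    (hmem : ∀ r ∈ rs, r ∈ maximalIdeal S) (hreg : IsRegular M rs) :
    (rs.length : ℕ∞) ≤ mdepth S M :=
  le_sSup ⟨rs, rfl, hmem, hreg⟩

lemma mdepth_le_iff {M : Type u} [AddCommGroup M] [Module S M] {d : ℕ∞} :
    mdepth S M ≤ d ↔ ∀ rs : List S, (∀ r ∈ rs, r ∈ maximalIdeal S) → IsRegular M rs →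
      (rs.length : ℕ∞) ≤ d := by
  rw [mdepth, idepth, sSup_le_iff]
  exact ⟨fun h rs hmem hreg => h _ ⟨rs, rfl, hmem, hreg⟩,
    fun h _ ⟨rs, hlen, hmem, hreg⟩ => hlen ▸ h rs hmem hreg⟩

lemma mdepth_congr {M N : Type u} [AddCommGroup M] [Module S M] [AddCommGroup N] [Module S N]
    (e : M ≃ₗ[S] N) : mdepth S M = mdepth S N := by
  simp only [mdepth, idepth, e.isRegular_congr]

lemma mdepth_le_mdepth_of_isLocalHom (A : Type u) [CommRing A] [IsLocalRing A] [Algebra S A]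
    [IsLocalHom (algebraMap S A)] (M : Type u) [AddCommGroup M] [Module S M] [Module A M]
    [IsScalarTower S A M] [Module.Finite A M] : mdepth S M ≤ mdepth A M := by
  refine mdepth_le_iff.2 fun rs hmem hreg => ?_
  have : Nontrivial M := hreg.nontrivial
  have hmem' : ∀ a ∈ rs.map (algebraMap S A), a ∈ maximalIdeal A := by
    simpa using hmem
  have hweak := (isWeaklyRegular_map_algebraMap_iff A M rs).2 hreg.toIsWeaklyRegular
  simpa using length_le_mdepth hmem' (.of_isWeaklyRegular_of_mem_maximalIdeal M hmem' hweak)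

variable [IsNoetherianRing S]

-- By Nakayama, the nonzero submodule of elements killed by `P` is not contained in `x • M`.
lemma exists_lt_mem_associatedPrimes_quotSMulTop {M : Type u} [AddCommGroup M] [Module S M]
    [Module.Finite S M] {x : S} (hx : x ∈ maximalIdeal S) (hreg : IsSMulRegular M x)
    {P : Ideal S} (hP : P ∈ associatedPrimes S M) :
    ∃ Q ∈ associatedPrimes S (QuotSMulTop x M), P < Q := by
  let N : Submodule S M := Submodule.torsionBySet S M (P : Set S)
  have mem_N (v : M) : v ∈ N ↔ ∀ a ∈ P, a • v = 0 := by
    simp [N, Submodule.mem_torsionBySet_iff]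
  have hN : N ≠ ⊥ := by
    obtain ⟨hprime, u, hu⟩ := isAssociatedPrime_iff.1 hP
    refine Submodule.ne_bot_iff _ |>.2 ⟨u, (mem_N u).2 fun a ha => ?_, fun hu0 => hprime.ne_top ?_⟩
    · simpa [hu, Submodule.mem_colon_singleton] using ha
    · simp [hu, hu0, Ideal.eq_top_iff_one, Submodule.mem_colon_singleton]
  obtain ⟨v, hvN, hvx⟩ : ∃ v ∈ N, v ∉ x • (⊤ : Submodule S M) := by
    by_contra! hNx
    refine hN (Submodule.eq_bot_of_le_smul_of_le_jacobson_bot (maximalIdeal S) N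
      (IsNoetherian.noetherian N) (fun v hv => ?_) (maximalIdeal_le_jacobson _))
    obtain ⟨w, -, rfl⟩ := (Submodule.mem_smul_pointwise_iff_exists _ _ _).1 (hNx v hv)
    refine Submodule.smul_mem_smul hx ((mem_N w).2 fun a ha => hreg ?_)
    simpa only [smul_zero, smul_comm x a] using (mem_N _).1 hv a ha
  have hv0 : (Submodule.Quotient.mk v : QuotSMulTop x M) ≠ 0 :=
    mt (Submodule.Quotient.mk_eq_zero _).1 hvx
  obtain ⟨Q, hQ, hle⟩ := exists_le_isAssociatedPrime_of_isNoetherianRing S _ hv0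
  have hxQ : x ∈ Q := hle <| by
    rw [Submodule.mem_colon_singleton, ← Submodule.Quotient.mk_smul, Submodule.mem_bot,
      Submodule.Quotient.mk_eq_zero]
    exact Submodule.smul_mem_pointwise_smul _ _ _ trivial
  have hPQ : P ≤ Q := fun a ha => hle <| by
    rw [Submodule.mem_colon_singleton, ← Submodule.Quotient.mk_smul, (mem_N v).1 hvN a ha]
    exact Submodule.zero_mem _
  have hxP : x ∉ P := isSMulRegular_iff_forall_associatedPrimes.1 hreg P hP
  exact ⟨Q, hQ, hPQ.lt_of_ne fun h => hxP (h ▸ hxQ)⟩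

lemma length_le_ringKrullDim_quotient {M : Type u} [AddCommGroup M] [Module S M]
    [Module.Finite S M] {rs : List S} (hmem : ∀ r ∈ rs, r ∈ maximalIdeal S)
    (hreg : IsRegular M rs) {P : Ideal S} (hP : P ∈ associatedPrimes S M) :
    (rs.length : WithBot ℕ∞) ≤ ringKrullDim (S ⧸ P) := by
  induction rs generalizing M P with
  | nil =>
    have := hP.isPrime
    exact_mod_cast ringKrullDim_nonneg_of_nontrivial (R := S ⧸ P)
  | cons x rs ih =>
    rw [List.forall_mem_cons] at hmem
    rw [isRegular_cons_iff] at hreg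
    have := hP.isPrime
    obtain ⟨Q, hQ, hPQ⟩ := exists_lt_mem_associatedPrimes_quotSMulTop hmem.1 hreg.1 hP
    calc ((x :: rs).length : WithBot ℕ∞) = rs.length + 1 := by simp
      _ ≤ ringKrullDim (S ⧸ Q) + 1 := by gcongr; exact ih hmem.2 hreg.2 hQ
      _ ≤ ringKrullDim (S ⧸ P) := ringKrullDim_quotient_add_one_le_of_lt hPQ

lemma mdepth_le_ringKrullDim_quotient {M : Type u} [AddCommGroup M] [Module S M]
    [Module.Finite S M] {P : Ideal S} (hP : P ∈ associatedPrimes S M) :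
    (mdepth S M : WithBot ℕ∞) ≤ ringKrullDim (S ⧸ P) := by
  have := hP.isPrime
  obtain ⟨d, hd⟩ : ∃ d : ℕ∞, (d : WithBot ℕ∞) = ringKrullDim (S ⧸ P) :=
    WithBot.ne_bot_iff_exists.1 (Order.krullDim_ne_bot_iff.2 inferInstance)
  rw [← hd, WithBot.coe_le_coe, mdepth_le_iff]
  intro rs hmem hreg
  have := length_le_ringKrullDim_quotient hmem hreg hP
  rw [← hd] at this
  exact_mod_cast this

lemma mdepth_le_ringKrullDim : (mdepth S S : WithBot ℕ∞) ≤ ringKrullDim S := by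
  obtain ⟨P, hP⟩ := associatedPrimes.nonempty S S
  exact (mdepth_le_ringKrullDim_quotient hP).trans (ringKrullDim_quotient_le P)

lemma exists_isRegular_quotSMulTop {M : Type u} [AddCommGroup M] [Module S M] [Module.Finite S M]
    {n : ℕ} {rs : List S} (hlen : rs.length = n + 1) (hmem : ∀ r ∈ rs, r ∈ maximalIdeal S)
    (hreg : IsRegular M rs) {y : S} (hy : y ∈ maximalIdeal S) (hyreg : IsSMulRegular M y) :
    ∃ rs' : List S, rs'.length = n ∧ (∀ r ∈ rs', r ∈ maximalIdeal S) ∧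
      IsRegular (QuotSMulTop y M) rs' := by
  have smul_top_lt (N : Type u) [AddCommGroup N] [Module S N] [Module.Finite S N] [Nontrivial N] :
      maximalIdeal S • (⊤ : Submodule S N) < ⊤ :=
    (Submodule.top_ne_ideal_smul_of_le_jacobson_annihilator
      (maximalIdeal_le_jacobson _)).symm.lt_top
  have : Nontrivial M := hreg.nontrivial
  have : Nontrivial (QuotSMulTop y M) := nontrivial_quotSMulTop_of_mem_maximalIdeal M hy
  have regular_M_iff := (ModuleCat.exists_isRegular_tfae (maximalIdeal S) (n + 1)
    (ModuleCat.of S M) (smul_top_lt M)).out 3 1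
  have regular_quot_iff := (ModuleCat.exists_isRegular_tfae (maximalIdeal S) n
    (ModuleCat.of S (QuotSMulTop y M)) (smul_top_lt _)).out 3 1
  have ext_M := regular_M_iff.1 ⟨rs, hlen, hmem, hreg⟩
  refine regular_quot_iff.2 fun i hi => ?_
  have ext_i := AddCommGrpCat.isZero_of_iff_subsingleton.mpr (ext_M i (by lia))
  have ext_succ := AddCommGrpCat.isZero_of_iff_subsingleton.mpr (ext_M (i + 1) (by lia))
  exact AddCommGrpCat.subsingleton_of_isZero <| ShortComplex.Exact.isZero_of_both_zeros
    (Abelian.Ext.covariant_sequence_exact₃' _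
      (IsSMulRegular.smulShortComplex_shortExact (M := ModuleCat.of S M) hyreg) i (i + 1) rfl)
    (ext_i.eq_zero_of_src _) (ext_succ.eq_zero_of_tgt _)

lemma mdepth_le_mdepth_quotSMulTop_add_one {M : Type u} [AddCommGroup M] [Module S M]
    [Module.Finite S M] {y : S} (hy : y ∈ maximalIdeal S) (hyreg : IsSMulRegular M y) :
    mdepth S M ≤ mdepth S (QuotSMulTop y M) + 1 := by
  refine mdepth_le_iff.2 fun rs hmem hreg => ?_
  cases hlen : rs.length with
  | zero => simp
  | succ n =>
    obtain ⟨rs', rfl, hmem', hreg'⟩ := exists_isRegular_quotSMulTop hlen hmem hreg hy hyreg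
    push_cast
    gcongr
    exact length_le_mdepth hmem' hreg'


lemma exists_mem_isSMulRegular_of_injective_toIdealHom {M : Type*} [AddCommGroup M] [Module S M]
    [Module.Finite S M] (h : Injective (toIdealHom (maximalIdeal S) M)) :
    ∃ r ∈ maximalIdeal S, IsSMulRegular M r :=
  exists_mem_isSMulRegular fun _ hP hle =>
    injective_toIdealHom_iff_notMem_associatedPrimes.1 h
      ((maximalIdeal.isMaximal S).eq_of_le hP.isPrime.ne_top hle ▸ hP)

lemma two_le_mdepth_of_bijective_toIdealHom {M : Type u} [AddCommGroup M] [Module S M]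
    [Module.Finite S M] [Nontrivial M] (h : Bijective (toIdealHom (maximalIdeal S) M)) :
    2 ≤ mdepth S M := by
  obtain ⟨r, hr, hreg⟩ := exists_mem_isSMulRegular_of_injective_toIdealHom h.injective
  have hquot : Injective (toIdealHom (maximalIdeal S) (QuotSMulTop r M)) :=
    (bijective_toIdealHom_iff_of_isSMulRegular hr hreg (Submodule.mkQ_surjective _)
      (LinearMap.exact_lsmul_mkQ_smul_top M r)).1 h
  obtain ⟨s, hs, hsreg⟩ := exists_mem_isSMulRegular_of_injective_toIdealHom hquot
  have hmem : ∀ a ∈ [r, s], a ∈ maximalIdeal S := by simpa using ⟨hr, hs⟩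
  have hweak : IsWeaklyRegular M [r, s] := by simp [isWeaklyRegular_cons_iff, hreg, hsreg]
  exact length_le_mdepth hmem (.of_isWeaklyRegular_of_mem_maximalIdeal M hmem hweak)

namespace IsCMRing

lemma ringKrullDim_quotient_eq (hS : IsCMRing S) {P : Ideal S} (hP : P ∈ associatedPrimes S S) :
    ringKrullDim (S ⧸ P) = ringKrullDim S :=
  le_antisymm (ringKrullDim_quotient_le P) (hS ▸ mdepth_le_ringKrullDim_quotient hP)

lemma associatedPrimes_subset_minimalPrimes (hS : IsCMRing S) :
    associatedPrimes S S ⊆ minimalPrimes S := fun _ hP =>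
  have := hP.isPrime
  mem_minimalPrimes_of_ringKrullDim_quotient_eq (hS.ringKrullDim_quotient_eq hP)

lemma ringKrullDim_le_mdepth_quotSMulTop_add_one (hS : IsCMRing S) {y : S}
    (hy : y ∈ maximalIdeal S) (hreg : IsSMulRegular S y) :
    ringKrullDim S ≤ mdepth S (QuotSMulTop y S) + 1 := by
  rw [← hS]
  exact_mod_cast mdepth_le_mdepth_quotSMulTop_add_one hy hreg

lemma height_le_one_of_mem_associatedPrimes_quotSMulTop (hS : IsCMRing S) {y : S}
    (hy : y ∈ maximalIdeal S) (hreg : IsSMulRegular S y) {Q : Ideal S}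
    (hQ : Q ∈ associatedPrimes S (QuotSMulTop y S)) : Q.height ≤ 1 := by
  have := hQ.isPrime
  obtain ⟨n, hn⟩ := exists_ringKrullDim_eq_natCast S
  have hdim : ringKrullDim S ≤ ringKrullDim (S ⧸ Q) + 1 := calc
    ringKrullDim S ≤ mdepth S (QuotSMulTop y S) + 1 :=
      hS.ringKrullDim_le_mdepth_quotSMulTop_add_one hy hreg
    _ ≤ ringKrullDim (S ⧸ Q) + 1 := by gcongr; exact mdepth_le_ringKrullDim_quotient hQ
  have hheight : Q.height + ringKrullDim (S ⧸ Q) ≤ ringKrullDim S :=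
    height_add_ringKrullDim_quotient_le Q
  have : IsLocalRing (S ⧸ Q) := .of_surjective' (Ideal.Quotient.mk Q) Ideal.Quotient.mk_surjective
  obtain ⟨k, hk⟩ := exists_ringKrullDim_eq_natCast (S ⧸ Q)
  rw [hn, hk] at hdim hheight
  lift Q.height to ℕ using Ideal.height_ne_top Ideal.IsPrime.ne_top' with h
  norm_cast at hdim hheight ⊢
  lia

theorem isSerreS2 (hS : IsCMRing S) : IsSerreS2 S where
  associatedPrimes_subset := hS.associatedPrimes_subset_minimalPrimes
  bijective_toIdealHom Q _ hQ := by
    obtain ⟨y, hyQ, hreg⟩ : ∃ y ∈ Q, IsSMulRegular S y := by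
      refine exists_mem_isSMulRegular fun P hP hQP => hQ.not_ge ?_
      have := hP.isPrime
      have hP0 : P.height = 0 :=
        Ideal.height_eq_zero_iff.2 (hS.associatedPrimes_subset_minimalPrimes hP)
      exact (Ideal.height_mono hQP).trans (hP0.trans_le zero_le_one)
    have hregQ : IsSMulRegular (LocalizedModule Q.primeCompl S) y :=
      isSMulRegular_localizedModule fun P hP _ =>
        isSMulRegular_iff_forall_associatedPrimes.1 hreg P hP
    refine (bijective_toIdealHom_localizedModule_iff hyQ hregQ).2 fun hQy => hQ.not_ge ?_
    exact hS.height_le_one_of_mem_associatedPrimes_quotSMulTop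
      (le_maximalIdeal Ideal.IsPrime.ne_top' hyQ) hreg hQy

lemma quotient_span_singleton (hS : IsCMRing S) {y : S} (hy : y ∈ maximalIdeal S)
    (hreg : IsSMulRegular S y) [IsLocalRing (S ⧸ Ideal.span {y})] :
    IsCMRing (S ⧸ Ideal.span {y}) := by
  have : IsLocalHom (algebraMap S (S ⧸ Ideal.span {y})) :=
    .of_surjective _ Ideal.Quotient.mk_surjective
  have equiv : QuotSMulTop y S ≃ₗ[S] S ⧸ Ideal.span {y} :=
    Submodule.quotEquivOfEq _ _ (by rw [← Submodule.ideal_span_singleton_smul]; simp)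
  refine le_antisymm mdepth_le_ringKrullDim ?_
  have hdim : ringKrullDim (S ⧸ Ideal.span {y}) + 1 ≤
      mdepth (S ⧸ Ideal.span {y}) (S ⧸ Ideal.span {y}) + 1 := calc
    ringKrullDim (S ⧸ Ideal.span {y}) + 1 = ringKrullDim S :=
      ringKrullDim_quotient_span_singleton_succ_eq_ringKrullDim hreg hy
    _ ≤ mdepth S (QuotSMulTop y S) + 1 := hS.ringKrullDim_le_mdepth_quotSMulTop_add_one hy hreg
    _ ≤ mdepth (S ⧸ Ideal.span {y}) (S ⧸ Ideal.span {y}) + 1 := by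
      rw [mdepth_congr equiv]
      gcongr
      exact WithBot.coe_le_coe.2 (mdepth_le_mdepth_of_isLocalHom _ _)
  exact ENat.WithBot.add_le_add_one_right_iff.1 hdim

end IsCMRing

end Depth

section HomomorphicImage

namespace IsCMRing

variable {R : Type*} [CommRing R]

lemma exists_mem_ker_isSMulRegular {S : Type u} [CommRing S] [IsLocalRing S] [IsNoetherianRing S]
    (hS : IsCMRing S) {f : S →+* R} (hf : Surjective f)
    (hlt : ringKrullDim R < ringKrullDim S) : ∃ y ∈ RingHom.ker f, IsSMulRegular S y := by
  refine exists_mem_isSMulRegular fun P hP hle => hlt.not_ge ?_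
  calc ringKrullDim S = ringKrullDim (S ⧸ P) := (hS.ringKrullDim_quotient_eq hP).symm
    _ ≤ ringKrullDim (S ⧸ RingHom.ker f) :=
      ringKrullDim_le_of_surjective _ (Ideal.Quotient.factor_surjective hle)
    _ = ringKrullDim R :=
      ringKrullDim_eq_of_ringEquiv (RingHom.quotientKerEquivOfSurjective hf)

theorem exists_surjective_ringKrullDim_eq [Nontrivial R] {S : Type u} [CommRing S] [IsLocalRing S]
    [IsNoetherianRing S] (hS : IsCMRing S) {f : S →+* R} (hf : Surjective f) :
    ∃ (S' : Type u) (_ : CommRing S') (_ : IsLocalRing S') (_ : IsNoetherianRing S')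
      (f' : S' →+* R), IsCMRing S' ∧ Surjective f' ∧ ringKrullDim S' = ringKrullDim R := by
  obtain ⟨n, hn⟩ := exists_ringKrullDim_eq_natCast S
  induction n using Nat.strong_induction_on generalizing S with
  | h n ih =>
    obtain hlt | heq := (ringKrullDim_le_of_surjective f hf).lt_or_eq
    · obtain ⟨y, hyf, hreg⟩ := hS.exists_mem_ker_isSMulRegular hf hlt
      have hy : y ∈ maximalIdeal S := le_maximalIdeal (RingHom.ker_ne_top f) hyf
      have hyker : ∀ a ∈ Ideal.span {y}, f a = 0 :=
        (Ideal.span_singleton_le_iff_mem (RingHom.ker f)).2 hyf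
      let f' : S ⧸ Ideal.span {y} →+* R := Ideal.Quotient.lift _ f hyker
      have : Nontrivial (S ⧸ Ideal.span {y}) := f'.domain_nontrivial
      have : IsLocalRing (S ⧸ Ideal.span {y}) :=
        .of_surjective' (Ideal.Quotient.mk _) Ideal.Quotient.mk_surjective
      obtain ⟨k, hk⟩ := exists_ringKrullDim_eq_natCast (S ⧸ Ideal.span {y})
      have hdim := ringKrullDim_quotient_span_singleton_succ_eq_ringKrullDim hreg hy
      rw [hk, hn] at hdim
      have hkn : k < n := Nat.lt_of_succ_le (by exact_mod_cast hdim.le)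
      exact ih k hkn (hS.quotient_span_singleton hy hreg)
        (Ideal.Quotient.lift_surjective_of_surjective _ hyker hf) hk
    · exact ⟨S, _, ‹_›, ‹_›, f, hS, hf, heq.symm⟩

end IsCMRing

variable {S R : Type*} [CommRing S] [CommRing R] [Algebra S R]

lemma exists_mem_associatedPrimes_under_eq [IsNoetherianRing S]
    (hf : Surjective (algebraMap S R)) {M : Type*} [AddCommGroup M] [Module S M] [Module R M]
    [IsScalarTower S R M] {P : Ideal S} (hP : P ∈ associatedPrimes S M) :
    ∃ p ∈ associatedPrimes R M, p.under S = P := by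
  have : IsNoetherianRing R := isNoetherianRing_of_surjective S R _ hf
  obtain ⟨hprime, m, hm⟩ := isAssociatedPrime_iff.1 hP
  let p : Ideal R := (⊥ : Submodule R M).colon {m}
  have hp : p.under S = P := by
    ext a
    simp [p, hm, Submodule.mem_colon_singleton]
  have hpprime : p.IsPrime := by
    rw [← Ideal.map_comap_of_surjective _ hf p, ← Ideal.under_def, hp]
    exact Ideal.map_isPrime_of_surjective hf (hp ▸ Ideal.ker_le_comap _)
  exact ⟨p, isAssociatedPrime_iff.2 ⟨hpprime, m, rfl⟩, hp⟩

lemma mem_minimalPrimes_or_isMaximal_of_mem_associatedPrimes [IsNoetherianRing S]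
    [FiniteRingKrullDim S] [IsLocalRing R] (hf : Surjective (algebraMap S R))
    (hdim : ringKrullDim S = ringKrullDim R)
    (hR : ∀ p ∈ associatedPrimes R R,
      ringKrullDim (R ⧸ p) = ringKrullDim R ∨ p = maximalIdeal R)
    {P : Ideal S} (hP : P ∈ associatedPrimes S R) : P ∈ minimalPrimes S ∨ P.IsMaximal := by
  obtain ⟨p, hp, rfl⟩ := exists_mem_associatedPrimes_under_eq hf hP
  have := hP.isPrime
  refine (hR p hp).imp (fun hpdim => ?_) ?_
  · refine mem_minimalPrimes_of_ringKrullDim_quotient_eq ?_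
    rw [Ideal.under_def, ringKrullDim_quotient_comap_of_surjective hf, hpdim, hdim]
  · rintro rfl
    exact Ideal.comap_isMaximal_of_surjective _ hf

lemma bijective_toIdealHom_localization_of_surjective (hf : Surjective (algebraMap S R))
    (p : Ideal R) [p.IsPrime]
    (h : Bijective (toIdealHom (p.under S) (LocalizedModule (p.under S).primeCompl R))) :
    Bijective (toIdealHom (maximalIdeal (Localization.AtPrime p)) (Localization.AtPrime p)) := by
  have : IsLocalizedModule (p.under S).primeCompl
      (IsScalarTower.toAlgHom S R (Localization.AtPrime p)).toLinearMap := by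
    rw [isLocalizedModule_iff_isLocalization,
      Ideal.algebraMapSubmonoid_primeCompl_of_liesOver_surjective p (p.under S) hf]
    infer_instance
  have hS : Bijective (toIdealHom (p.under S) (Localization.AtPrime p)) :=
    bijective_toIdealHom_of_linearEquiv (IsLocalizedModule.iso (p.under S).primeCompl
      (IsScalarTower.toAlgHom S R (Localization.AtPrime p)).toLinearMap) h
  have hmap : (p.under S).map (algebraMap S (Localization.AtPrime p)) =
      maximalIdeal (Localization.AtPrime p) := by
    rw [IsScalarTower.algebraMap_eq S R, ← Ideal.map_map, Ideal.under_def,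
      Ideal.map_comap_of_surjective _ hf, IsLocalization.AtPrime.map_eq_maximalIdeal]
  exact hmap ▸ bijective_toIdealHom_map (Localization.AtPrime p) hS

end HomomorphicImage

/-- **Goto–Nakamura.** If `R` is a homomorphic image of a Cohen–Macaulay local ring and
`Ass R ⊆ Assh R ∪ {m}`, then `{p ∈ Spec R : ht p > 1 = depth R_p, p ≠ m}` is finite. -/
theorem stmt_16 (R : Type u) [CommRing R] [IsLocalRing R] [IsNoetherianRing R]
    (S : Type u) [CommRing S] [IsLocalRing S] [IsNoetherianRing S]
    (hCM : IsCMRing S) (f : S →+* R) (hf : Function.Surjective f)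
    (hass : ∀ p ∈ associatedPrimes R R,
      ringKrullDim (R ⧸ p) = ringKrullDim R ∨ p = maximalIdeal R) :
    {p : PrimeSpectrum R | 1 < Order.height p ∧
      idepth (Localization.AtPrime p.asIdeal)
        (Ideal.map (algebraMap R (Localization.AtPrime p.asIdeal)) p.asIdeal)
        (Localization.AtPrime p.asIdeal) = 1 ∧
      p.asIdeal ≠ maximalIdeal R}.Finite := by
  obtain ⟨S', _, _, _, f', hS', hf', hdim⟩ := hCM.exists_surjective_ringKrullDim_eq hf
  let := f'.toAlgebra
  have : Module.Finite S' R := .of_surjective (Algebra.linearMap S' R) hf'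
  have hfinite := hS'.isSerreS2.finite_setOf_not_bijective_toIdealHom R fun _ =>
    mem_minimalPrimes_or_isMaximal_of_mem_associatedPrimes hf' hdim hass
  refine (hfinite.preimage
    (PrimeSpectrum.comap_injective_of_surjective f' hf').injOn).subset ?_
  rintro p ⟨hheight, hdepth, hp⟩
  refine ⟨?_, fun hmax => hp ?_, fun hbij => ?_⟩
  · rw [PrimeSpectrum.height_eq_orderHeight]
    exact hheight.trans_le (height_le_height_comap_of_surjective hf' p)
  · exact Ideal.comap_injective_of_surjective f' hf' <| (eq_maximalIdeal hmax).trans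
      (eq_maximalIdeal (Ideal.comap_isMaximal_of_surjective f' hf')).symm
  · rw [IsLocalization.AtPrime.map_eq_maximalIdeal] at hdepth
    have htwo : 2 ≤ mdepth (Localization.AtPrime p.asIdeal) (Localization.AtPrime p.asIdeal) :=
      two_le_mdepth_of_bijective_toIdealHom
        (bijective_toIdealHom_localization_of_surjective hf' p.asIdeal hbij)
    rw [mdepth, hdepth] at htwo
    exact absurd htwo (by norm_num)
end

section
/- Let k be a field, S = k[[x,y]], and R = S/((x) ∩ (x³,y)). Then R is a 1-dimensional generalized Cohen-Macaulay local ring, e₀((y),R) = 1, λ(R/yR) = 3, λ(H⁰_m(R)) = 2, and y is a standard parameter for R, but R is not Buchsbaum. -/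
open IsLocalRing Filter Function CategoryTheory

universe u

/-- A Buchsbaum local ring of dimension `d`: the difference `λ(R/q) - e₀(q)` is the same for
all parameter ideals `q`. -/
def IsBuchsbaum (R : Type u) [CommRing R] [IsLocalRing R] (d : ℕ) : Prop :=
  ∃ c : ℤ, ∀ q : Ideal R, IsParameterIdeal R q d R →
    ∀ e : ℕ → ℤ, HasHilbCoeffs R q R d e →
    ∀ l1 : ℕ, mlen R (R ⧸ (q • (⊤ : Submodule R R))) = ((l1 : ℕ∞) : WithBot ℕ∞) →
      (l1 : ℤ) - e 0 = c

/-- The ideal `(x) ∩ (x³, y)` of `k[[x,y]]`. -/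
noncomputable def exIdeal (k : Type u) [Field k] : Ideal (MvPowerSeries (Fin 2) k) :=
  Ideal.span {MvPowerSeries.X 0} ⊓
    Ideal.span {MvPowerSeries.X 0 ^ 3, MvPowerSeries.X 1}

/-- The ring `R = k[[x,y]]/((x) ∩ (x³,y))`. -/
noncomputable abbrev exRing (k : Type u) [Field k] : Type u :=
  MvPowerSeries (Fin 2) k ⧸ exIdeal k

/-!
Consider a Noetherian local ring whose maximal ideal is generated by `x` and `y`, with `x * y = 0`,
`x ^ (r + 1) = 0 ≠ x ^ r` and `y` not nilpotent. Then `y` is regular modulo `x`, hence so is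
`z = (x ^ c + y) ^ n` for `c ≠ 0`, and multiplication by `x` gives the exact sequence
`0 → R/((z) + (0 : x)) → R/(z) → R/(z, x) → 0`. As `(0 : x) = (x ^ r, y)`, the outer terms are
`R/(x ^ min (c * n) r, y)` and `R/(y ^ n, x)`, so `R/(z)` has length `min (c * n) r + n`.
Therefore `q = (x ^ c + y)` has `e₀(q) = 1` and `λ(R/q) - e₀(q) = min c r`, which takes different
values at `c = 1` and `c = 2` as soon as `2 ≤ r`. The element `y` itself is the case `c = r + 1`.
-/

section Length

variable {R M : Type*} [CommRing R] [AddCommGroup M] [Module R M]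

lemma length_quotient_eq_colon_add (N : Submodule R M) (a : M) :
    Module.length R (M ⧸ N) =
      Module.length R (R ⧸ N.colon {a}) + Module.length R (M ⧸ N ⊔ Submodule.span R {a}) := by
  have hker : N.colon {a} = LinearMap.ker (N.mkQ ∘ₗ LinearMap.toSpanSingleton R M a) := by
    ext r
    simp [← Submodule.Quotient.mk_smul]
  refine Module.length_eq_add_of_exact (Submodule.liftQ _ _ hker.le)
    (Submodule.factor (le_sup_left : N ≤ N ⊔ Submodule.span R {a}))
    (LinearMap.ker_eq_bot.mp (Submodule.ker_liftQ_eq_bot' _ _ hker))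
    (Submodule.factor_surjective _) (LinearMap.exact_iff.mpr ?_)
  rw [Submodule.range_liftQ, LinearMap.range_comp, LinearMap.range_toSpanSingleton,
    Submodule.factor, Submodule.ker_mapQ, Submodule.comap_id, Submodule.map_sup,
    Submodule.mkQ_map_self, bot_sup_eq]

lemma length_quotient_span_singleton_eq_add {x z : R}
    (hz : ∀ f, f * z ∈ Ideal.span {x} → f ∈ Ideal.span {x}) :
    Module.length R (R ⧸ Ideal.span {z}) =
      Module.length R (R ⧸ Ideal.span {z} ⊔ Ideal.torsionOf R R x) +
        Module.length R (R ⧸ Ideal.span {z, x}) := by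
  have hcolon : (Ideal.span {z}).colon {x} = Ideal.span {z} ⊔ Ideal.torsionOf R R x := by
    refine le_antisymm (fun f hf ↦ ?_) (sup_le (fun f hf ↦ ?_) fun f hf ↦ ?_)
    · obtain ⟨g, hg⟩ := Ideal.mem_span_singleton'.mp (Submodule.mem_colon_singleton.mp hf)
      obtain ⟨h, rfl⟩ := Ideal.mem_span_singleton'.mp
        (hz g (hg ▸ Ideal.mul_mem_left _ f (Ideal.mem_span_singleton_self x)))
      refine Ideal.mem_span_singleton_sup.mpr ⟨h, f - h * z, ?_, by ring⟩
      rw [Ideal.mem_torsionOf_iff, smul_eq_mul]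
      rw [smul_eq_mul] at hg
      linear_combination -hg
    · exact Submodule.mem_colon_singleton.mpr (Ideal.mul_mem_right x _ hf)
    · rw [Submodule.mem_colon_singleton, (Ideal.mem_torsionOf_iff x f).mp hf]
      exact zero_mem _
  rw [length_quotient_eq_colon_add (Ideal.span {z}) x, hcolon, Ideal.span_insert z {x}]

lemma length_quotient_span_pow_pair [IsLocalRing R] {x y : R}
    (hm : maximalIdeal R = Ideal.span {x, y}) (n : ℕ)
    (hx : ∀ i < n, x ^ i ∉ Ideal.span {x ^ (i + 1), y}) :
    Module.length R (R ⧸ Ideal.span {x ^ n, y}) = n := by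
  induction n with
  | zero =>
    have : Subsingleton (R ⧸ Ideal.span {x ^ 0, y}) :=
      Ideal.Quotient.subsingleton_iff.mpr
        ((Ideal.eq_top_iff_one _).mpr (Ideal.subset_span (by simp)))
    simp
  | succ n ih =>
    have hcolon : (Ideal.span {x ^ (n + 1), y}).colon {x ^ n} = maximalIdeal R := by
      refine ((maximalIdeal.isMaximal R).eq_of_le (fun htop ↦ hx n n.lt_succ_self ?_) ?_).symm
      · simpa using Submodule.mem_colon_singleton.mp ((Ideal.eq_top_iff_one _).mp htop)
      · rw [hm, Ideal.span_le, Set.pair_subset_iff]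
        exact ⟨Submodule.mem_colon_singleton.mpr
            (Ideal.mem_span_pair.mpr ⟨1, 0, by rw [smul_eq_mul]; ring⟩),
          Submodule.mem_colon_singleton.mpr
            (Ideal.mem_span_pair.mpr ⟨0, x ^ n, by rw [smul_eq_mul]; ring⟩)⟩
    have hsup : Ideal.span {x ^ (n + 1), y} ⊔ Ideal.span {x ^ n} = Ideal.span {x ^ n, y} := by
      rw [Ideal.span_insert, sup_right_comm, Ideal.span_insert (x ^ n),
        sup_eq_right.mpr (Ideal.span_singleton_le_span_singleton.mpr (pow_dvd_pow x n.le_succ))]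
    have hsimple : IsSimpleModule R (R ⧸ maximalIdeal R) :=
      isSimpleModule_iff_isCoatom.mpr (maximalIdeal.isMaximal R).out
    rw [length_quotient_eq_colon_add _ (x ^ n), hcolon, Module.length_eq_one,
      Ideal.submodule_span_eq, hsup, ih fun i hi ↦ hx i (hi.trans n.lt_succ_self)]
    push_cast
    ring

end Length

section HilbertFunction

variable {R : Type u} [CommRing R]

lemma mlen_eq_coe_length (M : Type u) [AddCommGroup M] [Module R M] :
    mlen R M = ((Module.length R M : ℕ∞) : WithBot ℕ∞) :=
  (Module.coe_length R M).symm

lemma mlen_quotient_smul_top (I : Ideal R) :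
    mlen R (R ⧸ (I • (⊤ : Submodule R R))) =
      ((Module.length R (R ⧸ I) : ℕ∞) : WithBot ℕ∞) := by
  rw [smul_eq_mul, Ideal.mul_top, mlen_eq_coe_length]

lemma hsPoly_one (e : ℕ → ℤ) (n : ℕ) : hsPoly 1 e n = e 0 * n - e 1 := by
  simp [hsPoly, Finset.sum_range_succ, sub_eq_add_neg]

lemma HasHilbCoeffs.coeff_zero_unique {I : Ideal R} {M : Type u} [AddCommGroup M] [Module R M]
    {e e' : ℕ → ℤ} (he : HasHilbCoeffs R I M 1 e) (he' : HasHilbCoeffs R I M 1 e') :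
    e 0 = e' 0 := by
  obtain ⟨ℓ, hℓ, hev⟩ := he
  obtain ⟨ℓ', hℓ', hev'⟩ := he'
  have heq (n : ℕ) : ℓ n = ℓ' n := by exact_mod_cast (hℓ n).symm.trans (hℓ' n)
  obtain ⟨N, hN⟩ := eventually_atTop.mp (hev.and hev')
  have hlinear (n : ℕ) (hn : N ≤ n) : e 0 * n - e 1 = e' 0 * n - e' 1 := by
    rw [← hsPoly_one, ← hsPoly_one, ← (hN n hn).1, ← (hN n hn).2, heq]
  have hsucc := hlinear (N + 1) N.le_succ
  push_cast at hsucc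
  linarith [hlinear N le_rfl]

end HilbertFunction

lemma mem_of_forall_mem_sup_maximalIdeal_pow {R : Type*} [CommRing R] [IsLocalRing R]
    [IsNoetherianRing R] {I : Ideal R} {f : R} (hf : ∀ n, f ∈ I ⊔ maximalIdeal R ^ n) :
    f ∈ I := by
  rw [← Ideal.Quotient.eq_zero_iff_mem]
  refine IsHausdorff.haus (I := maximalIdeal R) inferInstance _ fun n ↦ ?_
  obtain ⟨i, hi, g, hg, rfl⟩ := Submodule.mem_sup.mp (hf n)
  rw [SModEq.zero, map_add, Ideal.Quotient.eq_zero_iff_mem.mpr hi, zero_add, ← mul_one g]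
  exact Submodule.smul_mem_smul hg (Submodule.mem_top (x := (1 : R ⧸ I)))

/-- `x, y` present `R` as the local ring of a line (`x = 0`) with an embedded point of multiplicity
`r` at its origin, as in `k[[x,y]]/(xy, x ^ (r + 1))`. This is the class of rings to which the
example belongs, with `r = 2`; that `R` is Noetherian is not part of the definition. -/
structure IsLineWithEmbeddedPoint {R : Type*} [CommRing R] [IsLocalRing R] (x y : R) (r : ℕ) :
    Prop where
  maximalIdeal_eq : maximalIdeal R = Ideal.span {x, y}
  mul_eq_zero : x * y = 0
  pow_ne_zero : x ^ r ≠ 0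
  pow_succ_eq_zero : x ^ (r + 1) = 0
  not_isNilpotent : ¬ IsNilpotent y

namespace IsLineWithEmbeddedPoint

section

variable {R : Type*} [CommRing R] [IsLocalRing R] {x y : R} {r : ℕ}

lemma mem_maximalIdeal_iff (h : IsLineWithEmbeddedPoint x y r) {f : R} :
    f ∈ maximalIdeal R ↔ ∃ a b, a * x + b * y = f := by
  rw [h.maximalIdeal_eq, Ideal.mem_span_pair]

lemma right_mem_maximalIdeal (h : IsLineWithEmbeddedPoint x y r) : y ∈ maximalIdeal R :=
  h.mem_maximalIdeal_iff.mpr ⟨0, 1, by ring⟩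

lemma pow_mul_eq_zero (h : IsLineWithEmbeddedPoint x y r) {n : ℕ} (hn : n ≠ 0) :
    x ^ n * y = 0 := by
  obtain ⟨m, rfl⟩ := Nat.exists_eq_succ_of_ne_zero hn
  rw [pow_succ, mul_assoc, h.mul_eq_zero, mul_zero]

lemma left_pow_notMem (h : IsLineWithEmbeddedPoint x y r) {i : ℕ} (hi : i < r) :
    x ^ i ∉ Ideal.span {x ^ (i + 1), y} := by
  intro hmem
  obtain ⟨a, b, hab⟩ := Ideal.mem_span_pair.mp hmem
  refine h.pow_ne_zero ?_
  calc x ^ r = x ^ (r - i) * (a * x ^ (i + 1) + b * y) := by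
        rw [hab, ← pow_add, Nat.sub_add_cancel hi.le]
    _ = a * x ^ (r - i + (i + 1)) + b * (x ^ (r - i) * y) := by ring
    _ = 0 := by
      rw [h.pow_mul_eq_zero (Nat.sub_ne_zero_of_lt hi), ← add_assoc, Nat.sub_add_cancel hi.le,
        h.pow_succ_eq_zero, mul_zero, mul_zero, add_zero]

lemma right_pow_notMem_span_singleton (h : IsLineWithEmbeddedPoint x y r) (n : ℕ) :
    y ^ n ∉ Ideal.span {x} := by
  intro hmem
  obtain ⟨a, ha⟩ := Ideal.mem_span_singleton'.mp hmem
  exact h.not_isNilpotent ⟨n + 1, by rw [pow_succ, ← ha, mul_assoc, h.mul_eq_zero, mul_zero]⟩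

lemma right_pow_notMem (h : IsLineWithEmbeddedPoint x y r) (n : ℕ) :
    y ^ n ∉ Ideal.span {y ^ (n + 1), x} := by
  intro hmem
  obtain ⟨a, b, hab⟩ := Ideal.mem_span_pair.mp hmem
  have hunit : IsUnit (1 - a * y) :=
    isUnit_one_sub_self_of_mem_nonunits _ (Ideal.mul_mem_left _ a h.right_mem_maximalIdeal)
  refine h.right_pow_notMem_span_singleton n ((Ideal.unit_mul_mem_iff_mem _ hunit).mp ?_)
  exact Ideal.mem_span_singleton'.mpr ⟨b, by linear_combination hab⟩

lemma length_quotient_left_pow (h : IsLineWithEmbeddedPoint x y r) {i : ℕ} (hi : i ≤ r) :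
    Module.length R (R ⧸ Ideal.span {x ^ i, y}) = i :=
  length_quotient_span_pow_pair h.maximalIdeal_eq i fun _ hj ↦ h.left_pow_notMem (hj.trans_le hi)

lemma length_quotient_right_pow (h : IsLineWithEmbeddedPoint x y r) (n : ℕ) :
    Module.length R (R ⧸ Ideal.span {y ^ n, x}) = n :=
  length_quotient_span_pow_pair (h.maximalIdeal_eq.trans Ideal.span_pair_comm) n
    fun i _ ↦ h.right_pow_notMem i

lemma mem_span_pow_of_mul_eq_zero (h : IsLineWithEmbeddedPoint x y r) {f : R} (hf : f * x = 0)
    {i : ℕ} (hi : i ≤ r) : f ∈ Ideal.span {x ^ i, y} := by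
  induction i with
  | zero => exact Ideal.mem_span_pair.mpr ⟨f, 0, by ring⟩
  | succ i ih =>
    obtain ⟨a, b, rfl⟩ := Ideal.mem_span_pair.mp (ih (Nat.le_of_succ_le hi))
    have hax : a * x ^ (i + 1) = 0 := by linear_combination hf - b * h.mul_eq_zero
    have ha : a ∈ maximalIdeal R := fun hunit ↦
      h.pow_ne_zero (pow_eq_zero_of_le hi (hunit.mul_right_eq_zero.mp hax))
    obtain ⟨c, d, rfl⟩ := h.mem_maximalIdeal_iff.mp ha
    exact Ideal.mem_span_pair.mpr ⟨c, d * x ^ i + b, by ring⟩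

lemma torsionOf_left (h : IsLineWithEmbeddedPoint x y r) :
    Ideal.torsionOf R R x = Ideal.span {x ^ r, y} := by
  refine le_antisymm (fun f hf ↦ h.mem_span_pow_of_mul_eq_zero hf le_rfl) ?_
  rw [Ideal.span_le, Set.pair_subset_iff]
  exact ⟨(pow_succ x r).symm.trans h.pow_succ_eq_zero, (mul_comm y x).trans h.mul_eq_zero⟩

section Noetherian

variable [IsNoetherianRing R]

lemma mem_span_of_mul_pow_mem (h : IsLineWithEmbeddedPoint x y r) {f : R} {n : ℕ}
    (hf : f * y ^ n ∈ Ideal.span {x}) : f ∈ Ideal.span {x} := by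
  have hmem (m : ℕ) : ∃ a b, f = a * x + b * y ^ m := by
    induction m with
    | zero => exact ⟨0, f, by ring⟩
    | succ m ih =>
      obtain ⟨a, b, hab⟩ := ih
      have hby : b * y ^ (m + n) ∈ Ideal.span {x} := by
        have := Ideal.sub_mem _ hf
          (Ideal.mul_mem_left _ (a * y ^ n) (Ideal.mem_span_singleton_self x))
        convert this using 1
        rw [hab]
        ring
      have hb : b ∈ maximalIdeal R := fun hunit ↦
        h.right_pow_notMem_span_singleton _ ((Ideal.unit_mul_mem_iff_mem _ hunit).mp hby)
      obtain ⟨c, d, rfl⟩ := h.mem_maximalIdeal_iff.mp hb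
      exact ⟨a + c * y ^ m, d, by rw [hab]; ring⟩
  refine mem_of_forall_mem_sup_maximalIdeal_pow fun m ↦ ?_
  obtain ⟨a, b, rfl⟩ := hmem m
  exact Submodule.add_mem_sup (Ideal.mul_mem_left _ a (Ideal.mem_span_singleton_self x))
    (Ideal.mul_mem_left _ b (Ideal.pow_mem_pow h.right_mem_maximalIdeal m))

lemma ringKrullDim_eq_one (h : IsLineWithEmbeddedPoint x y r) : ringKrullDim R = 1 := by
  refine le_antisymm ?_ (not_lt.mp fun hlt ↦ h.not_isNilpotent ?_)
  · have hmin : maximalIdeal R ∈ (Ideal.span {y}).minimalPrimes := by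
      refine ⟨⟨inferInstance, ?_⟩, fun p ⟨hp, hyp⟩ _ ↦ ?_⟩
      · exact (Ideal.span_singleton_le_iff_mem _).mpr h.right_mem_maximalIdeal
      · rw [h.maximalIdeal_eq, Ideal.span_le, Set.pair_subset_iff]
        exact ⟨hp.mem_of_pow_mem _ (h.pow_succ_eq_zero ▸ p.zero_mem),
          (Ideal.span_singleton_le_iff_mem _).mp hyp⟩
    rw [← maximalIdeal_height_eq_ringKrullDim]
    exact_mod_cast Ideal.height_le_one_of_isPrincipal_of_mem_minimalPrimes _ _ hmin
  · have : Ring.KrullDimLE 0 R := Ring.krullDimLE_iff.mpr (Order.le_of_lt_succ hlt)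
    exact Ring.KrullDimLE.isNilpotent_iff_mem_maximalIdeal.mpr h.right_mem_maximalIdeal

lemma length_quotient_span_pow (h : IsLineWithEmbeddedPoint x y r) {c : ℕ} (hc : c ≠ 0) (n : ℕ) :
    Module.length R (R ⧸ Ideal.span {(x ^ c + y) ^ n}) = (min (c * n) r + n : ℕ) := by
  obtain ⟨a, ha⟩ : x ∣ (x ^ c + y) ^ n - y ^ n :=
    (dvd_pow_self x hc).trans (by simpa using sub_dvd_pow_sub_pow (x ^ c + y) y n)
  obtain ⟨b, hb⟩ : y ∣ (x ^ c + y) ^ n - x ^ (c * n) := by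
    simpa [pow_mul] using sub_dvd_pow_sub_pow (x ^ c + y) (x ^ c) n
  rw [sub_eq_iff_eq_add] at ha hb
  have hregular (f : R) (hf : f * (x ^ c + y) ^ n ∈ Ideal.span {x}) : f ∈ Ideal.span {x} := by
    refine h.mem_span_of_mul_pow_mem (n := n) ?_
    have := Ideal.sub_mem _ hf (Ideal.mul_mem_left _ (f * a) (Ideal.mem_span_singleton_self x))
    convert this using 1
    rw [ha]
    ring
  have hright : Ideal.span {(x ^ c + y) ^ n, x} = Ideal.span {y ^ n, x} := by
    rw [ha, Ideal.span_pair_right_mul_add]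
  have hleft : Ideal.span {(x ^ c + y) ^ n} ⊔ Ideal.torsionOf R R x =
      Ideal.span {x ^ min (c * n) r, y} := by
    rw [h.torsionOf_left, ← Ideal.span_insert, Set.insert_comm, Ideal.span_insert, hb,
      Ideal.span_pair_right_mul_add, Ideal.span_insert, Ideal.span_insert, ← sup_assoc]
    congr 1
    rcases le_total (c * n) r with hle | hle
    · rw [min_eq_left hle, sup_eq_right, Ideal.span_singleton_le_span_singleton]
      exact pow_dvd_pow x hle
    · rw [min_eq_right hle, sup_eq_left, Ideal.span_singleton_le_span_singleton]
      exact pow_dvd_pow x hle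
  rw [length_quotient_span_singleton_eq_add hregular, hleft, hright,
    h.length_quotient_left_pow (min_le_right _ _), h.length_quotient_right_pow, Nat.cast_add]

end Noetherian

end

section

variable {R : Type u} [CommRing R] [IsLocalRing R] [IsNoetherianRing R] {x y : R} {r : ℕ}

lemma H0_eq_span (h : IsLineWithEmbeddedPoint x y r) : H0 R R = Ideal.span {x} := by
  refine le_antisymm (iSup_le fun n f hf ↦ ?_) ?_
  · have hfy : y ^ n • f = 0 :=
      (Submodule.mem_torsionBySet_iff _ _).mp hf
        ⟨y ^ n, Ideal.pow_mem_pow h.right_mem_maximalIdeal n⟩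
    refine h.mem_span_of_mul_pow_mem (n := n) ?_
    rw [mul_comm, ← smul_eq_mul, hfy]
    exact zero_mem _
  · have hpow : maximalIdeal R ^ (r + 1) ≤ Ideal.torsionOf R R x := by
      rw [h.maximalIdeal_eq, h.torsionOf_left, Ideal.span_insert, Ideal.span_insert]
      simpa [Ideal.span_singleton_pow] using
        Ideal.sup_pow_add_le_pow_sup_pow (I := Ideal.span {x}) (J := Ideal.span {y})
          (n := r) (m := 1)
    rw [Ideal.span_singleton_le_iff_mem]
    exact Submodule.mem_iSup_of_mem (r + 1)
      ((Submodule.mem_torsionBySet_iff _ _).mpr fun s ↦ hpow s.2)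

lemma mlen_H0 (h : IsLineWithEmbeddedPoint x y r) :
    mlen R (H0 R R) = ((r : ℕ∞) : WithBot ℕ∞) := by
  rw [mlen_eq_coe_length, h.H0_eq_span,
    ← (Ideal.quotTorsionOfEquivSpanSingleton R R x).length_eq, h.torsionOf_left,
    h.length_quotient_left_pow le_rfl]

lemma mlen_quotient (h : IsLineWithEmbeddedPoint x y r) {c : ℕ} (hc : c ≠ 0) :
    mlen R (R ⧸ (Ideal.span {x ^ c + y} • (⊤ : Submodule R R))) =
      (((min c r + 1 : ℕ) : ℕ∞) : WithBot ℕ∞) := by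
  have hlength := h.length_quotient_span_pow hc 1
  rw [pow_one, mul_one] at hlength
  rw [mlen_quotient_smul_top, hlength]

lemma isParameterIdeal (h : IsLineWithEmbeddedPoint x y r) {c : ℕ} (hc : c ≠ 0) :
    IsParameterIdeal R (Ideal.span {x ^ c + y}) 1 R := by
  refine ⟨⟨fun _ ↦ x ^ c + y, by simp⟩, ?_⟩
  rw [h.mlen_quotient hc]
  exact WithBot.coe_lt_coe.mpr (ENat.natCast_lt_top _)

lemma hasHilbCoeffs (h : IsLineWithEmbeddedPoint x y r) {c : ℕ} (hc : c ≠ 0) :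
    HasHilbCoeffs R (Ideal.span {x ^ c + y}) R 1 fun i ↦ if i = 0 then 1 else -r := by
  refine ⟨fun n ↦ min (c * n) r + n, fun n ↦ ?_, ?_⟩
  · rw [mlen_quotient_smul_top, Ideal.span_singleton_pow, h.length_quotient_span_pow hc]
  · filter_upwards [eventually_ge_atTop r] with n hn
    have hle : r ≤ c * n := hn.trans (Nat.le_mul_of_pos_left n (Nat.pos_of_ne_zero hc))
    rw [hsPoly_one, min_eq_right hle]
    simp only [if_pos, one_ne_zero, if_false]
    push_cast
    ring

lemma not_isBuchsbaum (h : IsLineWithEmbeddedPoint x y r) (hr : 2 ≤ r) : ¬ IsBuchsbaum R 1 := by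
  rintro ⟨d, hd⟩
  have hdiff (c : ℕ) (hc : c ≠ 0) : ((min c r : ℕ) : ℤ) = d := by
    simpa using hd _ (h.isParameterIdeal hc) _ (h.hasHilbCoeffs hc) _ (h.mlen_quotient hc)
  have hone := hdiff 1 one_ne_zero
  have htwo := hdiff 2 two_ne_zero
  omega

end

end IsLineWithEmbeddedPoint

lemma mem_span_X_image_of_coeff_eq_zero {σ A : Type*} [CommRing A] (s : Finset σ)
    {F : MvPowerSeries σ A}
    (hF : ∀ m : σ →₀ ℕ, (∀ i ∈ s, m i = 0) → MvPowerSeries.coeff m F = 0) :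
    F ∈ Ideal.span (MvPowerSeries.X '' (s : Set σ)) := by
  classical
  induction s using Finset.induction_on generalizing F with
  | empty =>
    have hzero : F = 0 := MvPowerSeries.ext fun m ↦ hF m (by simp)
    exact hzero ▸ zero_mem _
  | insert i s _ ih =>
    let G : MvPowerSeries σ A := fun m ↦ if m i = 0 then MvPowerSeries.coeff m F else 0
    have hG (m : σ →₀ ℕ) :
        MvPowerSeries.coeff m G = if m i = 0 then MvPowerSeries.coeff m F else 0 := rfl
    have hdvd : MvPowerSeries.X i ∣ F - G :=
      MvPowerSeries.X_dvd_iff.mpr fun m hm ↦ by rw [map_sub, hG, if_pos hm, sub_self]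
    have hGmem : G ∈ Ideal.span (MvPowerSeries.X '' (s : Set σ)) := by
      refine ih fun m hm ↦ ?_
      rw [hG, ite_eq_right_iff]
      exact fun hmi ↦ hF m (by simpa [hmi] using hm)
    rw [Finset.coe_insert, Set.image_insert_eq, Ideal.span_insert, ← sub_add_cancel F G]
    exact Submodule.add_mem_sup (Ideal.mem_span_singleton.mpr hdvd) hGmem

lemma maximalIdeal_mvPowerSeries {σ k : Type*} [Finite σ] [Field k] :
    maximalIdeal (MvPowerSeries σ k) = Ideal.span (Set.range MvPowerSeries.X) := by
  have := Fintype.ofFinite σ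
  refine le_antisymm (fun F hF ↦ ?_) ?_
  · rw [mem_maximalIdeal, mem_nonunits_iff, MvPowerSeries.isUnit_iff_constantCoeff,
      isUnit_iff_ne_zero, not_not] at hF
    rw [← Set.image_univ, ← Finset.coe_univ]
    refine mem_span_X_image_of_coeff_eq_zero _ fun m hm ↦ ?_
    obtain rfl : m = 0 := Finsupp.ext fun i ↦ hm i (Finset.mem_univ i)
    rwa [MvPowerSeries.coeff_zero_eq_constantCoeff_apply]
  · rw [Ideal.span_le, Set.range_subset_iff]
    intro i
    simp [MvPowerSeries.isUnit_iff_constantCoeff]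

open MvPowerSeries in
lemma isLineWithEmbeddedPoint_exRing (k : Type u) [Field k] [IsLocalRing (exRing k)] :
    IsLineWithEmbeddedPoint (Ideal.Quotient.mk (exIdeal k) (X 0))
      (Ideal.Quotient.mk (exIdeal k) (X 1)) 2 where
  maximalIdeal_eq := by
    rw [← map_maximalIdeal_of_surjective _ (Ideal.Quotient.mk_surjective (I := exIdeal k)),
      maximalIdeal_mvPowerSeries, Ideal.map_span, ← Set.range_comp]
    congr 1
    ext
    simp [eq_comm]
  mul_eq_zero := by
    rw [← map_mul, Ideal.Quotient.eq_zero_iff_mem]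
    exact ⟨Ideal.mem_span_singleton.mpr (dvd_mul_right _ _),
      Ideal.mem_span_pair.mpr ⟨0, X 0, by ring⟩⟩
  pow_ne_zero := by
    classical
    rw [← map_pow, Ne, Ideal.Quotient.eq_zero_iff_mem]
    rintro ⟨-, hmem⟩
    obtain ⟨a, b, hab⟩ := Ideal.mem_span_pair.mp hmem
    have hcoeff := congrArg (coeff (Finsupp.single 0 2)) hab
    rw [map_add, X_pow_dvd_iff.mp (dvd_mul_left _ a) _ (by simp),
      X_dvd_iff.mp (dvd_mul_left _ b) _ (by simp), coeff_X_pow] at hcoeff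
    simp at hcoeff
  pow_succ_eq_zero := by
    rw [← map_pow, Ideal.Quotient.eq_zero_iff_mem]
    exact ⟨Ideal.mem_span_singleton.mpr (dvd_pow_self _ (by simp)),
      Ideal.subset_span (Set.mem_insert _ _)⟩
  not_isNilpotent := by
    classical
    rintro ⟨n, hn⟩
    rw [← map_pow, Ideal.Quotient.eq_zero_iff_mem] at hn
    have hcoeff := X_dvd_iff.mp (Ideal.mem_span_singleton.mp hn.1) (Finsupp.single 1 n) (by simp)
    simp [coeff_X_pow] at hcoeff

theorem stmt_18_general {R : Type u} [CommRing R] [IsLocalRing R] [IsNoetherianRing R] {x y : R}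
    {r : ℕ} (h : IsLineWithEmbeddedPoint x y r) (hr : 2 ≤ r) :
    ringKrullDim R = ((1 : ℕ∞) : WithBot ℕ∞) ∧
    mlen R (H0 R R) = ((r : ℕ∞) : WithBot ℕ∞) ∧
    mlen R (R ⧸ (Ideal.span {y} • (⊤ : Submodule R R))) = (((r + 1 : ℕ) : ℕ∞) : WithBot ℕ∞) ∧
    IsParameterIdeal R (Ideal.span {y}) 1 R ∧
    (∀ e : ℕ → ℤ, HasHilbCoeffs R (Ideal.span {y}) R 1 e →
      e 0 = 1 ∧ ((r + 1 : ℕ) : ℤ) - e 0 = r) ∧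
    ¬ IsBuchsbaum R 1 := by
  have hy : x ^ (r + 1) + y = y := by rw [h.pow_succ_eq_zero, zero_add]
  have hlength := h.mlen_quotient r.succ_ne_zero
  have hparam := h.isParameterIdeal r.succ_ne_zero
  have hcoeffs := h.hasHilbCoeffs r.succ_ne_zero
  rw [Nat.succ_eq_add_one, hy] at hlength hparam hcoeffs
  rw [min_eq_right r.le_succ] at hlength
  refine ⟨h.ringKrullDim_eq_one, h.mlen_H0, hlength, hparam, fun e he ↦ ?_, h.not_isBuchsbaum hr⟩
  have he0 : e 0 = 1 := he.coeff_zero_unique hcoeffs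
  exact ⟨he0, by rw [he0]; push_cast; ring⟩

/-- The ring `R = k[[x,y]]/((x) ∩ (x³,y))` is a 1-dimensional generalized Cohen–Macaulay local
ring with `e₀((y),R) = 1`, `λ(R/yR) = 3` and `λ(H⁰_m(R)) = 2`; hence `y` is a standard
parameter (`λ(R/yR) - e₀((y),R) = λ(H⁰_m(R))`), yet `R` is not Buchsbaum. -/
theorem stmt_18 (k : Type u) [Field k] [IsLocalRing (exRing k)] :
    ringKrullDim (exRing k) = ((1 : ℕ∞) : WithBot ℕ∞) ∧
    mlen (exRing k) (H0 (exRing k) (exRing k)) = ((2 : ℕ∞) : WithBot ℕ∞) ∧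
    mlen (exRing k) (exRing k ⧸
        (Ideal.span {Ideal.Quotient.mk (exIdeal k) (MvPowerSeries.X 1)} •
          (⊤ : Submodule (exRing k) (exRing k)))) = ((3 : ℕ∞) : WithBot ℕ∞) ∧
    IsParameterIdeal (exRing k)
      (Ideal.span {Ideal.Quotient.mk (exIdeal k) (MvPowerSeries.X 1)}) 1 (exRing k) ∧
    (∀ e : ℕ → ℤ, HasHilbCoeffs (exRing k)
        (Ideal.span {Ideal.Quotient.mk (exIdeal k) (MvPowerSeries.X 1)}) (exRing k) 1 e →
      e 0 = 1 ∧ (3 : ℤ) - e 0 = 2) ∧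
    ¬ IsBuchsbaum (exRing k) 1 :=
  stmt_18_general (isLineWithEmbeddedPoint_exRing k) le_rfl
end
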